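/- Let 0 < p < q < ∞ with q ≥ 2, and let α > 1. If f is holomorphic on the unit disk 𝔻 with ∫_𝔻 |f(z)|^p dA_α(z) < ∞, then with r = √(p/q) one has (∫_𝔻 |f(rz)|^q dA_α(z))^{1/q} ≤ (∫_𝔻 |f(z)|^p dA_α(z))^{1/p}. -/

import Mathlib

open MeasureTheory Metric

/-- The weighted Bergman measure `dA_α` on the unit disk:
density `((α-1)/π)(1-|z|²)^(α-2)` with respect to Lebesgue area measure. -/
noncomputable def bergmanMeasure (α : ℝ) : Measure ℂ :=
  (volume.restrict (ball (0 : ℂ) 1)).withDensity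
    (fun z => ENNReal.ofReal ((α - 1) / Real.pi * (1 - ‖z‖ ^ 2) ^ (α - 2)))

/-!
Put `κ = q / p`. The inequality factors through the Bergman space `A^q_{ακ}`.

*Contractive embedding* `A^p_α → A^q_{ακ}`. Let `μ(t)` be the hyperbolic area of the set where
`v = |f|^p (1 - |z|²)^α` exceeds `t`. The hyperbolic isoperimetric inequality
`π ∫ φ² dσ + (∫ φ dσ)² ≤ (∫ |∂φ| / (1 - |z|²) dA)²`, for `dσ = dA / (1 - |z|²)²`, follows from the
Cauchy–Pompeiu formula by pairing `∂φ / (1 - |z|²)` with itself through the unimodular kernel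
`(y - x) / (ȳ - x̄)`. Applied to truncations of `v`, together with the curvature identity
`∂ ∂̄ log v = -α / (1 - |z|²)²` away from the zeros of `f`, it shows that `(1 + μ(t)) t^(1/α)` is
nonincreasing. This quantity is constant for the constant functions, so `μ` crosses the distribution
function of a constant with the same `A^p_α` norm only once, and higher moments of `μ` are smaller.

*Dilation* `A^q_{ακ} → A^q_α`. For `q ≥ 2` the circle means of `|f|^q` are convex and nondecreasing
in the squared radius: their logarithmic derivative in `s = r²` is itself convex in `s`, having as
derivative a multiple of the means of the subharmonic function `|f|^(q-2) |∂f|²`. The squared radius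
of the dilated measure `A_α` and that of `A_{ακ}`, both written as functions of a uniform variable,
have the same mean and cross once, so the means of `|f|^q` compare.
-/

section

open Set Filter
open Complex (I)
open scoped Topology Real ComplexConjugate

/-! ### Wirtinger derivatives -/

section Wirtinger

/-- The real linear map `v ↦ a v + b v̄`, the general form of a differential on `ℂ`. -/
noncomputable def wirtingerCLM (a b : ℂ) : ℂ →L[ℝ] ℂ :=
  ContinuousLinearMap.mul ℝ ℂ a +
    (ContinuousLinearMap.mul ℝ ℂ b).comp Complex.conjCLE.toContinuousLinearMap

@[simp]
lemma wirtingerCLM_apply (a b v : ℂ) : wirtingerCLM a b v = a * v + b * conj v := by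
  simp [wirtingerCLM]

/-- `f` is real differentiable at `z`, with Wirtinger derivatives `∂f(z) = a` and `∂̄f(z) = b`. -/
def HasWirtingerDerivAt (f : ℂ → ℂ) (a b z : ℂ) : Prop :=
  HasFDerivAt f (wirtingerCLM a b) z

/-- The Wirtinger derivative `∂f = (∂f/∂x - i ∂f/∂y) / 2`, with junk value `0` where `f` is not
real differentiable. -/
noncomputable def wirtingerDeriv (f : ℂ → ℂ) (z : ℂ) : ℂ :=
  (fderiv ℝ f z 1 - I * fderiv ℝ f z I) / 2

variable {f g : ℂ → ℂ} {a b a' b' c z : ℂ}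

lemma hasWirtingerDerivAt_of_hasFDerivAt {L : ℂ →L[ℝ] ℂ} (hf : HasFDerivAt f L z)
    (hL : ∀ v, L v = a * v + b * conj v) : HasWirtingerDerivAt f a b z :=
  hf.congr_fderiv (ContinuousLinearMap.ext fun v => by simp [hL])

namespace HasWirtingerDerivAt

lemma differentiableAt (hf : HasWirtingerDerivAt f a b z) : DifferentiableAt ℝ f z :=
  HasFDerivAt.differentiableAt hf

lemma fderiv_apply (hf : HasWirtingerDerivAt f a b z) (v : ℂ) :
    fderiv ℝ f z v = a * v + b * conj v := by
  rw [HasFDerivAt.fderiv hf]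
  simp

lemma wirtingerDeriv_eq (hf : HasWirtingerDerivAt f a b z) : wirtingerDeriv f z = a := by
  simp only [wirtingerDeriv, hf.fderiv_apply, map_one, Complex.conj_I]
  linear_combination (b - a) / 2 * Complex.I_mul_I

lemma congr_deriv (hf : HasWirtingerDerivAt f a b z) (ha : a = a') (hb : b = b') :
    HasWirtingerDerivAt f a' b' z := ha ▸ hb ▸ hf

lemma congr_of_eventuallyEq (hf : HasWirtingerDerivAt f a b z) (h : g =ᶠ[nhds z] f) :
    HasWirtingerDerivAt g a b z := HasFDerivAt.congr_of_eventuallyEq hf h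

lemma mul (hf : HasWirtingerDerivAt f a b z) (hg : HasWirtingerDerivAt g a' b' z) :
    HasWirtingerDerivAt (fun w => f w * g w) (a * g z + f z * a') (b * g z + f z * b') z := by
  refine hasWirtingerDerivAt_of_hasFDerivAt (HasFDerivAt.mul hf hg) fun v => ?_
  simp only [add_apply, smul_apply, wirtingerCLM_apply, smul_eq_mul]
  ring

lemma const_mul (hf : HasWirtingerDerivAt f a b z) (c : ℂ) :
    HasWirtingerDerivAt (fun w => c * f w) (c * a) (c * b) z := by
  refine hasWirtingerDerivAt_of_hasFDerivAt (HasFDerivAt.const_mul hf c) fun v => ?_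
  simp only [smul_apply, wirtingerCLM_apply, smul_eq_mul]
  ring

lemma sub (hf : HasWirtingerDerivAt f a b z) (hg : HasWirtingerDerivAt g a' b' z) :
    HasWirtingerDerivAt (fun w => f w - g w) (a - a') (b - b') z := by
  refine hasWirtingerDerivAt_of_hasFDerivAt (HasFDerivAt.sub hf hg) fun v => ?_
  simp only [sub_apply, wirtingerCLM_apply]
  ring

lemma conj_comp (hf : HasWirtingerDerivAt f a b z) :
    HasWirtingerDerivAt (fun w => conj (f w)) (conj b) (conj a) z := by
  refine hasWirtingerDerivAt_of_hasFDerivAt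
    (Complex.conjCLE.toContinuousLinearMap.hasFDerivAt.comp z hf) fun v => ?_
  simp [add_comm]

lemma comp_hasDerivAt_outer {h : ℂ → ℂ} (hh : HasDerivAt h c (f z))
    (hf : HasWirtingerDerivAt f a b z) :
    HasWirtingerDerivAt (fun w => h (f w)) (c * a) (c * b) z := by
  refine hasWirtingerDerivAt_of_hasFDerivAt
    ((hh.hasFDerivAt.restrictScalars ℝ).comp z hf) fun v => ?_
  simp only [ContinuousLinearMap.comp_apply, ContinuousLinearMap.coe_restrictScalars',
    ContinuousLinearMap.toSpanSingleton_apply, smul_eq_mul, wirtingerCLM_apply]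
  ring

lemma comp_hasDerivAt_inner {h : ℂ → ℂ} (hf : HasWirtingerDerivAt f a b (h z))
    (hh : HasDerivAt h c z) :
    HasWirtingerDerivAt (fun w => f (h w)) (a * c) (b * conj c) z := by
  refine hasWirtingerDerivAt_of_hasFDerivAt
    (HasFDerivAt.comp z hf (hh.hasFDerivAt.restrictScalars ℝ)) fun v => ?_
  simp only [ContinuousLinearMap.comp_apply, ContinuousLinearMap.coe_restrictScalars',
    ContinuousLinearMap.toSpanSingleton_apply, smul_eq_mul, wirtingerCLM_apply, map_mul]
  ring

lemma ofReal_comp {u : ℂ → ℝ} {η : ℝ → ℝ} {η' : ℝ}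
    (hu : HasWirtingerDerivAt (fun w => (u w : ℂ)) a b z) (hη : HasDerivAt η η' (u z)) :
    HasWirtingerDerivAt (fun w => (η (u w) : ℂ)) (η' * a) (η' * b) z := by
  have hη_re : HasDerivAt (fun t : ℝ => (η t : ℂ)) η' (u z) := hη.ofReal_comp
  have hre : HasFDerivAt u _ z := Complex.reCLM.hasFDerivAt.comp z hu
  have him : HasFDerivAt (fun _ : ℂ => (0 : ℝ)) _ z := Complex.imCLM.hasFDerivAt.comp z hu
  have him_zero := him.unique (hasFDerivAt_const (0 : ℝ) z)
  refine hasWirtingerDerivAt_of_hasFDerivAt (hη_re.hasFDerivAt.comp z hre) fun v => ?_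
  have hL_im : (a * v + b * conj v).im = 0 := by simpa using DFunLike.congr_fun him_zero v
  have hL : (((a * v + b * conj v).re : ℝ) : ℂ) = a * v + b * conj v :=
    Complex.ext rfl (by simp [hL_im])
  calc _ = (((a * v + b * conj v).re : ℝ) : ℂ) * η' := by simp
    _ = η' * a * v + η' * b * conj v := by rw [hL]; ring

end HasWirtingerDerivAt

lemma hasWirtingerDerivAt_of_hasDerivAt (hf : HasDerivAt f c z) : HasWirtingerDerivAt f c 0 z := by
  refine hasWirtingerDerivAt_of_hasFDerivAt (hf.hasFDerivAt.restrictScalars ℝ) fun v => ?_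
  simp [mul_comm]

lemma exists_hasWirtingerDerivAt (hf : DifferentiableAt ℝ f z) :
    ∃ b, HasWirtingerDerivAt f (wirtingerDeriv f z) b z := by
  refine ⟨(fderiv ℝ f z 1 + I * fderiv ℝ f z I) / 2,
    hasWirtingerDerivAt_of_hasFDerivAt hf.hasFDerivAt fun v => ?_⟩
  have hv : fderiv ℝ f z v = v.re * fderiv ℝ f z 1 + v.im * fderiv ℝ f z I := by
    conv_lhs => rw [← Complex.re_add_im v, ← mul_one (v.re : ℂ)]
    simp only [← Complex.real_smul, map_add, map_smul]
  have hre : (v.re : ℂ) = (v + conj v) / 2 := Complex.re_eq_add_conj v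
  have him : I * v.im = (v - conj v) / 2 := by
    rw [Complex.im_eq_sub_conj]
    field_simp
  rw [hv, wirtingerDeriv]
  linear_combination fderiv ℝ f z 1 * hre - I * fderiv ℝ f z I * him
    + v.im * fderiv ℝ f z I * Complex.I_mul_I

end Wirtinger

/-! ### The Cauchy–Pompeiu formula -/

lemma wirtingerDeriv_mul {f g : ℂ → ℂ} {z : ℂ} (hf : DifferentiableAt ℝ f z)
    (hg : DifferentiableAt ℝ g z) :
    wirtingerDeriv (fun w => f w * g w) z
      = wirtingerDeriv f z * g z + f z * wirtingerDeriv g z := by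
  obtain ⟨b, hb⟩ := exists_hasWirtingerDerivAt hf
  obtain ⟨b', hb'⟩ := exists_hasWirtingerDerivAt hg
  exact (hb.mul hb').wirtingerDeriv_eq

lemma mul_wirtingerDeriv {f : ℂ → ℂ} {z : ℂ} (hf : DifferentiableAt ℝ f z) (e : ℂ) :
    e * wirtingerDeriv f z
      = (fderiv ℝ f z e - I * fderiv ℝ f z (I * e)) / 2 := by
  obtain ⟨b, hb⟩ := exists_hasWirtingerDerivAt hf
  simp only [hb.fderiv_apply, map_mul, Complex.conj_I]
  linear_combination (wirtingerDeriv f z * e - b * conj e) / 2 * Complex.I_mul_I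

lemma continuous_wirtingerDeriv {f : ℂ → ℂ} (hf : ContDiff ℝ 1 f) :
    Continuous (wirtingerDeriv f) := by
  have := hf.continuous_fderiv one_ne_zero
  unfold wirtingerDeriv
  fun_prop

lemma wirtingerDeriv_eq_zero_of_notMem_tsupport {f : ℂ → ℂ} {z : ℂ} (hz : z ∉ tsupport f) :
    wirtingerDeriv f z = 0 := by
  simp [wirtingerDeriv, (notMem_tsupport_iff_eventuallyEq.1 hz).fderiv_eq]

lemma tsupport_wirtingerDeriv_subset (f : ℂ → ℂ) : tsupport (wirtingerDeriv f) ⊆ tsupport f :=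
  closure_minimal
    (fun _ hz => by_contra fun hn => hz (wirtingerDeriv_eq_zero_of_notMem_tsupport hn))
    (isClosed_tsupport f)

section Polar

variable {ψ : ℂ → ℂ}

lemma integral_Ioi_fderiv_ray {E F : Type*} [NormedAddCommGroup E] [NormedSpace ℝ E]
    [NormedAddCommGroup F] [NormedSpace ℝ F] [CompleteSpace F] {ψ : E → F} (h : ContDiff ℝ 1 ψ)
    (hc : HasCompactSupport ψ) {e : E} (he : e ≠ 0) :
    ∫ r in Ioi (0 : ℝ), fderiv ℝ ψ (r • e) e = -ψ 0 := by
  have hray : ∀ r : ℝ, HasDerivAt (fun r : ℝ => ψ (r • e)) (fderiv ℝ ψ (r • e) e) r := fun r => by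
    simpa [Function.comp_def] using
      (h.differentiable one_ne_zero (r • e)).hasFDerivAt.comp_hasDerivAt r
      ((hasDerivAt_id r).smul_const e)
  have hcomp := (hc.comp_isClosedEmbedding (isClosedEmbedding_smul_left he)).integral_Ioi_deriv_eq
    (h.comp (contDiff_id.smul contDiff_const)) 0
  simpa [Function.comp_def, (hray _).deriv] using hcomp

lemma integral_Ioo_fderiv_circle (h : ContDiff ℝ 1 ψ) {r : ℝ} (hr : r ≠ 0) :
    ∫ θ in Ioo (-π) π, fderiv ℝ ψ (r * Complex.exp (θ * I))
      (I * Complex.exp (θ * I)) = 0 := by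
  have hcircle : ∀ θ : ℝ, HasDerivAt (fun θ : ℝ => ψ (circleMap 0 r θ))
      (r • fderiv ℝ ψ (circleMap 0 r θ) (I * Complex.exp (θ * I))) θ := fun θ => by
    refine ((h.differentiable one_ne_zero (circleMap 0 r θ)).hasFDerivAt.comp_hasDerivAt θ
      (hasDerivAt_circleMap 0 r θ)).congr_deriv ?_
    rw [← map_smul, circleMap_zero, Complex.real_smul]
    ring_nf
  have hcont : Continuous fun θ : ℝ =>
      r • fderiv ℝ ψ (circleMap 0 r θ) (I * Complex.exp (θ * I)) := by
    have := h.continuous_fderiv one_ne_zero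
    fun_prop
  have hzero := intervalIntegral.integral_eq_sub_of_hasDerivAt (fun θ _ => hcircle θ)
    (hcont.intervalIntegrable (-π) π)
  have hends : circleMap 0 r π = circleMap 0 r (-π) := by
    simpa [two_mul] using periodic_circleMap 0 r (-π)
  rw [hends, sub_self, intervalIntegral.integral_smul, smul_eq_zero_iff_right hr,
    intervalIntegral.integral_of_le (by linarith [Real.pi_pos]),
    integral_Ioc_eq_integral_Ioo] at hzero
  simpa [circleMap] using hzero

lemma integrable_polar_of_continuous {g : ℝ × ℝ → ℂ} (hg : Continuous g) {R : ℝ}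
    (hR : ∀ p : ℝ × ℝ, R < p.1 → g p = 0) :
    Integrable g
      ((volume.restrict (Ioi 0)).prod (volume.restrict (Ioo (-π) π))) := by
  rw [Measure.prod_restrict]
  have hcompact : IntegrableOn g (Icc 0 R ×ˢ Icc (-π) π) (volume.prod volume) :=
    hg.continuousOn.integrableOn_compact (isCompact_Icc.prod isCompact_Icc)
  refine hcompact.of_forall_sdiff_eq_zero (measurableSet_Ioi.prod measurableSet_Ioo) ?_
  rintro ⟨r, θ⟩ ⟨⟨hr, hθ⟩, hn⟩
  exact hR _ (not_le.1 fun h => hn ⟨⟨le_of_lt hr, h⟩, Ioo_subset_Icc_self hθ⟩)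

lemma integrable_polar_fderiv (h : ContDiff ℝ 1 ψ) (hc : HasCompactSupport ψ) (c : ℂ) :
    Integrable (fun p : ℝ × ℝ => fderiv ℝ ψ (p.1 * Complex.exp (p.2 * I))
        (c * Complex.exp (p.2 * I)))
      ((volume.restrict (Ioi 0)).prod (volume.restrict (Ioo (-π) π))) := by
  obtain ⟨R, hR⟩ := (hc.fderiv ℝ).isCompact.isBounded.subset_closedBall (0 : ℂ)
  have := h.continuous_fderiv one_ne_zero
  refine integrable_polar_of_continuous (by fun_prop) fun p (hp : R < p.1) => ?_
  have hp' : p.1 * Complex.exp (p.2 * I) ∉ tsupport (fderiv ℝ ψ) := fun hmem => by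
    have := hR hmem
    simp only [mem_closedBall, dist_zero_right, norm_mul, Complex.norm_exp_ofReal_mul_I,
      Complex.norm_real, Real.norm_eq_abs, mul_one] at this
    linarith [le_abs_self p.1]
  simp [image_eq_zero_of_notMem_tsupport hp']

lemma polar_wirtingerDeriv_div_conj (h : Differentiable ℝ ψ) {r : ℝ} (hr : r ≠ 0) (θ : ℝ) :
    r • (wirtingerDeriv ψ (r * Complex.exp (θ * I)) /
        conj (r * Complex.exp (θ * I)))
      = (fderiv ℝ ψ (r * Complex.exp (θ * I)) (Complex.exp (θ * I))
        - I * fderiv ℝ ψ (r * Complex.exp (θ * I))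
          (I * Complex.exp (θ * I))) / 2 := by
  rw [← mul_wirtingerDeriv (h _)]
  set e := Complex.exp (θ * I) with he
  have hee : e * conj e = 1 := by
    rw [Complex.mul_conj, Complex.normSq_eq_norm_sq, he, Complex.norm_exp_ofReal_mul_I]
    simp
  have hr' : (r : ℂ) ≠ 0 := Complex.ofReal_ne_zero.2 hr
  have hne : conj e ≠ 0 := right_ne_zero_of_mul_eq_one hee
  rw [Complex.real_smul, map_mul, Complex.conj_ofReal]
  field_simp
  linear_combination -wirtingerDeriv ψ (r * e) * hee

lemma integral_wirtingerDeriv_div_conj (h : ContDiff ℝ 1 ψ) (hc : HasCompactSupport ψ) :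
    ∫ z, wirtingerDeriv ψ z / conj z = -π * ψ 0 := by
  set ν := (volume.restrict (Ioi (0 : ℝ))).prod (volume.restrict (Ioo (-π) π))
  have hrad_int := integrable_polar_fderiv h hc 1
  have hang_int := integrable_polar_fderiv h hc I
  simp only [one_mul] at hrad_int
  have hrad : ∫ p : ℝ × ℝ, fderiv ℝ ψ (p.1 * Complex.exp (p.2 * I))
      (Complex.exp (p.2 * I)) ∂ν = 2 * π * -ψ 0 := by
    rw [integral_prod_symm _ hrad_int]
    simp only [← Complex.real_smul, integral_Ioi_fderiv_ray h hc (Complex.exp_ne_zero _)]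
    simp [← two_mul, Real.pi_pos.le]
  have hang : ∫ p : ℝ × ℝ, fderiv ℝ ψ (p.1 * Complex.exp (p.2 * I))
      (I * Complex.exp (p.2 * I)) ∂ν = 0 := by
    rw [integral_prod _ hang_int]
    exact setIntegral_eq_zero_of_forall_eq_zero fun r hr => integral_Ioo_fderiv_circle h hr.ne'
  rw [← Complex.integral_comp_polarCoord_symm, polarCoord_target, Measure.volume_eq_prod,
    ← Measure.prod_restrict]
  calc _ = ∫ p : ℝ × ℝ, (fderiv ℝ ψ (p.1 * Complex.exp (p.2 * I))
        (Complex.exp (p.2 * I)) - I * fderiv ℝ ψ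
          (p.1 * Complex.exp (p.2 * I)) (I * Complex.exp (p.2 * I))) / 2
        ∂ν := by
        simp only [ν, Measure.prod_restrict]
        refine setIntegral_congr_fun (measurableSet_Ioi.prod measurableSet_Ioo) fun p hp => ?_
        simp only [Complex.polarCoord_symm_apply, Complex.ofReal_cos, Complex.ofReal_sin,
          ← Complex.exp_mul_I]
        exact polar_wirtingerDeriv_div_conj (h.differentiable one_ne_zero) hp.1.ne' p.2
    _ = -π * ψ 0 := by
        rw [integral_div, integral_sub hrad_int (hang_int.const_mul _), integral_const_mul,
          hrad, hang]
        ring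

lemma integral_wirtingerDeriv_div_conj_sub (h : ContDiff ℝ 1 ψ) (hc : HasCompactSupport ψ)
    (x : ℂ) : ∫ y, wirtingerDeriv ψ y / (conj y - conj x) = -π * ψ x := by
  have hshift : ∀ z, wirtingerDeriv (fun z => ψ (z + x)) z = wirtingerDeriv ψ (z + x) := fun z => by
    simp only [wirtingerDeriv, fderiv_comp_add_right]
  have := integral_wirtingerDeriv_div_conj (ψ := fun z => ψ (z + x)) (by fun_prop)
    (hc.comp_homeomorph (Homeomorph.addRight x))
  rw [zero_add] at this
  rw [← this, ← integral_add_right_eq_self _ x]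
  simp [hshift]

lemma integral_wirtingerDeriv_eq_zero (h : ContDiff ℝ 1 ψ) (hc : HasCompactSupport ψ) :
    ∫ z, wirtingerDeriv ψ z = 0 := by
  have hconj : ContDiff ℝ 1 (conj : ℂ → ℂ) := Complex.conjCLE.toContinuousLinearMap.contDiff
  have hconj_deriv : ∀ z, wirtingerDeriv (fun w => conj w) z = 0 := fun z =>
    by simpa using (hasWirtingerDerivAt_of_hasDerivAt (hasDerivAt_id z)).conj_comp.wirtingerDeriv_eq
  have hpompeiu := integral_wirtingerDeriv_div_conj (ψ := fun z => ψ z * conj z) (h.mul hconj)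
    hc.mul_right
  rw [map_zero, mul_zero, mul_zero] at hpompeiu
  rw [← hpompeiu]
  refine integral_congr_ae ?_
  filter_upwards [Measure.ae_ne volume (0 : ℂ)] with z hz
  rw [wirtingerDeriv_mul (h.differentiable one_ne_zero z) (hconj.differentiable one_ne_zero z),
    hconj_deriv, mul_zero, add_zero, mul_div_cancel_right₀ _ (by simpa using hz)]

end Polar

/-! ### Test functions -/

/-- `φ` is a `C¹` test function on `U`: it has compact support contained in `U`. -/
structure IsTestFunctionOn (φ : ℂ → ℂ) (U : Set ℂ) : Prop where
  contDiff : ContDiff ℝ 1 φ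
  hasCompactSupport : HasCompactSupport φ
  tsupport_subset : tsupport φ ⊆ U

lemma continuous_mul_of_tsupport_subset {X R : Type*} [TopologicalSpace X] [TopologicalSpace R]
    [MulZeroClass R] [ContinuousMul R] {U : Set X} {φ g : X → R} (hφ : Continuous φ)
    (hU : tsupport φ ⊆ U) (hg : ∀ z ∈ U, ContinuousAt g z) : Continuous fun z => φ z * g z := by
  refine continuous_iff_continuousAt.2 fun z => ?_
  by_cases hz : z ∈ tsupport φ
  · exact hφ.continuousAt.mul (hg z (hU hz))
  · refine (continuousAt_const (y := (0 : R))).congr_of_eventuallyEq ?_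
    filter_upwards [notMem_tsupport_iff_eventuallyEq.1 hz] with y hy
    simp [hy]

namespace IsTestFunctionOn

variable {U : Set ℂ} {φ g : ℂ → ℂ} {z : ℂ}

lemma eq_zero (hφ : IsTestFunctionOn φ U) (hz : z ∉ U) : φ z = 0 :=
  image_eq_zero_of_notMem_tsupport fun h => hz (hφ.tsupport_subset h)

lemma mul (hφ : IsTestFunctionOn φ U) (hg : ∀ z ∈ U, ContDiffAt ℝ 1 g z) :
    IsTestFunctionOn (fun z => φ z * g z) U where
  contDiff := contDiff_iff_contDiffAt.2 fun z => by
    by_cases hz : z ∈ tsupport φ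
    · exact hφ.contDiff.contDiffAt.mul (hg z (hφ.tsupport_subset hz))
    · refine (contDiffAt_const (c := (0 : ℂ))).congr_of_eventuallyEq ?_
      filter_upwards [notMem_tsupport_iff_eventuallyEq.1 hz] with y hy
      simp [hy]
  hasCompactSupport := hφ.hasCompactSupport.mul_right
  tsupport_subset := (tsupport_mul_subset_left).trans hφ.tsupport_subset

lemma wirtingerDeriv_mul (hφ : IsTestFunctionOn φ U) (hg : ∀ z ∈ U, ContDiffAt ℝ 1 g z) (z : ℂ) :
    wirtingerDeriv (fun z => φ z * g z) z
      = wirtingerDeriv φ z * g z + φ z * wirtingerDeriv g z := by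
  by_cases hz : z ∈ tsupport φ
  · exact _root_.wirtingerDeriv_mul (hφ.contDiff.differentiable one_ne_zero z)
      ((hg z (hφ.tsupport_subset hz)).differentiableAt one_ne_zero)
  · have hz' : z ∉ tsupport fun z => φ z * g z := fun h => hz (tsupport_mul_subset_left h)
    rw [wirtingerDeriv_eq_zero_of_notMem_tsupport hz',
      wirtingerDeriv_eq_zero_of_notMem_tsupport hz, image_eq_zero_of_notMem_tsupport hz]
    simp

lemma tsupport_wirtingerDeriv_subset (hφ : IsTestFunctionOn φ U) :
    tsupport (wirtingerDeriv φ) ⊆ U :=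
  (_root_.tsupport_wirtingerDeriv_subset φ).trans hφ.tsupport_subset

lemma hasCompactSupport_wirtingerDeriv (hφ : IsTestFunctionOn φ U) :
    HasCompactSupport (wirtingerDeriv φ) :=
  hφ.hasCompactSupport.of_isClosed_subset (isClosed_tsupport _)
    (_root_.tsupport_wirtingerDeriv_subset φ)

lemma continuous_wirtingerDeriv_mul (hφ : IsTestFunctionOn φ U) (hg : ∀ z ∈ U, ContinuousAt g z) :
    Continuous fun z => wirtingerDeriv φ z * g z :=
  continuous_mul_of_tsupport_subset (continuous_wirtingerDeriv hφ.contDiff)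
    hφ.tsupport_wirtingerDeriv_subset hg

lemma continuous_mul (hφ : IsTestFunctionOn φ U) (hg : ∀ z ∈ U, ContinuousAt g z) :
    Continuous fun z => φ z * g z :=
  continuous_mul_of_tsupport_subset hφ.contDiff.continuous hφ.tsupport_subset hg

end IsTestFunctionOn

/-! ### The Cauchy kernel -/

lemma integrableOn_ball_inv_norm (R : ℝ) : IntegrableOn (fun z : ℂ => ‖z‖⁻¹) (ball 0 R) := by
  refine integrableOn_ball_of_norm_le_rpow (E := ℂ) (C := 1) (α := 1) (by simp) (by simp) ?_
    measurable_norm.inv.aestronglyMeasurable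
  filter_upwards with x
  simp [Real.rpow_neg_one]

lemma integrable_prod_div_conj_sub {G : ℂ × ℂ → ℂ} (hG : Continuous G)
    (hc : HasCompactSupport G) :
    Integrable (fun p => G p / (conj p.2 - conj p.1)) (volume.prod volume) := by
  obtain ⟨C, hC⟩ := hc.exists_bound_of_continuous hG
  obtain ⟨R, hR⟩ := hc.isCompact.isBounded.subset_ball (0 : ℂ × ℂ)
  have hC0 : 0 ≤ C := (norm_nonneg _).trans (hC 0)
  have hconst : Integrable ((ball (0 : ℂ) R).indicator fun _ => C) :=
    (integrable_indicator_iff measurableSet_ball).2 (integrableOn_const measure_ball_lt_top.ne)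
  have hker : Integrable ((ball (0 : ℂ) (R + R)).indicator fun z => ‖z‖⁻¹) :=
    (integrable_indicator_iff measurableSet_ball).2 (integrableOn_ball_inv_norm _)
  refine (hconst.convolution_integrand (ContinuousLinearMap.mul ℝ ℝ) hker).swap.mono'
    (hG.measurable.div (by fun_prop)).aestronglyMeasurable (.of_forall fun p => ?_)
  have hnonneg : 0 ≤ (ball (0 : ℂ) R).indicator (fun _ => C) p.1 *
      (ball (0 : ℂ) (R + R)).indicator (fun z => ‖z‖⁻¹) (p.2 - p.1) :=
    mul_nonneg (indicator_nonneg (fun _ _ => hC0) _)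
      (indicator_nonneg (fun _ _ => inv_nonneg.2 (norm_nonneg _)) _)
  by_cases hp : p ∈ tsupport G
  · have hp' : ‖p.1‖ < R ∧ ‖p.2‖ < R := by simpa [Prod.norm_def] using hR hp
    have hsub : p.2 - p.1 ∈ ball (0 : ℂ) (R + R) := by
      rw [mem_ball_zero_iff]
      linarith [norm_sub_le p.2 p.1]
    simp only [Function.comp_apply, Prod.fst_swap, Prod.snd_swap, ContinuousLinearMap.mul_apply']
    rw [norm_div, ← map_sub, RCLike.norm_conj, div_eq_mul_inv,
      indicator_of_mem (mem_ball_zero_iff.2 hp'.1), indicator_of_mem hsub]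
    exact mul_le_mul_of_nonneg_right (hC p) (inv_nonneg.2 (norm_nonneg _))
  · simpa [image_eq_zero_of_notMem_tsupport hp] using hnonneg

lemma integrable_prod_mul_div_conj_sub {a b : ℂ → ℂ} {k : ℂ × ℂ → ℂ} (ha : Continuous a)
    (ha_supp : HasCompactSupport a) (hb : Continuous b) (hb_supp : HasCompactSupport b)
    (hk : Continuous k) :
    Integrable (fun p : ℂ × ℂ => a p.1 * b p.2 * k p / (conj p.2 - conj p.1))
      (volume.prod volume) := by
  refine integrable_prod_div_conj_sub (by fun_prop)
    (.intro (ha_supp.isCompact.prod hb_supp.isCompact) fun p hp => ?_)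
  rw [mem_prod, not_and_or] at hp
  rcases hp with hp | hp <;> simp [image_eq_zero_of_notMem_tsupport hp]

lemma integrable_div_conj_sub {g : ℂ → ℂ} (hg : Continuous g) (hc : HasCompactSupport g) (x : ℂ) :
    Integrable fun y => g y / (conj y - conj x) := by
  obtain ⟨C, hC⟩ := hc.exists_bound_of_continuous hg
  obtain ⟨R, hR⟩ := hc.isCompact.isBounded.subset_ball x
  have hker : Integrable fun y => C * (ball (0 : ℂ) R).indicator (fun z => ‖z‖⁻¹) (y - x) :=
    (((integrable_indicator_iff measurableSet_ball).2
      (integrableOn_ball_inv_norm R)).comp_sub_right x).const_mul C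
  refine hker.mono' (hg.measurable.div (by fun_prop)).aestronglyMeasurable (.of_forall fun y => ?_)
  by_cases hy : y ∈ tsupport g
  · have hyx : y - x ∈ ball (0 : ℂ) R := by simpa [dist_eq_norm] using hR hy
    rw [norm_div, ← map_sub, RCLike.norm_conj, div_eq_mul_inv, indicator_of_mem hyx]
    exact mul_le_mul_of_nonneg_right (hC y) (inv_nonneg.2 (norm_nonneg _))
  · rw [image_eq_zero_of_notMem_tsupport hy, zero_div, norm_zero]
    exact mul_nonneg ((norm_nonneg _).trans (hC x))
      (indicator_nonneg (fun _ _ => inv_nonneg.2 (norm_nonneg _)) _)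

/-! ### The hyperbolic isoperimetric inequality -/

/-- The weight `1 - |z|²` of the hyperbolic metric, with complex values so that it can be
differentiated in the sense of Wirtinger. -/
noncomputable def diskWeight (z : ℂ) : ℂ := 1 - z * conj z

lemma diskWeight_eq_ofReal (z : ℂ) : diskWeight z = ((1 - ‖z‖ ^ 2 : ℝ) : ℂ) := by
  rw [diskWeight, Complex.mul_conj, Complex.normSq_eq_norm_sq]
  push_cast
  rfl

lemma one_sub_norm_sq_pos {z : ℂ} (hz : z ∈ ball (0 : ℂ) 1) : 0 < 1 - ‖z‖ ^ 2 := by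
  rw [mem_ball_zero_iff] at hz
  nlinarith [norm_nonneg z]

lemma diskWeight_ne_zero {z : ℂ} (hz : z ∈ ball (0 : ℂ) 1) : diskWeight z ≠ 0 := by
  rw [diskWeight_eq_ofReal]
  exact_mod_cast (one_sub_norm_sq_pos hz).ne'

lemma contDiff_diskWeight : ContDiff ℝ 1 diskWeight := by
  have : ContDiff ℝ 1 fun y : ℂ => conj y := Complex.conjCLE.toContinuousLinearMap.contDiff
  unfold diskWeight
  fun_prop

lemma hasWirtingerDerivAt_diskWeight (z : ℂ) :
    HasWirtingerDerivAt diskWeight (-conj z) (-z) z := by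
  have hid := hasWirtingerDerivAt_of_hasDerivAt (hasDerivAt_id z)
  have hone := hasWirtingerDerivAt_of_hasDerivAt (hasDerivAt_const z (1 : ℂ))
  exact (hone.sub (hid.mul hid.conj_comp)).congr_deriv (by simp) (by simp)

lemma contDiffAt_inv_diskWeight {z : ℂ} (hz : z ∈ ball (0 : ℂ) 1) :
    ContDiffAt ℝ 1 (fun y => (diskWeight y)⁻¹) z :=
  contDiff_diskWeight.contDiffAt.inv (diskWeight_ne_zero hz)

lemma hasWirtingerDerivAt_inv_diskWeight {z : ℂ} (hz : z ∈ ball (0 : ℂ) 1) :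
    HasWirtingerDerivAt (fun y => (diskWeight y)⁻¹) (conj z / diskWeight z ^ 2)
      (z / diskWeight z ^ 2) z :=
  (HasWirtingerDerivAt.comp_hasDerivAt_outer (hasDerivAt_inv (diskWeight_ne_zero hz))
    (hasWirtingerDerivAt_diskWeight z)).congr_deriv (by ring) (by ring)

section Isoperimetric

variable {φ : ℂ → ℂ}

lemma continuous_wirtingerDeriv_div_diskWeight (hφ : IsTestFunctionOn φ (ball 0 1)) :
    Continuous fun y => wirtingerDeriv φ y / diskWeight y := by
  simpa only [div_eq_mul_inv] using
    hφ.continuous_wirtingerDeriv_mul fun z hz => (contDiffAt_inv_diskWeight hz).continuousAt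

lemma continuous_div_diskWeight_sq (hφ : IsTestFunctionOn φ (ball 0 1)) :
    Continuous fun y => φ y / diskWeight y ^ 2 := by
  simpa only [div_eq_mul_inv, inv_pow, Pi.pow_apply] using
    hφ.continuous_mul fun z hz => (contDiffAt_inv_diskWeight hz).continuousAt.pow 2

lemma hasCompactSupport_wirtingerDeriv_div_diskWeight (hφ : IsTestFunctionOn φ (ball 0 1)) :
    HasCompactSupport fun y => wirtingerDeriv φ y / diskWeight y :=
  hφ.hasCompactSupport_wirtingerDeriv.mul_right

lemma hasCompactSupport_div_diskWeight_sq (hφ : IsTestFunctionOn φ (ball 0 1)) :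
    HasCompactSupport fun y => φ y / diskWeight y ^ 2 :=
  hφ.hasCompactSupport.mul_right

-- The Cauchy–Pompeiu formula for `φ h / (1 - |·|²)`.
lemma integral_wirtingerDeriv_diskWeight_div_conj_sub (hφ : IsTestFunctionOn φ (ball 0 1))
    {h h' : ℂ → ℂ} (hh : ∀ z, HasDerivAt h (h' z) z) (hh' : Continuous h') (x : ℂ) :
    (∫ y, wirtingerDeriv φ y / diskWeight y * h y / (conj y - conj x))
      + ∫ y, φ y / diskWeight y ^ 2 * (conj y * h y + diskWeight y * h' y) / (conj y - conj x)
      = -π * (φ x * ((diskWeight x)⁻¹ * h x)) := by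
  have hh_diff : Differentiable ℂ h := fun z => (hh z).differentiableAt
  have hg : ∀ z ∈ ball (0 : ℂ) 1, ContDiffAt ℝ 1 (fun y => (diskWeight y)⁻¹ * h y) z :=
    fun z hz => (contDiffAt_inv_diskWeight hz).mul (hh_diff.contDiff.restrict_scalars ℝ).contDiffAt
  have hφg := hφ.mul hg
  have hint₁ : Integrable fun y =>
      wirtingerDeriv φ y / diskWeight y * h y / (conj y - conj x) :=
    integrable_div_conj_sub
      ((continuous_wirtingerDeriv_div_diskWeight hφ).mul hh_diff.continuous)
      (hasCompactSupport_wirtingerDeriv_div_diskWeight hφ).mul_right x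
  have hint₂ : Integrable fun y => φ y / diskWeight y ^ 2 *
      (conj y * h y + diskWeight y * h' y) / (conj y - conj x) :=
    integrable_div_conj_sub
      ((continuous_div_diskWeight_sq hφ).mul ((Complex.continuous_conj.mul hh_diff.continuous).add
        (contDiff_diskWeight.continuous.mul hh')))
      (hasCompactSupport_div_diskWeight_sq hφ).mul_right x
  rw [← integral_add hint₁ hint₂,
    ← integral_wirtingerDeriv_div_conj_sub hφg.contDiff hφg.hasCompactSupport]
  refine integral_congr_ae (.of_forall fun y => ?_)
  simp only
  rw [← add_div, hφ.wirtingerDeriv_mul hg]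
  congr 1
  by_cases hy : y ∈ ball (0 : ℂ) 1
  · rw [((hasWirtingerDerivAt_inv_diskWeight hy).mul
      (hasWirtingerDerivAt_of_hasDerivAt (hh y))).wirtingerDeriv_eq]
    have := diskWeight_ne_zero hy
    field_simp
  · rw [hφ.eq_zero hy, image_eq_zero_of_notMem_tsupport fun hmem =>
      hy (hφ.tsupport_wirtingerDeriv_subset hmem)]
    simp

lemma integral_wirtingerDeriv_diskWeight_mul_sub (hφ : IsTestFunctionOn φ (ball 0 1)) (x : ℂ) :
    ∫ y, wirtingerDeriv φ y / diskWeight y * (y - x) / (conj y - conj x)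
      = -∫ y, φ y / diskWeight y ^ 2 * (1 - x * conj y) / (conj y - conj x) := by
  have h := integral_wirtingerDeriv_diskWeight_div_conj_sub hφ (h := fun y => y - x)
    (h' := fun _ => 1) (fun z => (hasDerivAt_id z).sub_const x) continuous_const x
  have hfactor : ∀ y, conj y * (y - x) + diskWeight y * 1 = 1 - x * conj y := fun y => by
    rw [diskWeight]
    ring
  simp only [hfactor, sub_self, mul_zero] at h
  exact eq_neg_of_add_eq_zero_left h

lemma integral_wirtingerDeriv_diskWeight_mul_one_sub (hφ : IsTestFunctionOn φ (ball 0 1)) {y : ℂ}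
    (hy : y ∈ ball (0 : ℂ) 1) :
    ∫ x, wirtingerDeriv φ x / diskWeight x * (1 - x * conj y) / (conj y - conj x)
      = π * φ y + ∫ x, φ x / diskWeight x ^ 2 := by
  have h := integral_wirtingerDeriv_diskWeight_div_conj_sub hφ (h := fun x => 1 - x * conj y)
    (h' := fun _ => -conj y) (fun z => by simpa using ((hasDerivAt_id z).mul_const _).const_sub 1)
    continuous_const y
  have hcancel : ∫ x, φ x / diskWeight x ^ 2
      * (conj x * (1 - x * conj y) + diskWeight x * -conj y) / (conj x - conj y)
      = ∫ x, φ x / diskWeight x ^ 2 := by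
    refine integral_congr_ae ?_
    filter_upwards [Measure.ae_ne volume y] with x hx
    have hne : conj x - conj y ≠ 0 := sub_ne_zero.2 fun h => hx (RingHom.injective _ h)
    rw [div_eq_iff hne]
    simp only [diskWeight]
    ring
  have hy1 : φ y * ((diskWeight y)⁻¹ * (1 - y * conj y)) = φ y := by
    change φ y * ((diskWeight y)⁻¹ * diskWeight y) = φ y
    rw [inv_mul_cancel₀ (diskWeight_ne_zero hy), mul_one]
  have hneg : ∫ x, wirtingerDeriv φ x / diskWeight x * (1 - x * conj y) / (conj y - conj x)
      = -∫ x, wirtingerDeriv φ x / diskWeight x * (1 - x * conj y) / (conj x - conj y) := by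
    simp only [← integral_neg, ← div_neg, neg_sub]
  rw [hcancel, hy1] at h
  rw [hneg]
  linear_combination -h

lemma integral_integral_wirtingerDeriv_diskWeight (hφ : IsTestFunctionOn φ (ball 0 1)) :
    ∫ x, wirtingerDeriv φ x / diskWeight x *
        ∫ y, wirtingerDeriv φ y / diskWeight y * (y - x) / (conj y - conj x)
      = -(π * (∫ y, φ y ^ 2 / diskWeight y ^ 2) + (∫ x, φ x / diskWeight x ^ 2) ^ 2) := by
  set a : ℂ → ℂ := fun x => wirtingerDeriv φ x / diskWeight x
  set b : ℂ → ℂ := fun y => φ y / diskWeight y ^ 2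
  have ha : Continuous a := continuous_wirtingerDeriv_div_diskWeight hφ
  have hb : Continuous b := continuous_div_diskWeight_sq hφ
  have ha_supp : HasCompactSupport a := hasCompactSupport_wirtingerDeriv_div_diskWeight hφ
  have hb_supp : HasCompactSupport b := hasCompactSupport_div_diskWeight_sq hφ
  have hint : Integrable (fun p : ℂ × ℂ => a p.1 * b p.2 * (1 - p.1 * conj p.2)
      / (conj p.2 - conj p.1)) (volume.prod volume) :=
    integrable_prod_mul_div_conj_sub ha ha_supp hb hb_supp (by fun_prop)
  have hinner : ∀ y, ∫ x, a x * b y * (1 - x * conj y) / (conj y - conj x)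
      = π * (φ y ^ 2 / diskWeight y ^ 2) + b y * ∫ x, b x := fun y => by
    by_cases hy : y ∈ ball (0 : ℂ) 1
    · calc _ = b y * ∫ x, a x * (1 - x * conj y) / (conj y - conj x) := by
            rw [← integral_const_mul]
            exact integral_congr_ae (.of_forall fun x => by ring)
        _ = _ := by
            rw [integral_wirtingerDeriv_diskWeight_mul_one_sub hφ hy]
            ring
    · simp [b, hφ.eq_zero hy]
  have hsq_int : Integrable fun y => π * (φ y ^ 2 / diskWeight y ^ 2) := by
    have : Integrable (b * φ) :=
      (hb.mul hφ.contDiff.continuous).integrable_of_hasCompactSupport hb_supp.mul_right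
    exact (this.congr (.of_forall fun y => by simp only [b, Pi.mul_apply]; ring)).const_mul _
  calc ∫ x, a x * ∫ y, a y * (y - x) / (conj y - conj x)
      = -∫ x, ∫ y, a x * b y * (1 - x * conj y) / (conj y - conj x) := by
        rw [← integral_neg]
        refine integral_congr_ae (.of_forall fun x => ?_)
        simp only [a, b, integral_wirtingerDeriv_diskWeight_mul_sub hφ x, mul_neg]
        rw [← integral_const_mul]
        simp only [mul_div_assoc, mul_assoc]
    _ = -∫ y, ∫ x, a x * b y * (1 - x * conj y) / (conj y - conj x) := by
        rw [integral_integral_swap hint]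
    _ = -(π * (∫ y, φ y ^ 2 / diskWeight y ^ 2) + (∫ x, b x) ^ 2) := by
        simp only [hinner]
        rw [integral_add hsq_int ((hb.integrable_of_hasCompactSupport hb_supp).mul_const _),
          integral_const_mul, integral_mul_const, sq]

theorem hyperbolic_isoperimetric_inequality {φ : ℂ → ℝ}
    (hφ : IsTestFunctionOn (fun z => (φ z : ℂ)) (ball 0 1)) :
    π * (∫ z, φ z ^ 2 / (1 - ‖z‖ ^ 2) ^ 2) + (∫ z, φ z / (1 - ‖z‖ ^ 2) ^ 2) ^ 2
      ≤ (∫ z, ‖wirtingerDeriv (fun z => (φ z : ℂ)) z / diskWeight z‖) ^ 2 := by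
  have hbilin := integral_integral_wirtingerDeriv_diskWeight hφ
  set a : ℂ → ℂ := fun x => wirtingerDeriv (fun z => (φ z : ℂ)) x / diskWeight x
  have ha : Integrable a :=
    (continuous_wirtingerDeriv_div_diskWeight hφ).integrable_of_hasCompactSupport
      (hasCompactSupport_wirtingerDeriv_div_diskWeight hφ)
  have hinner : ∀ x, ‖∫ y, a y * (y - x) / (conj y - conj x)‖ ≤ ∫ y, ‖a y‖ := fun x => by
    refine norm_integral_le_of_norm_le ha.norm (.of_forall fun y => ?_)
    rw [← map_sub, norm_div, RCLike.norm_conj, norm_mul, mul_div_assoc]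
    exact mul_le_of_le_one_right (norm_nonneg _) (div_self_le_one _)
  have hreal : π * (∫ y, (φ y : ℂ) ^ 2 / diskWeight y ^ 2)
        + (∫ x, (φ x : ℂ) / diskWeight x ^ 2) ^ 2
      = ((π * (∫ z, φ z ^ 2 / (1 - ‖z‖ ^ 2) ^ 2)
        + (∫ z, φ z / (1 - ‖z‖ ^ 2) ^ 2) ^ 2 : ℝ) : ℂ) := by
    simp only [diskWeight_eq_ofReal]
    norm_cast
  have hnonneg : 0 ≤ π * (∫ z, φ z ^ 2 / (1 - ‖z‖ ^ 2) ^ 2)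
      + (∫ z, φ z / (1 - ‖z‖ ^ 2) ^ 2) ^ 2 :=
    add_nonneg (mul_nonneg Real.pi_nonneg (integral_nonneg fun z => by positivity)) (sq_nonneg _)
  calc _ = ‖∫ x, a x * ∫ y, a y * (y - x) / (conj y - conj x)‖ := by
        rw [hbilin, hreal, norm_neg, Complex.norm_real, Real.norm_of_nonneg hnonneg]
    _ ≤ ∫ x, ‖a x‖ * ∫ y, ‖a y‖ := by
        refine norm_integral_le_of_norm_le (ha.norm.mul_const _) (.of_forall fun x => ?_)
        rw [norm_mul]
        exact mul_le_mul_of_nonneg_left (hinner x) (norm_nonneg _)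
    _ = (∫ z, ‖a z‖) ^ 2 := by rw [integral_mul_const, sq]

end Isoperimetric

/-! ### The weighted modulus of a holomorphic function -/

lemma sq_integral_mul_mul_le {X : Type*} [MeasurableSpace X] {μ : Measure X} {g f h : X → ℝ}
    (hg : 0 ≤ g) (hff : Integrable (fun x => g x * f x ^ 2) μ)
    (hfh : Integrable (fun x => g x * (f x * h x)) μ)
    (hhh : Integrable (fun x => g x * h x ^ 2) μ) :
    (∫ x, g x * (f x * h x) ∂μ) ^ 2 ≤ (∫ x, g x * f x ^ 2 ∂μ) * ∫ x, g x * h x ^ 2 ∂μ := by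
  have hcomb (s : ℝ) :
      Integrable (fun x => s * s * (g x * f x ^ 2) + -2 * s * (g x * (f x * h x))) μ :=
    (hff.const_mul _).add (hfh.const_mul _)
  have hquad : ∀ s : ℝ, 0 ≤ (∫ x, g x * f x ^ 2 ∂μ) * (s * s)
      + (-2 * ∫ x, g x * (f x * h x) ∂μ) * s + ∫ x, g x * h x ^ 2 ∂μ := fun s => by
    calc 0 ≤ ∫ x, g x * (s * f x - h x) ^ 2 ∂μ :=
          integral_nonneg fun x => mul_nonneg (hg x) (sq_nonneg _)
      _ = ∫ x, s * s * (g x * f x ^ 2) + -2 * s * (g x * (f x * h x)) + g x * h x ^ 2 ∂μ :=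
          integral_congr_ae (.of_forall fun x => by ring)
      _ = _ := by
          rw [integral_add (hcomb s) hhh,
            integral_add (hff.const_mul _) (hfh.const_mul _), integral_const_mul,
            integral_const_mul]
          ring
  have := discrim_le_zero hquad
  rw [discrim] at this
  linarith

/-- The function `|F|^p (1 - |z|²)^α` on the unit disk, extended by zero. Its integral against the
hyperbolic measure is, up to a constant, the integral of `|F|^p` against `bergmanMeasure α`. -/
noncomputable def weightedModulus (F : ℂ → ℂ) (p α : ℝ) (z : ℂ) : ℝ :=
  ‖F z‖ ^ p * max 0 (1 - ‖z‖ ^ 2) ^ α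

/-- The logarithmic Wirtinger derivative `∂ log v` of `v = weightedModulus F p α`. -/
noncomputable def weightedModulusLogDeriv (F : ℂ → ℂ) (p α : ℝ) (z : ℂ) : ℂ :=
  p / 2 * (deriv F z / F z) - α * (conj z * (diskWeight z)⁻¹)

section WeightedModulus

variable {F : ℂ → ℂ} {p α a : ℝ} {z : ℂ}

lemma weightedModulus_nonneg (z : ℂ) : 0 ≤ weightedModulus F p α z := by
  unfold weightedModulus
  positivity

lemma weightedModulus_of_mem_ball (hz : z ∈ ball (0 : ℂ) 1) :
    weightedModulus F p α z = ‖F z‖ ^ p * (1 - ‖z‖ ^ 2) ^ α := by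
  rw [weightedModulus, max_eq_right (one_sub_norm_sq_pos hz).le]

lemma weightedModulus_eq_zero (hα : 0 < α) (hz : z ∉ ball (0 : ℂ) 1) :
    weightedModulus F p α z = 0 := by
  have hz' : 1 ≤ ‖z‖ := by simpa using hz
  rw [weightedModulus, max_eq_left (by nlinarith), Real.zero_rpow hα.ne', mul_zero]

lemma mem_ball_inter_of_weightedModulus_pos (hp : 0 < p) (hα : 0 < α)
    (hz : 0 < weightedModulus F p α z) : z ∈ ball (0 : ℂ) 1 ∩ F ⁻¹' {0}ᶜ := by
  refine ⟨?_, fun hFz => ?_⟩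
  · by_contra h
    exact hz.ne' (weightedModulus_eq_zero hα h)
  · rw [weightedModulus, show F z = 0 from hFz, norm_zero, Real.zero_rpow hp.ne', zero_mul] at hz
    exact hz.false

lemma exists_weightedModulus_le (hF : DiffContOnCl ℂ F (ball 0 1)) (hp : 0 < p) (hα : 0 < α) :
    ∃ C, 0 < C ∧ ∀ z, weightedModulus F p α z ≤ C * max 0 (1 - ‖z‖ ^ 2) ^ α := by
  obtain ⟨M, hM⟩ := (isCompact_closedBall (0 : ℂ) 1).exists_bound_of_continuousOn
    hF.continuousOn_ball
  refine ⟨(max M 1) ^ p, by positivity, fun z => ?_⟩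
  by_cases hz : z ∈ ball (0 : ℂ) 1
  · have hFz : ‖F z‖ ≤ max M 1 := (hM z (ball_subset_closedBall hz)).trans (le_max_left _ _)
    unfold weightedModulus
    gcongr
  · rw [weightedModulus_eq_zero hα hz]
    positivity

lemma continuous_weightedModulus (hF : DiffContOnCl ℂ F (ball 0 1)) (hp : 0 < p) (hα : 0 < α) :
    Continuous (weightedModulus F p α) := by
  refine continuous_iff_continuousAt.2 fun z => ?_
  have hweight : Continuous fun z : ℂ => max 0 (1 - ‖z‖ ^ 2) ^ α :=
    (by fun_prop : Continuous fun z : ℂ => max 0 (1 - ‖z‖ ^ 2)).rpow_const fun _ => Or.inr hα.le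
  by_cases hz : z ∈ ball (0 : ℂ) 1
  · exact ((hF.differentiableAt isOpen_ball hz).continuousAt.norm.rpow_const
      (Or.inr hp.le)).mul hweight.continuousAt
  · obtain ⟨C, -, hC⟩ := exists_weightedModulus_le hF hp hα
    have hlim : Tendsto (fun y : ℂ => C * max 0 (1 - ‖y‖ ^ 2) ^ α) (𝓝 z) (𝓝 0) := by
      have hz' : 1 - ‖z‖ ^ 2 ≤ 0 := by
        have : 1 ≤ ‖z‖ := by simpa using hz
        nlinarith
      have := (hweight.const_mul C).tendsto z
      rwa [max_eq_left hz', Real.zero_rpow hα.ne', mul_zero] at this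
    rw [ContinuousAt, weightedModulus_eq_zero hα hz]
    exact squeeze_zero weightedModulus_nonneg hC hlim

lemma isCompact_le_weightedModulus (hF : DiffContOnCl ℂ F (ball 0 1)) (hp : 0 < p) (hα : 0 < α)
    (ha : 0 < a) : IsCompact {z | a ≤ weightedModulus F p α z} :=
  (isCompact_closedBall (0 : ℂ) 1).of_isClosed_subset
    (isClosed_le continuous_const (continuous_weightedModulus hF hp hα))
    fun _ hz => ball_subset_closedBall
      (mem_ball_inter_of_weightedModulus_pos hp hα (ha.trans_le hz)).1

lemma analyticAt_of_diffContOnCl (hF : DiffContOnCl ℂ F (ball 0 1)) (hz : z ∈ ball (0 : ℂ) 1) :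
    AnalyticAt ℂ F z :=
  hF.differentiableOn.analyticAt (isOpen_ball.mem_nhds hz)

lemma weightedModulus_eventuallyEq (hz : z ∈ ball (0 : ℂ) 1) :
    weightedModulus F p α =ᶠ[𝓝 z] fun y => (‖F y‖ ^ 2) ^ (p / 2) * (1 - ‖y‖ ^ 2) ^ α := by
  filter_upwards [isOpen_ball.mem_nhds hz] with y hy
  rw [weightedModulus_of_mem_ball hy, ← Real.rpow_natCast_mul (norm_nonneg _), Nat.cast_ofNat,
    mul_div_cancel₀ p two_ne_zero]

lemma contDiffAt_weightedModulus (hF : AnalyticAt ℂ F z) (hz : z ∈ ball (0 : ℂ) 1)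
    (hFz : F z ≠ 0) : ContDiffAt ℝ 1 (weightedModulus F p α) z := by
  have hnorm : ContDiffAt ℝ 1 (fun y => ‖F y‖ ^ 2) z :=
    ((hF.contDiffAt (n := 1)).restrict_scalars ℝ).norm_sq ℝ
  have hweight : ContDiffAt ℝ 1 (fun y : ℂ => 1 - ‖y‖ ^ 2) z :=
    contDiffAt_const.sub (contDiffAt_id.norm_sq ℝ)
  exact ((hnorm.rpow_const_of_ne (by simpa using hFz)).mul
    (hweight.rpow_const_of_ne (one_sub_norm_sq_pos hz).ne')).congr_of_eventuallyEq
      (weightedModulus_eventuallyEq hz)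

lemma hasWirtingerDerivAt_norm_sq (hF : DifferentiableAt ℂ F z) :
    HasWirtingerDerivAt (fun y => ((‖F y‖ ^ 2 : ℝ) : ℂ)) (deriv F z * conj (F z))
      (F z * conj (deriv F z)) z := by
  have hderiv := hasWirtingerDerivAt_of_hasDerivAt hF.hasDerivAt
  have := (hderiv.mul hderiv.conj_comp).congr_deriv (a' := deriv F z * conj (F z))
    (b' := F z * conj (deriv F z)) (by simp) (by simp)
  simpa only [Complex.mul_conj, Complex.normSq_eq_norm_sq] using this

lemma wirtingerDeriv_comp_weightedModulus {η : ℝ → ℝ} (hη : Differentiable ℝ η)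
    (hF : DifferentiableAt ℂ F z) (hz : z ∈ ball (0 : ℂ) 1) (hFz : F z ≠ 0) :
    wirtingerDeriv (fun y => (η (weightedModulus F p α y) : ℂ)) z
      = (deriv η (weightedModulus F p α z) * weightedModulus F p α z : ℝ)
        * weightedModulusLogDeriv F p α z := by
  have hN : ‖F z‖ ^ 2 ≠ 0 := by simpa using hFz
  have hw := (one_sub_norm_sq_pos hz).ne'
  have hmod := (hasWirtingerDerivAt_norm_sq hF).ofReal_comp
    (Real.hasDerivAt_rpow_const (p := p / 2) (Or.inl hN))
  have hweight : HasWirtingerDerivAt (fun y => ((1 - ‖y‖ ^ 2 : ℝ) : ℂ)) (-conj z) (-z) z := by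
    simpa only [← diskWeight_eq_ofReal] using hasWirtingerDerivAt_diskWeight z
  have hv := (hmod.mul (hweight.ofReal_comp
    (Real.hasDerivAt_rpow_const (p := α) (Or.inl hw)))).congr_of_eventuallyEq
      (g := fun y => (weightedModulus F p α y : ℂ)) (by
        filter_upwards [weightedModulus_eventuallyEq hz] with y hy
        rw [hy, Complex.ofReal_mul])
  rw [(hv.ofReal_comp (hη _).hasDerivAt).wirtingerDeriv_eq, weightedModulusLogDeriv,
    (weightedModulus_eventuallyEq hz).eq_of_nhds, Real.rpow_sub_one hN, Real.rpow_sub_one hw,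
    diskWeight_eq_ofReal]
  have hw' : ((1 - ‖z‖ ^ 2 : ℝ) : ℂ) ≠ 0 := by exact_mod_cast hw
  have hconj : conj (F z) ≠ 0 := by simpa using hFz
  have hNC : ((‖F z‖ : ℝ) : ℂ) ^ 2 = F z * conj (F z) := by
    rw [Complex.mul_conj, Complex.normSq_eq_norm_sq, Complex.ofReal_pow]
  push_cast at hw' ⊢
  rw [hNC]
  field_simp
  ring

lemma contDiffAt_conj_weightedModulusLogDeriv (hF : AnalyticAt ℂ F z) (hz : z ∈ ball (0 : ℂ) 1)
    (hFz : F z ≠ 0) : ContDiffAt ℝ 1 (fun y => conj (weightedModulusLogDeriv F p α y)) z := by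
  have hlog : ContDiffAt ℝ 1 (fun y => deriv F y / F y) z :=
    ((hF.deriv.div hF hFz).contDiffAt (n := 1)).restrict_scalars ℝ
  have hconj : ContDiff ℝ 1 (fun y : ℂ => conj y) := Complex.conjCLE.toContinuousLinearMap.contDiff
  exact hconj.contDiffAt.comp z ((contDiffAt_const.mul hlog).sub
    (contDiffAt_const.mul (hconj.contDiffAt.mul (contDiffAt_inv_diskWeight hz))))

-- The holomorphic part of `∂ log v` contributes nothing, so only the curvature of the weight shows.
lemma wirtingerDeriv_conj_weightedModulusLogDeriv (hF : AnalyticAt ℂ F z)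
    (hz : z ∈ ball (0 : ℂ) 1) (hFz : F z ≠ 0) :
    wirtingerDeriv (fun y => conj (weightedModulusLogDeriv F p α y)) z
      = -α / diskWeight z ^ 2 := by
  have hlog := hasWirtingerDerivAt_of_hasDerivAt
    (analyticAt_const.mul (hF.deriv.div hF hFz) : AnalyticAt ℂ
      (fun y => (p / 2 : ℂ) * (deriv F y / F y)) z).differentiableAt.hasDerivAt
  have hconj_id := (hasWirtingerDerivAt_of_hasDerivAt (hasDerivAt_id z)).conj_comp
  have hA := hlog.sub ((hconj_id.mul (hasWirtingerDerivAt_inv_diskWeight hz)).const_mul (α : ℂ))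
  have hw := diskWeight_ne_zero hz
  have hw_conj : conj (diskWeight z) = diskWeight z := by
    rw [diskWeight_eq_ofReal, Complex.conj_ofReal]
  refine hA.conj_comp.wirtingerDeriv_eq.trans ?_
  simp only [id_eq, map_one, map_sub, map_zero, map_mul, map_add, map_inv₀, map_div₀, map_pow,
    Complex.conj_conj, Complex.conj_ofReal, hw_conj]
  field_simp
  unfold diskWeight
  ring

end WeightedModulus

section Truncation

variable {F : ℂ → ℂ} {p α a : ℝ} {η : ℝ → ℝ}

lemma tsupport_comp_weightedModulus_subset {E : Type*} [Zero E] {g : ℂ → E}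
    (hF : DiffContOnCl ℂ F (ball 0 1)) (hp : 0 < p) (hα : 0 < α)
    (hg : ∀ z, weightedModulus F p α z < a → g z = 0) :
    tsupport g ⊆ {z | a ≤ weightedModulus F p α z} :=
  closure_minimal (fun z hz => not_lt.1 fun hlt => hz (hg z hlt))
    (isClosed_le continuous_const (continuous_weightedModulus hF hp hα))

lemma integrable_comp_weightedModulus_mul {q : ℂ → ℝ} (hF : DiffContOnCl ℂ F (ball 0 1))
    (hp : 0 < p) (hα : 0 < α) (ha : 0 < a) (hη : Continuous η) (hη0 : ∀ t < a, η t = 0)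
    (hq : ∀ z ∈ ball (0 : ℂ) 1 ∩ F ⁻¹' {0}ᶜ, ContinuousAt q z) :
    Integrable fun z => η (weightedModulus F p α z) * q z := by
  have hsupp := tsupport_comp_weightedModulus_subset hF hp hα
    (g := fun z => η (weightedModulus F p α z)) fun z hz => hη0 _ hz
  refine (continuous_mul_of_tsupport_subset (hη.comp (continuous_weightedModulus hF hp hα))
    (hsupp.trans fun z hz => ?_) hq).integrable_of_hasCompactSupport
      (HasCompactSupport.mul_right ((isCompact_le_weightedModulus hF hp hα ha).of_isClosed_subset
        (isClosed_tsupport _) hsupp))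
  exact mem_ball_inter_of_weightedModulus_pos hp hα (ha.trans_le hz)

lemma isTestFunctionOn_comp_weightedModulus (hF : DiffContOnCl ℂ F (ball 0 1)) (hp : 0 < p)
    (hα : 0 < α) (ha : 0 < a) (hη : ContDiff ℝ 1 η) (hη0 : ∀ t < a, η t = 0) :
    IsTestFunctionOn (fun z => (η (weightedModulus F p α z) : ℂ))
      (ball (0 : ℂ) 1 ∩ F ⁻¹' {0}ᶜ) := by
  have hsupp := tsupport_comp_weightedModulus_subset hF hp hα
    (a := a) (g := fun z => (η (weightedModulus F p α z) : ℂ)) fun z hz => by simp [hη0 _ hz]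
  have hsub : {z | a ≤ weightedModulus F p α z} ⊆ ball (0 : ℂ) 1 ∩ F ⁻¹' {0}ᶜ := fun z hz =>
    mem_ball_inter_of_weightedModulus_pos hp hα (ha.trans_le hz)
  refine ⟨contDiff_iff_contDiffAt.2 fun z => ?_, (isCompact_le_weightedModulus hF hp hα
    ha).of_isClosed_subset (isClosed_tsupport _) hsupp, hsupp.trans hsub⟩
  by_cases hz : z ∈ tsupport fun z => (η (weightedModulus F p α z) : ℂ)
  · obtain ⟨hball, hFz⟩ := hsub (hsupp hz)
    exact Complex.ofRealCLM.contDiff.contDiffAt.comp z (hη.contDiffAt.comp z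
      (contDiffAt_weightedModulus (analyticAt_of_diffContOnCl hF hball) hball hFz))
  · exact contDiffAt_const.congr_of_eventuallyEq (notMem_tsupport_iff_eventuallyEq.1 hz)

lemma deriv_eq_zero_of_lt (hη0 : ∀ t < a, η t = 0) {t : ℝ} (ht : t < a) : deriv η t = 0 := by
  have : η =ᶠ[𝓝 t] fun _ => 0 := by
    filter_upwards [isOpen_Iio.mem_nhds ht] with s hs using hη0 s hs
  rw [this.deriv_eq, deriv_const]

lemma wirtingerDeriv_truncation (hF : DiffContOnCl ℂ F (ball 0 1)) (hp : 0 < p) (hα : 0 < α)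
    (ha : 0 < a) (hη : ContDiff ℝ 1 η) (hη0 : ∀ t < a, η t = 0) (z : ℂ) :
    wirtingerDeriv (fun y => (η (weightedModulus F p α y) : ℂ)) z
      = (deriv η (weightedModulus F p α z) * weightedModulus F p α z : ℝ)
        * weightedModulusLogDeriv F p α z := by
  by_cases hz : z ∈ ball (0 : ℂ) 1 ∩ F ⁻¹' {0}ᶜ
  · exact wirtingerDeriv_comp_weightedModulus (hη.differentiable one_ne_zero)
      (analyticAt_of_diffContOnCl hF hz.1).differentiableAt hz.1 hz.2
  · have hlt : weightedModulus F p α z < a := not_le.1 fun h =>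
      hz (mem_ball_inter_of_weightedModulus_pos hp hα (ha.trans_le h))
    rw [wirtingerDeriv_eq_zero_of_notMem_tsupport fun h =>
      hz ((isTestFunctionOn_comp_weightedModulus hF hp hα ha hη hη0).tsupport_subset h),
      deriv_eq_zero_of_lt hη0 hlt]
    simp

lemma continuousAt_norm_weightedModulusLogDeriv (hF : DiffContOnCl ℂ F (ball 0 1)) {z : ℂ}
    (hz : z ∈ ball (0 : ℂ) 1 ∩ F ⁻¹' {0}ᶜ) :
    ContinuousAt (fun y => ‖weightedModulusLogDeriv F p α y‖) z := by
  simpa only [RCLike.norm_conj] using (contDiffAt_conj_weightedModulusLogDeriv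
    (analyticAt_of_diffContOnCl hF hz.1) hz.1 hz.2).continuousAt.norm

lemma continuousAt_inv_one_sub_norm_sq {z : ℂ} (hz : z ∈ ball (0 : ℂ) 1) :
    ContinuousAt (fun y : ℂ => (1 - ‖y‖ ^ 2)⁻¹) z :=
  ContinuousAt.inv₀ (by fun_prop) (one_sub_norm_sq_pos hz).ne'

lemma continuous_deriv_mul_id (hη : ContDiff ℝ 1 η) : Continuous fun t => deriv η t * t :=
  (hη.continuous_deriv le_rfl).mul continuous_id

lemma integral_mul_norm_sq_weightedModulusLogDeriv (hF : DiffContOnCl ℂ F (ball 0 1)) (hp : 0 < p)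
    (hα : 0 < α) (ha : 0 < a) (hη : ContDiff ℝ 1 η) (hη0 : ∀ t < a, η t = 0) :
    ∫ z, deriv η (weightedModulus F p α z) * weightedModulus F p α z
        * ‖weightedModulusLogDeriv F p α z‖ ^ 2
      = α * ∫ z, η (weightedModulus F p α z) / (1 - ‖z‖ ^ 2) ^ 2 := by
  set v := weightedModulus F p α
  set A := weightedModulusLogDeriv F p α
  have htest := isTestFunctionOn_comp_weightedModulus hF hp hα ha hη hη0
  have hA : ∀ z ∈ ball (0 : ℂ) 1 ∩ F ⁻¹' {0}ᶜ, ContDiffAt ℝ 1 (fun y => conj (A y)) z :=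
    fun z hz => contDiffAt_conj_weightedModulusLogDeriv (analyticAt_of_diffContOnCl hF hz.1)
      hz.1 hz.2
  have hderiv : ∀ z, wirtingerDeriv (fun y => (η (v y) : ℂ) * conj (A y)) z
      = ((deriv η (v z) * v z * ‖A z‖ ^ 2 - α * (η (v z) * ((1 - ‖z‖ ^ 2)⁻¹) ^ 2) : ℝ) : ℂ) :=
    fun z => by
      have hsq : A z * conj (A z) = ((‖A z‖ ^ 2 : ℝ) : ℂ) := by
        rw [Complex.mul_conj, Complex.normSq_eq_norm_sq]
      have hcurv : (η (v z) : ℂ) * wirtingerDeriv (fun y => conj (A y)) z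
          = -(α * (η (v z) * ((1 - ‖z‖ ^ 2)⁻¹) ^ 2) : ℝ) := by
        by_cases hz : z ∈ ball (0 : ℂ) 1 ∩ F ⁻¹' {0}ᶜ
        · rw [wirtingerDeriv_conj_weightedModulusLogDeriv (analyticAt_of_diffContOnCl hF hz.1)
            hz.1 hz.2, diskWeight_eq_ofReal, div_eq_mul_inv, ← inv_pow]
          push_cast
          ring
        · have h0 : η (v z) = 0 := by simpa using htest.eq_zero hz
          simp [h0]
      rw [htest.wirtingerDeriv_mul hA, hcurv, wirtingerDeriv_truncation hF hp hα ha hη hη0,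
        mul_assoc, hsq]
      push_cast
      ring
  have hzero : ∫ z, wirtingerDeriv (fun y => (η (v y) : ℂ) * conj (A y)) z = 0 :=
    integral_wirtingerDeriv_eq_zero (htest.mul hA).contDiff (htest.mul hA).hasCompactSupport
  simp only [hderiv, integral_complex_ofReal, Complex.ofReal_eq_zero] at hzero
  rw [integral_sub, integral_const_mul, sub_eq_zero] at hzero
  · simpa only [div_eq_mul_inv, inv_pow] using hzero
  · exact integrable_comp_weightedModulus_mul hF hp hα ha (continuous_deriv_mul_id hη)
      (fun t ht => by simp [deriv_eq_zero_of_lt hη0 ht])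
      fun z hz => (continuousAt_norm_weightedModulusLogDeriv hF hz).pow 2
  · exact (integrable_comp_weightedModulus_mul hF hp hα ha hη.continuous hη0
      fun z hz => (continuousAt_inv_one_sub_norm_sq hz.1).pow 2).const_mul _

theorem truncated_isoperimetric_inequality (hF : DiffContOnCl ℂ F (ball 0 1)) (hp : 0 < p)
    (hα : 0 < α) (ha : 0 < a) (hη : ContDiff ℝ 1 η) (hη0 : ∀ t < a, η t = 0)
    (hmono : Monotone η) :
    π * (∫ z, η (weightedModulus F p α z) ^ 2 / (1 - ‖z‖ ^ 2) ^ 2)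
        + (∫ z, η (weightedModulus F p α z) / (1 - ‖z‖ ^ 2) ^ 2) ^ 2
      ≤ α * (∫ z, η (weightedModulus F p α z) / (1 - ‖z‖ ^ 2) ^ 2)
        * ∫ z, deriv η (weightedModulus F p α z) * weightedModulus F p α z
          / (1 - ‖z‖ ^ 2) ^ 2 := by
  set v := weightedModulus F p α
  set A := weightedModulusLogDeriv F p α
  have htest := isTestFunctionOn_comp_weightedModulus hF hp hα ha hη hη0
  have hg : ∀ z, 0 ≤ deriv η (v z) * v z := fun z =>
    mul_nonneg hmono.deriv_nonneg (weightedModulus_nonneg z)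
  have hint : ∀ q : ℂ → ℝ, (∀ z ∈ ball (0 : ℂ) 1 ∩ F ⁻¹' {0}ᶜ, ContinuousAt q z) →
      Integrable fun z => deriv η (v z) * v z * q z := fun q hq =>
    integrable_comp_weightedModulus_mul hF hp hα ha (continuous_deriv_mul_id hη)
      (fun t ht => by simp [deriv_eq_zero_of_lt hη0 ht]) hq
  have hA : ∀ z ∈ ball (0 : ℂ) 1 ∩ F ⁻¹' {0}ᶜ, ContinuousAt (fun y => ‖A y‖) z := fun z hz =>
    continuousAt_norm_weightedModulusLogDeriv hF hz
  have hw : ∀ z ∈ ball (0 : ℂ) 1 ∩ F ⁻¹' {0}ᶜ, ContinuousAt (fun y : ℂ => |(1 - ‖y‖ ^ 2)⁻¹|) z :=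
    fun z hz => (continuousAt_inv_one_sub_norm_sq hz.1).abs
  calc _ ≤ (∫ z, ‖wirtingerDeriv (fun z => (η (v z) : ℂ)) z / diskWeight z‖) ^ 2 :=
        hyperbolic_isoperimetric_inequality
          ⟨htest.contDiff, htest.hasCompactSupport, htest.tsupport_subset.trans inter_subset_left⟩
    _ = (∫ z, deriv η (v z) * v z * (‖A z‖ * |(1 - ‖z‖ ^ 2)⁻¹|)) ^ 2 := by
        congr 2 with z
        rw [wirtingerDeriv_truncation hF hp hα ha hη hη0, diskWeight_eq_ofReal, norm_div, norm_mul,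
          Complex.norm_real, Complex.norm_real, Real.norm_of_nonneg (hg z), Real.norm_eq_abs,
          abs_inv, div_eq_mul_inv, mul_assoc]
    _ ≤ (∫ z, deriv η (v z) * v z * ‖A z‖ ^ 2)
          * ∫ z, deriv η (v z) * v z * |(1 - ‖z‖ ^ 2)⁻¹| ^ 2 :=
        sq_integral_mul_mul_le hg (hint _ fun z hz => (hA z hz).pow 2)
          (hint _ fun z hz => (hA z hz).mul (hw z hz)) (hint _ fun z hz => (hw z hz).pow 2)
    _ = _ := by
        rw [integral_mul_norm_sq_weightedModulusLogDeriv hF hp hα ha hη hη0]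
        simp only [sq_abs, inv_pow, div_eq_mul_inv, v]

end Truncation

/-! ### Level sets and the hyperbolic measure -/

/-- The hyperbolic area measure of the unit disk, normalised to have density
`1 / (π (1 - |z|²)²)`. -/
noncomputable def hyperbolicMeasure : Measure ℂ :=
  (volume.restrict (ball (0 : ℂ) 1)).withDensity
    fun z => ENNReal.ofReal (1 / (π * (1 - ‖z‖ ^ 2) ^ 2))

/-- The distribution function of `weightedModulus F p α` for the hyperbolic measure. -/
noncomputable def levelMeasure (F : ℂ → ℂ) (p α t : ℝ) : ℝ :=
  hyperbolicMeasure.real {z | t < weightedModulus F p α z}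

lemma measurable_hyperbolicDensity :
    Measurable fun z : ℂ => ENNReal.ofReal (1 / (π * (1 - ‖z‖ ^ 2) ^ 2)) := by
  fun_prop

lemma integrable_hyperbolicMeasure_iff {h : ℂ → ℝ} :
    Integrable h hyperbolicMeasure
      ↔ IntegrableOn (fun z => (1 / (π * (1 - ‖z‖ ^ 2) ^ 2)) * h z) (ball 0 1) := by
  rw [hyperbolicMeasure, integrable_withDensity_iff_integrable_smul' measurable_hyperbolicDensity
    (by simp), IntegrableOn]
  refine integrable_congr (.of_forall fun z => ?_)
  simp only [smul_eq_mul]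
  rw [ENNReal.toReal_ofReal (by positivity)]

lemma integral_div_eq_pi_mul_integral_hyperbolicMeasure {h : ℂ → ℝ}
    (h0 : ∀ z ∉ ball (0 : ℂ) 1, h z = 0) :
    ∫ z, h z / (1 - ‖z‖ ^ 2) ^ 2 = π * ∫ z, h z ∂hyperbolicMeasure := by
  rw [hyperbolicMeasure, integral_withDensity_eq_integral_toReal_smul measurable_hyperbolicDensity
    (by simp), ← integral_const_mul, setIntegral_eq_integral_of_forall_compl_eq_zero]
  · refine integral_congr_ae (.of_forall fun z => ?_)
    simp only [smul_eq_mul]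
    rw [ENNReal.toReal_ofReal (by positivity), ← mul_assoc, one_div, mul_inv,
      mul_inv_cancel_left₀ Real.pi_ne_zero, div_eq_inv_mul]
  · intro z hz
    simp [h0 z hz]

section LevelMeasure

variable {F : ℂ → ℂ} {p α a b s t : ℝ}

lemma integrable_comp_weightedModulus {g : ℝ → ℝ} (hF : DiffContOnCl ℂ F (ball 0 1)) (hp : 0 < p)
    (hα : 0 < α) (ha : 0 < a) (hg : Continuous g) (hg0 : ∀ t < a, g t = 0) :
    Integrable (fun z => g (weightedModulus F p α z)) hyperbolicMeasure := by
  refine integrable_hyperbolicMeasure_iff.2 (Integrable.integrableOn ?_)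
  refine (integrable_comp_weightedModulus_mul hF hp hα ha hg hg0 (q := fun z => 1 /
    (π * (1 - ‖z‖ ^ 2) ^ 2)) fun z hz => ?_).congr (.of_forall fun z => mul_comm _ _)
  have := one_sub_norm_sq_pos hz.1
  exact ContinuousAt.div (by fun_prop) (by fun_prop) (by positivity)

lemma hyperbolicMeasure_levelSet_lt_top (hF : DiffContOnCl ℂ F (ball 0 1)) (hp : 0 < p)
    (hα : 0 < α) (ht : 0 < t) : hyperbolicMeasure {z | t < weightedModulus F p α z} < ⊤ := by
  have hint : Integrable (fun z => max (weightedModulus F p α z - t / 2) 0) hyperbolicMeasure :=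
    integrable_comp_weightedModulus hF hp hα (half_pos ht)
      (g := fun s => max (s - t / 2) 0) (by fun_prop) fun s hs => max_eq_right (by linarith)
  refine (measure_mono fun z (hz : t < _) => ?_).trans_lt (hint.measure_ge_lt_top (half_pos ht))
  exact le_max_of_le_left (by linarith : t / 2 ≤ weightedModulus F p α z - t / 2)

lemma levelMeasure_nonneg : 0 ≤ levelMeasure F p α t := measureReal_nonneg

lemma levelMeasure_anti (hF : DiffContOnCl ℂ F (ball 0 1)) (hp : 0 < p) (hα : 0 < α)
    (hs : 0 < s) (hst : s ≤ t) : levelMeasure F p α t ≤ levelMeasure F p α s :=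
  measureReal_mono (fun _ hz => hst.trans_lt hz)
    (hyperbolicMeasure_levelSet_lt_top hF hp hα hs).ne

lemma exists_logarithmic_cutoff {a' b' : ℝ} (ha : 0 < a) (haa' : a < a') (hab' : a' < b')
    (hb'b : b' < b) :
    ∃ η : ℝ → ℝ, ContDiff ℝ 1 η ∧ Monotone η ∧ (∀ t ≤ a, η t = 0) ∧
      (∀ t, b < t → Real.log (b' / a') ≤ η t) ∧
      ∀ t, deriv η t * t ≤ (Ioc a b).indicator (fun _ => 1) t := by
  obtain ⟨τ, hτ_zero, hτ_one, hτ_mem⟩ := exists_continuous_zero_one_of_isClosed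
    (isOpen_Ioo (a := a) (b := b)).isClosed_compl (isClosed_Icc (a := a') (b := b'))
    (disjoint_compl_left_iff_subset.2 (Icc_subset_Ioo haa' hb'b))
  set g : ℝ → ℝ := fun t => τ t / max a t
  have hg : Continuous g := τ.continuous.div (by fun_prop) fun t => (lt_max_of_lt_left ha).ne'
  have hg_nonneg : ∀ t, 0 ≤ g t := fun t =>
    div_nonneg (hτ_mem t).1 (ha.le.trans (le_max_left _ _))
  have hg_int : ∀ s t, IntervalIntegrable g volume s t := fun _ _ => hg.intervalIntegrable _ _
  have hderiv : ∀ t, HasDerivAt (fun t => ∫ s in a..t, g s) (g t) t := fun t =>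
    intervalIntegral.integral_hasDerivAt_right (hg_int _ _)
      (hg.stronglyMeasurableAtFilter _ _) hg.continuousAt
  have hderiv_eq : deriv (fun t => ∫ s in a..t, g s) = g := funext fun t => (hderiv t).deriv
  have hdiff : Differentiable ℝ fun t => ∫ s in a..t, g s := fun t => (hderiv t).differentiableAt
  refine ⟨fun t => ∫ s in a..t, g s, contDiff_one_iff_deriv.2 ⟨hdiff, by rwa [hderiv_eq]⟩,
    monotone_of_deriv_nonneg hdiff (by rwa [hderiv_eq]), fun t ht => ?_, fun t ht => ?_,
    fun t => ?_⟩
  · refine intervalIntegral.integral_zero_ae (.of_forall fun s hs => ?_)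
    rw [uIoc_of_ge ht] at hs
    simp [g, hτ_zero fun h : s ∈ Ioo a b => hs.2.not_gt h.1]
  · calc Real.log (b' / a') = ∫ s in a'..b', g s := by
          rw [← integral_inv_of_pos (ha.trans haa') (ha.trans (haa'.trans hab'))]
          refine intervalIntegral.integral_congr fun s hs => ?_
          rw [uIcc_of_le hab'.le] at hs
          simp [g, hτ_one hs, max_eq_right (haa'.le.trans hs.1)]
      _ ≤ ∫ s in a..t, g s := intervalIntegral.integral_mono_interval haa'.le hab'.le
          (hb'b.trans ht).le (.of_forall hg_nonneg) (hg_int _ _)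
  · rw [hderiv_eq]
    by_cases ht : t ∈ Ioo a b
    · have ht0 : 0 < t := ha.trans ht.1
      rw [indicator_of_mem (Ioo_subset_Ioc_self ht)]
      simpa [g, max_eq_right ht.1.le, ht0.ne'] using (hτ_mem t).2
    · simpa [g, hτ_zero ht] using indicator_nonneg (fun _ _ => zero_le_one) t

lemma integral_indicator_weightedModulus (hF : DiffContOnCl ℂ F (ball 0 1)) (hp : 0 < p)
    (hα : 0 < α) {S : Set ℝ} (hS : MeasurableSet S) :
    ∫ z, S.indicator (fun _ => (1 : ℝ)) (weightedModulus F p α z) ∂hyperbolicMeasure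
      = hyperbolicMeasure.real (weightedModulus F p α ⁻¹' S) :=
  integral_indicator_one ((continuous_weightedModulus hF hp hα).measurable hS)

lemma integrable_indicator_weightedModulus (hF : DiffContOnCl ℂ F (ball 0 1)) (hp : 0 < p)
    (hα : 0 < α) (ha : 0 < a) {S : Set ℝ} (hS : MeasurableSet S) (haS : S ⊆ Ioi a) :
    Integrable (fun z => S.indicator (fun _ => (1 : ℝ)) (weightedModulus F p α z))
      hyperbolicMeasure := by
  have hmeas := (continuous_weightedModulus hF hp hα).measurable hS
  have hfin : hyperbolicMeasure (weightedModulus F p α ⁻¹' S) < ⊤ :=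
    (measure_mono (preimage_mono haS)).trans_lt (hyperbolicMeasure_levelSet_lt_top hF hp hα ha)
  exact (integrable_indicator_iff hmeas).2 (integrableOn_const (C := (1 : ℝ)) hfin.ne)

lemma sq_integral_comp_weightedModulus_le {g : ℝ → ℝ} (hF : DiffContOnCl ℂ F (ball 0 1))
    (hp : 0 < p) (hα : 0 < α) (ha : 0 < a) (hg : Continuous g) (hg0 : ∀ t ≤ a, g t = 0) :
    (∫ z, g (weightedModulus F p α z) ∂hyperbolicMeasure) ^ 2
      ≤ (∫ z, g (weightedModulus F p α z) ^ 2 ∂hyperbolicMeasure) * levelMeasure F p α a := by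
  set χ : ℝ → ℝ := (Ioi a).indicator fun _ => 1
  have hχ : ∀ c : ℝ → ℝ, c 0 = 0 → ∀ t, χ t * c (g t) = c (g t) := fun c hc t => by
    by_cases ht : t ∈ Ioi a
    · simp [χ, ht]
    · simp [hg0 t (not_lt.1 ht), hc]
  have hχ_one : ∀ t, χ t * (g t * 1) = g t := fun t => by simpa using hχ id rfl t
  have hχ_sq : ∀ t, χ t * g t ^ 2 = g t ^ 2 := hχ (· ^ 2) (by simp)
  have hint := integrable_comp_weightedModulus hF hp hα ha hg fun t ht => hg0 t ht.le
  have hint_sq : Integrable (fun z => g (weightedModulus F p α z) ^ 2) hyperbolicMeasure :=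
    integrable_comp_weightedModulus hF hp hα ha (g := fun t => g t ^ 2) (by fun_prop)
      fun t ht => by simp [hg0 t ht.le]
  have hint_χ := integrable_indicator_weightedModulus hF hp hα ha measurableSet_Ioi subset_rfl
  have := sq_integral_mul_mul_le (μ := hyperbolicMeasure)
    (g := fun z => χ (weightedModulus F p α z)) (f := fun z => g (weightedModulus F p α z))
    (h := fun _ => 1) (fun z => indicator_nonneg (fun _ _ => zero_le_one) _)
    (by simpa only [hχ_sq] using hint_sq) (by simpa only [hχ_one] using hint)
    (by simpa only [one_pow, mul_one] using hint_χ)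
  simp only [hχ_sq, hχ_one] at this
  simp only [one_pow, mul_one] at this
  rwa [integral_indicator_weightedModulus hF hp hα measurableSet_Ioi] at this

lemma cutoff_integral_inequality {η : ℝ → ℝ} (hF : DiffContOnCl ℂ F (ball 0 1)) (hp : 0 < p)
    (hα : 0 < α) (ha : 0 < a) (hη : ContDiff ℝ 1 η) (hη0 : ∀ t < a, η t = 0) (hmono : Monotone η) :
    (∫ z, η (weightedModulus F p α z) ^ 2 ∂hyperbolicMeasure)
        + (∫ z, η (weightedModulus F p α z) ∂hyperbolicMeasure) ^ 2
      ≤ α * (∫ z, η (weightedModulus F p α z) ∂hyperbolicMeasure)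
        * ∫ z, deriv η (weightedModulus F p α z) * weightedModulus F p α z
          ∂hyperbolicMeasure := by
  have hiso := truncated_isoperimetric_inequality hF hp hα ha hη hη0 hmono
  have hoff : ∀ z ∉ ball (0 : ℂ) 1, weightedModulus F p α z = 0 := fun z hz =>
    weightedModulus_eq_zero hα hz
  rw [integral_div_eq_pi_mul_integral_hyperbolicMeasure fun z hz => by simp [hoff z hz, hη0 0 ha],
    integral_div_eq_pi_mul_integral_hyperbolicMeasure fun z hz => by simp [hoff z hz, hη0 0 ha],
    integral_div_eq_pi_mul_integral_hyperbolicMeasure fun z hz => by simp [hoff z hz]] at hiso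
  refine le_of_mul_le_mul_left ?_ (pow_pos Real.pi_pos 2)
  linarith

lemma mul_levelMeasure_le_integral {g : ℝ → ℝ} {c : ℝ} (hF : DiffContOnCl ℂ F (ball 0 1))
    (hp : 0 < p) (hα : 0 < α) (ha : 0 < a) (hab : a < b) (hg : Continuous g)
    (hg0 : ∀ t < a, g t = 0) (hg_nonneg : ∀ t, 0 ≤ g t) (hgc : ∀ t, b < t → c ≤ g t) :
    c * levelMeasure F p α b ≤ ∫ z, g (weightedModulus F p α z) ∂hyperbolicMeasure := by
  calc c * levelMeasure F p α b
      = ∫ z, c * (Ioi b).indicator (fun _ => (1 : ℝ)) (weightedModulus F p α z)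
          ∂hyperbolicMeasure := by
        rw [integral_const_mul, integral_indicator_weightedModulus hF hp hα measurableSet_Ioi]
        rfl
    _ ≤ _ := by
        refine integral_mono ((integrable_indicator_weightedModulus hF hp hα (ha.trans hab)
          measurableSet_Ioi subset_rfl).const_mul _)
          (integrable_comp_weightedModulus hF hp hα ha hg hg0) fun z => ?_
        by_cases hz : weightedModulus F p α z ∈ Ioi b
        · simpa [hz] using hgc _ hz
        · simpa [hz] using hg_nonneg _

lemma integral_le_levelMeasure_sub {g : ℝ → ℝ} (hF : DiffContOnCl ℂ F (ball 0 1))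
    (hp : 0 < p) (hα : 0 < α) (ha : 0 < a) (hab : a < b) (hg : Continuous g)
    (hg0 : ∀ t < a, g t = 0) (hg_le : ∀ t, g t ≤ (Ioc a b).indicator (fun _ => 1) t) :
    ∫ z, g (weightedModulus F p α z) ∂hyperbolicMeasure
      ≤ levelMeasure F p α a - levelMeasure F p α b := by
  calc _ ≤ ∫ z, (Ioc a b).indicator (fun _ => (1 : ℝ)) (weightedModulus F p α z)
          ∂hyperbolicMeasure :=
        integral_mono (integrable_comp_weightedModulus hF hp hα ha hg hg0)
          (integrable_indicator_weightedModulus hF hp hα ha measurableSet_Ioc fun t ht => ht.1)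
          fun z => hg_le _
    _ = hyperbolicMeasure.real
          (weightedModulus F p α ⁻¹' Ioi a \ weightedModulus F p α ⁻¹' Ioi b) := by
        rw [integral_indicator_weightedModulus hF hp hα measurableSet_Ioc, ← Ioi_sdiff_Ioi,
          preimage_sdiff]
    _ = _ := measureReal_sdiff (preimage_mono (Ioi_subset_Ioi hab.le))
        ((continuous_weightedModulus hF hp hα).measurable measurableSet_Ioi)
        (hyperbolicMeasure_levelSet_lt_top hF hp hα ha).ne

lemma log_mul_levelMeasure_le_of_mem_Ioo {a' b' : ℝ} (hF : DiffContOnCl ℂ F (ball 0 1))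
    (hp : 0 < p) (hα : 0 < α) (ha : 0 < a) (haa' : a < a') (hab' : a' < b') (hb'b : b' < b) :
    Real.log (b' / a') * levelMeasure F p α b * (1 + levelMeasure F p α a)
      ≤ α * levelMeasure F p α a * (levelMeasure F p α a - levelMeasure F p α b) := by
  obtain ⟨η, hη, hmono, hη0, hη_log, hη_deriv⟩ := exists_logarithmic_cutoff ha haa' hab' hb'b
  have hab : a < b := haa'.trans (hab'.trans hb'b)
  set A := levelMeasure F p α a
  set B := levelMeasure F p α b
  set S := ∫ z, η (weightedModulus F p α z) ∂hyperbolicMeasure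
  set T := ∫ z, deriv η (weightedModulus F p α z) * weightedModulus F p α z ∂hyperbolicMeasure
  have hBA : B ≤ A := levelMeasure_anti hF hp hα ha hab.le
  have hη_nonneg : ∀ t, 0 ≤ η t := fun t => (hη0 _ (min_le_right t a)).symm.le.trans
    (hmono (min_le_left t a))
  have hS_lower : Real.log (b' / a') * B ≤ S := mul_levelMeasure_le_integral hF hp hα ha hab
    hη.continuous (fun t ht => hη0 t ht.le) hη_nonneg hη_log
  have hT_upper : T ≤ A - B := integral_le_levelMeasure_sub hF hp hα ha hab
    (g := fun t => deriv η t * t) (continuous_deriv_mul_id hη)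
    (fun t ht => by simp [deriv_eq_zero_of_lt (fun s hs => hη0 s hs.le) ht]) hη_deriv
  have hST := cutoff_integral_inequality hF hp hα ha hη (fun t ht => hη0 t ht.le) hmono
  have hCS := sq_integral_comp_weightedModulus_le hF hp hα ha hη.continuous hη0
  have hA : 0 ≤ A := levelMeasure_nonneg
  have hS : 0 ≤ S := integral_nonneg fun z => hη_nonneg _
  rcases hS.eq_or_lt with hS0 | hS0
  · exact (mul_nonpos_of_nonpos_of_nonneg (hS_lower.trans hS0.ge) (by positivity)).trans
      (mul_nonneg (by positivity) (sub_nonneg.2 hBA))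
  · refine le_of_mul_le_mul_left ?_ hS0
    calc S * (Real.log (b' / a') * B * (1 + A)) ≤ S * (S * (1 + A)) := by gcongr
      _ ≤ A * ((∫ z, η (weightedModulus F p α z) ^ 2 ∂hyperbolicMeasure) + S ^ 2) := by linarith
      _ ≤ A * (α * S * T) := mul_le_mul_of_nonneg_left hST hA
      _ ≤ A * (α * S * (A - B)) := by gcongr
      _ = S * (α * A * (A - B)) := by ring

theorem log_mul_levelMeasure_le (hF : DiffContOnCl ℂ F (ball 0 1)) (hp : 0 < p) (hα : 0 < α)
    (ha : 0 < a) (hab : a < b) :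
    Real.log (b / a) * levelMeasure F p α b * (1 + levelMeasure F p α a)
      ≤ α * levelMeasure F p α a * (levelMeasure F p α a - levelMeasure F p α b) := by
  have hb : 0 < b := ha.trans hab
  have hcont : ContinuousAt (fun r : ℝ => Real.log (b / r / (a * r))) 1 :=
    ContinuousAt.log (ContinuousAt.div (ContinuousAt.div continuousAt_const continuousAt_id
      one_ne_zero) (by fun_prop) (by simpa using ha.ne')) (by simp [ha.ne', hb.ne'])
  have hlim := ((hcont.tendsto.mono_left (nhdsWithin_le_nhds (s := Ioi 1))).mul_const
    (levelMeasure F p α b)).mul_const (1 + levelMeasure F p α a)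
  simp only [div_one, mul_one] at hlim
  refine le_of_tendsto hlim ?_
  have hsep : ∀ᶠ r in 𝓝[>] (1 : ℝ), a * r < b / r :=
    nhdsWithin_le_nhds (ContinuousAt.eventually_lt (by fun_prop)
      (ContinuousAt.div continuousAt_const continuousAt_id one_ne_zero) (by simpa using hab))
  filter_upwards [hsep, self_mem_nhdsWithin] with r hr hr1
  exact log_mul_levelMeasure_le_of_mem_Ioo hF hp hα ha (lt_mul_of_one_lt_right ha hr1) hr
    (div_lt_self hb hr1)

lemma antitoneOn_of_sub_le_mul_sq {G : ℝ → ℝ} {s : Set ℝ} [s.OrdConnected] {D : ℝ}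
    (hG : ∀ x ∈ s, ∀ y ∈ s, x ≤ y → G y - G x ≤ D * (y - x) ^ 2) : AntitoneOn G s := by
  intro x hx y hy hxy
  have htelescope : ∀ h : ℝ, 0 ≤ h → ∀ n : ℕ, x + n * h ≤ y →
      G (x + n * h) - G x ≤ n * (D * h ^ 2) := by
    intro h hh n
    induction n with
    | zero => simp
    | succ n ih =>
      intro hn
      push_cast at hn ⊢
      have hnh : 0 ≤ n * h := by positivity
      have hstep := hG (x + n * h) (s.Icc_subset hx hy ⟨by linarith, by linarith⟩)
        (x + (n + 1) * h) (s.Icc_subset hx hy ⟨by linarith, hn⟩) (by linarith)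
      have := ih (by linarith)
      rw [show x + (n + 1) * h - (x + n * h) = h by ring] at hstep
      linarith
  have hlim : Tendsto (fun n : ℕ => D * (y - x) ^ 2 / (n : ℝ)) atTop (𝓝 0) :=
    tendsto_const_div_atTop_nhds_zero_nat _
  refine sub_nonpos.1 (ge_of_tendsto hlim ?_)
  filter_upwards [eventually_gt_atTop 0] with n hn
  have hn' : (n : ℝ) ≠ 0 := by positivity
  have := htelescope ((y - x) / n) (by have := sub_nonneg.2 hxy; positivity) n
    (by rw [mul_div_cancel₀ _ hn']; linarith)
  rw [mul_div_cancel₀ _ hn', add_sub_cancel] at this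
  calc _ ≤ _ := this
    _ = _ := by field_simp

lemma sub_sub_div_le_mul_sq {A B Y C : ℝ} (hA : 0 < A) (hY : 0 ≤ Y) (hC : 1 + A⁻¹ ≤ C)
    (h : Y * B * (1 + A) ≤ A * (A - B)) : Y - (A - B) / (1 + A) ≤ C * Y ^ 2 := by
  have h1A : 0 < 1 + A := by linarith
  set δ := (A - B) / (1 + A)
  have hδ : δ * (1 + A) = A - B := div_mul_cancel₀ _ h1A.ne'
  have hstep : Y ≤ δ * (1 + Y * (1 + A⁻¹)) := by
    refine le_of_mul_le_mul_left (a := A * (1 + A)) ?_ (by positivity)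
    have hexp : A * (1 + A) * (δ * (1 + Y * (1 + A⁻¹))) = δ * (1 + A) * (A + Y * (1 + A)) := by
      field_simp
      ring
    rw [hexp, hδ]
    linarith
  have hC_pos : 0 < C := (by positivity : 0 < 1 + A⁻¹).trans_le hC
  rcases le_or_gt Y δ with hYδ | hYδ
  · exact (sub_nonpos.2 hYδ).trans (by positivity)
  · calc Y - δ ≤ δ * (Y * (1 + A⁻¹)) := by linarith
      _ ≤ Y * (Y * C) := by gcongr
      _ = C * Y ^ 2 := by ring

lemma log_one_add_levelMeasure_add_sub_le {x y : ℝ} (hF : DiffContOnCl ℂ F (ball 0 1))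
    (hp : 0 < p) (hα : 0 < α) (hxy : x < y) (hyt : y ≤ Real.log t) (ht0 : 0 < t)
    (ht : 0 < levelMeasure F p α t) :
    Real.log (1 + levelMeasure F p α (Real.exp y)) + y / α
        - (Real.log (1 + levelMeasure F p α (Real.exp x)) + x / α)
      ≤ (1 + (levelMeasure F p α t)⁻¹) / α ^ 2 * (y - x) ^ 2 := by
  have hm_ge : ∀ r ≤ Real.log t, levelMeasure F p α t ≤ levelMeasure F p α (Real.exp r) :=
    fun r hr => levelMeasure_anti hF hp hα (Real.exp_pos r) ((Real.le_log_iff_exp_le ht0).1 hr)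
  have hlevel := log_mul_levelMeasure_le hF hp hα (Real.exp_pos x) (Real.exp_lt_exp.2 hxy)
  rw [← Real.exp_sub, Real.log_exp] at hlevel
  have hAt := hm_ge x (hxy.le.trans hyt)
  have hA : 0 < levelMeasure F p α (Real.exp x) := ht.trans_le hAt
  have hB : 0 < levelMeasure F p α (Real.exp y) := ht.trans_le (hm_ge y hyt)
  set A := levelMeasure F p α (Real.exp x)
  set B := levelMeasure F p α (Real.exp y)
  have hsq := sub_sub_div_le_mul_sq (B := B) (Y := (y - x) / α) hA
    (div_nonneg (sub_nonneg.2 hxy.le) hα.le) (add_le_add_right (inv_anti₀ ht hAt) 1) (by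
      rw [div_mul_eq_mul_div, div_mul_eq_mul_div, div_le_iff₀ hα]
      linarith)
  have hlog : (A - B) / (1 + A) ≤ Real.log (1 + A) - Real.log (1 + B) := by
    rw [← Real.log_div (by positivity) (by positivity)]
    refine le_trans (le_of_eq ?_) (Real.one_sub_inv_le_log_of_pos (by positivity))
    field_simp
    ring
  calc _ ≤ (y - x) / α - (A - B) / (1 + A) := by
        rw [sub_div]
        linarith
    _ ≤ (1 + (levelMeasure F p α t)⁻¹) * ((y - x) / α) ^ 2 := hsq
    _ = _ := by ring

-- In the variable `x = log t` the level set inequality bounds the increments of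
-- `log (1 + μ) + x / α` from above up to second order, so this function is nonincreasing.
theorem one_add_levelMeasure_mul_rpow_le (hF : DiffContOnCl ℂ F (ball 0 1)) (hp : 0 < p)
    (hα : 0 < α) (hs : 0 < s) (hst : s ≤ t) (ht : 0 < levelMeasure F p α t) :
    (1 + levelMeasure F p α t) * t ^ (1 / α) ≤ (1 + levelMeasure F p α s) * s ^ (1 / α) := by
  have ht0 : 0 < t := hs.trans_le hst
  set G : ℝ → ℝ := fun x => Real.log (1 + levelMeasure F p α (Real.exp x)) + x / α
  have hG : AntitoneOn G (Iic (Real.log t)) := by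
    refine antitoneOn_of_sub_le_mul_sq (D := (1 + (levelMeasure F p α t)⁻¹) / α ^ 2)
      fun x _ y hy hxy => ?_
    rcases hxy.eq_or_lt with rfl | hxy
    · simp
    · exact log_one_add_levelMeasure_add_sub_le hF hp hα hxy hy ht0 ht
  have hexpG : ∀ r, 0 < r →
      Real.exp (G (Real.log r)) = (1 + levelMeasure F p α r) * r ^ (1 / α) := fun r hr => by
    have : 0 < 1 + levelMeasure F p α r :=
      add_pos_of_pos_of_nonneg one_pos levelMeasure_nonneg
    simp only [G]
    rw [Real.exp_log hr, Real.exp_add, Real.exp_log this, Real.rpow_def_of_pos hr, mul_one_div]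
  rw [← hexpG t ht0, ← hexpG s hs]
  exact Real.exp_le_exp.2 (hG (Real.log_le_log hs hst) self_mem_Iic (Real.log_le_log hs hst))

end LevelMeasure

/-! ### The Bergman measure in polar coordinates -/

lemma lintegral_eq_lintegral_circleMap {u : ℂ → ENNReal} (hu : Measurable u) :
    ∫⁻ z, u z = ∫⁻ r in Ioi (0 : ℝ), ENNReal.ofReal r *
      ∫⁻ θ in Ioo (-π) π, u (circleMap 0 r θ) := by
  have hcirc : ∀ x : ℝ × ℝ, Complex.polarCoord.symm x = circleMap 0 x.1 x.2 := fun x => by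
    simp [Complex.polarCoord_symm_apply, circleMap, Complex.exp_mul_I]
  have hcont : Continuous fun x : ℝ × ℝ => circleMap 0 x.1 x.2 := by
    unfold circleMap
    fun_prop
  rw [← Complex.lintegral_comp_polarCoord_symm, polarCoord_target, Measure.volume_eq_prod,
    ← Measure.prod_restrict]
  simp only [hcirc, smul_eq_mul]
  rw [lintegral_prod _ (by
    have := hu.comp hcont.measurable
    exact (Measurable.mul (by fun_prop) this).aemeasurable)]
  refine lintegral_congr fun r => ?_
  have hur : Measurable fun θ => u (circleMap 0 r θ) :=
    hu.comp (continuous_circleMap 0 r).measurable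
  rw [← lintegral_const_mul _ hur]

lemma circleMap_zero_mem_ball {r R : ℝ} (hr : 0 ≤ r) (hrR : r < R) (θ : ℝ) :
    circleMap 0 r θ ∈ ball (0 : ℂ) R := by
  rwa [mem_ball_zero_iff, norm_circleMap_zero, abs_of_nonneg hr]

lemma lintegral_circleMap_eq_circleAverage {φ : ℂ → ℝ} {r : ℝ}
    (hφ : CircleIntegrable φ 0 r) (h0 : ∀ z, 0 ≤ φ z) :
    ∫⁻ θ in Ioo (-π) π, ENNReal.ofReal (φ (circleMap 0 r θ))
      = ENNReal.ofReal (2 * π * Real.circleAverage φ 0 r) := by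
  have hper : Function.Periodic (fun θ => φ (circleMap 0 r θ)) (2 * π) :=
    (periodic_circleMap 0 r).comp φ
  have hshift := hper.intervalIntegral_add_eq 0 (-π)
  rw [zero_add, show -π + 2 * π = π by ring] at hshift
  have hint : IntervalIntegrable (fun θ => φ (circleMap 0 r θ)) volume (-π) π :=
    hper.intervalIntegrable₀ Real.two_pi_pos.ne' hφ _ _
  rw [Real.circleAverage, hshift, smul_eq_mul, mul_inv_cancel_left₀ Real.two_pi_pos.ne',
    intervalIntegral.integral_of_le (by linarith [Real.pi_pos]), integral_Ioc_eq_integral_Ioo,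
    ofReal_integral_eq_lintegral_ofReal]
  · exact ((intervalIntegrable_iff_integrableOn_Ioo_of_le (by linarith [Real.pi_pos])).1 hint)
  · exact .of_forall fun θ => h0 _

lemma circleIntegrable_of_continuousOn_ball {E : Type*} [NormedAddCommGroup E] {φ : ℂ → E} {r : ℝ}
    (hφ : ContinuousOn φ (ball 0 1)) (hr : r ∈ Ico 0 1) : CircleIntegrable φ 0 r :=
  (hφ.mono fun z hz => by
    rw [mem_sphere_zero_iff_norm] at hz
    simpa [hz] using hr.2).circleIntegrable hr.1

lemma lintegral_bergmanMeasure (γ : ℝ) (h : ℂ → ENNReal) :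
    ∫⁻ z, h z ∂bergmanMeasure γ = ∫⁻ z in ball (0 : ℂ) 1,
      ENNReal.ofReal ((γ - 1) / π * (1 - ‖z‖ ^ 2) ^ (γ - 2)) * h z :=
  lintegral_withDensity_eq_lintegral_mul_non_measurable _ (by fun_prop) (by simp) _

lemma lintegral_bergmanMeasure_eq_lintegral_radius {φ : ℂ → ℝ} {γ : ℝ}
    (hφ : ContinuousOn φ (ball 0 1)) (h0 : ∀ z, 0 ≤ φ z) (hγ : 1 < γ) :
    ∫⁻ z, ENNReal.ofReal (φ z) ∂bergmanMeasure γ = ∫⁻ r in Ioo (0 : ℝ) 1,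
      ENNReal.ofReal (2 * (γ - 1) * (r * (1 - r ^ 2) ^ (γ - 2))) *
        ENNReal.ofReal (Real.circleAverage φ 0 r) := by
  have hγ' : 0 < γ - 1 := sub_pos.2 hγ
  have hφ_meas : Measurable ((ball 0 1).indicator fun z => ENNReal.ofReal (φ z)) := by
    classical
    rw [← piecewise_eq_indicator]
    exact (ENNReal.continuous_ofReal.comp_continuousOn hφ).measurable_piecewise
      continuousOn_const measurableSet_ball
  set d : ℝ → ENNReal := fun r => ENNReal.ofReal ((γ - 1) / π * (1 - r ^ 2) ^ (γ - 2))
  have hd : Measurable d := by fun_prop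
  calc _ = ∫⁻ z, d ‖z‖ * (ball 0 1).indicator (fun z => ENNReal.ofReal (φ z)) z := by
        rw [lintegral_bergmanMeasure, ← lintegral_indicator measurableSet_ball]
        exact lintegral_congr fun z => indicator_mul_right _ _ _
    _ = _ := by
        rw [lintegral_eq_lintegral_circleMap (by fun_prop),
          show Ioo (0 : ℝ) 1 = Iio 1 ∩ Ioi 0 from inter_comm _ _,
          ← setLIntegral_indicator measurableSet_Iio]
        refine setLIntegral_congr_fun measurableSet_Ioi fun r (hr : 0 < r) => ?_
        simp only [norm_circleMap_zero, abs_of_pos hr]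
        have hφr : Measurable fun θ => (ball 0 1).indicator (fun z => ENNReal.ofReal (φ z))
            (circleMap 0 r θ) := hφ_meas.comp (continuous_circleMap 0 r).measurable
        rw [lintegral_const_mul _ hφr]
        by_cases hr1 : r < 1
        · have h1r : 0 < 1 - r ^ 2 := by nlinarith
          simp only [indicator_of_mem (circleMap_zero_mem_ball hr.le hr1 _)]
          rw [lintegral_circleMap_eq_circleAverage
            (circleIntegrable_of_continuousOn_ball hφ ⟨hr.le, hr1⟩) h0,
            indicator_of_mem (mem_Iio.2 hr1), ENNReal.ofReal_mul (by positivity : 0 ≤ 2 * π),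
            ← mul_assoc, ← mul_assoc, ← ENNReal.ofReal_mul hr.le,
            ← ENNReal.ofReal_mul (by positivity)]
          congr 2
          field_simp
        · simp [not_lt.1 hr1, abs_of_pos hr]

lemma sqrt_one_sub_rpow_inv {c r : ℝ} (hc : c ≠ 0) (hr : r ∈ Ioo (0 : ℝ) 1) :
    √(1 - ((1 - r ^ 2) ^ c) ^ c⁻¹) = r := by
  have h1r : 0 ≤ 1 - r ^ 2 := by nlinarith [hr.1, hr.2]
  rw [Real.rpow_rpow_inv h1r hc, sub_sub_cancel, Real.sqrt_sq hr.1.le]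

lemma rpow_mem_Ioo {c u : ℝ} (hc : 0 < c) (hu : u ∈ Ioo (0 : ℝ) 1) : u ^ c ∈ Ioo (0 : ℝ) 1 :=
  ⟨Real.rpow_pos_of_pos hu.1 _, Real.rpow_lt_one hu.1.le hu.2 hc⟩

lemma one_sub_mem_Ioo {u : ℝ} (hu : u ∈ Ioo (0 : ℝ) 1) : 1 - u ∈ Ioo (0 : ℝ) 1 :=
  ⟨sub_pos.2 hu.2, sub_lt_self 1 hu.1⟩

lemma sqrt_mem_Ioo {s : ℝ} (hs : s ∈ Ioo (0 : ℝ) 1) : √s ∈ Ioo (0 : ℝ) 1 :=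
  ⟨Real.sqrt_pos.2 hs.1, (Real.sqrt_lt' one_pos).2 (by simpa using hs.2)⟩

lemma sqrt_mem_Ico {s : ℝ} (hs : s ∈ Ico (0 : ℝ) 1) : √s ∈ Ico (0 : ℝ) 1 :=
  ⟨Real.sqrt_nonneg s, (Real.sqrt_lt' one_pos).2 (by simpa using hs.2)⟩

lemma bijOn_one_sub_sq_rpow {c : ℝ} (hc : 0 < c) :
    BijOn (fun r : ℝ => (1 - r ^ 2) ^ c) (Ioo 0 1) (Ioo 0 1) := by
  refine InvOn.bijOn (f' := fun u => √(1 - u ^ c⁻¹))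
    ⟨fun r hr => sqrt_one_sub_rpow_inv hc.ne' hr, fun u hu => ?_⟩ (fun r hr => ?_) fun u hu => ?_
  · have hmem := one_sub_mem_Ioo (rpow_mem_Ioo (inv_pos.2 hc) hu)
    simp only
    rw [Real.sq_sqrt hmem.1.le, sub_sub_cancel, Real.rpow_inv_rpow hu.1.le hc.ne']
  · exact rpow_mem_Ioo hc (one_sub_mem_Ioo ⟨pow_pos hr.1 2, pow_lt_one₀ hr.1.le hr.2 two_ne_zero⟩)
  · exact sqrt_mem_Ioo (one_sub_mem_Ioo (rpow_mem_Ioo (inv_pos.2 hc) hu))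

-- The substitution `u = (1 - r²)^(γ - 1)` turns the radial density into Lebesgue measure.
theorem lintegral_bergmanMeasure_eq_lintegral_circleAverage {φ : ℂ → ℝ} {γ : ℝ}
    (hφ : ContinuousOn φ (ball 0 1)) (h0 : ∀ z, 0 ≤ φ z) (hγ : 1 < γ) :
    ∫⁻ z, ENNReal.ofReal (φ z) ∂bergmanMeasure γ = ∫⁻ u in Ioo (0 : ℝ) 1,
      ENNReal.ofReal (Real.circleAverage φ 0 √(1 - u ^ (γ - 1)⁻¹)) := by
  have hγ' : 0 < γ - 1 := sub_pos.2 hγ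
  have hbij := bijOn_one_sub_sq_rpow hγ'
  have hderiv : ∀ r ∈ Ioo (0 : ℝ) 1, HasDerivWithinAt (fun r : ℝ => (1 - r ^ 2) ^ (γ - 1))
      (-(2 * (γ - 1) * (r * (1 - r ^ 2) ^ (γ - 2)))) (Ioo 0 1) r := fun r hr => by
    have h1r : 0 < 1 - r ^ 2 := by nlinarith [hr.1, hr.2]
    have := ((hasDerivAt_pow 2 r).const_sub 1).rpow_const (p := γ - 1) (Or.inl h1r.ne')
    refine (this.congr_deriv ?_).hasDerivWithinAt
    rw [show γ - 1 - 1 = γ - 2 by ring]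
    push_cast
    ring
  have hsubst := lintegral_image_eq_lintegral_abs_deriv_mul measurableSet_Ioo hderiv hbij.injOn
    fun u => ENNReal.ofReal (Real.circleAverage φ 0 √(1 - u ^ (γ - 1)⁻¹))
  rw [hbij.image_eq] at hsubst
  rw [hsubst, lintegral_bergmanMeasure_eq_lintegral_radius hφ h0 hγ]
  refine setLIntegral_congr_fun measurableSet_Ioo fun r hr => ?_
  have h1r : 0 < 1 - r ^ 2 := by nlinarith [hr.1, hr.2]
  have hr0 := hr.1
  simp only [sqrt_one_sub_rpow_inv hγ'.ne' hr]
  rw [abs_neg, abs_of_pos (by positivity)]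

lemma isProbabilityMeasure_bergmanMeasure {γ : ℝ} (hγ : 1 < γ) :
    IsProbabilityMeasure (bergmanMeasure γ) := by
  have := lintegral_bergmanMeasure_eq_lintegral_circleAverage (φ := fun _ => 1)
    continuousOn_const (fun _ => zero_le_one) hγ
  exact ⟨by simpa [Real.circleAverage_const] using this⟩

lemma ae_bergmanMeasure_mem_ball (γ : ℝ) : ∀ᵐ z ∂bergmanMeasure γ, z ∈ ball (0 : ℂ) 1 :=
  (withDensity_absolutelyContinuous _ _).ae_le (ae_restrict_mem measurableSet_ball)

lemma aestronglyMeasurable_bergmanMeasure {φ : ℂ → ℝ} (hφ : ContinuousOn φ (ball 0 1)) (γ : ℝ) :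
    AEStronglyMeasurable φ (bergmanMeasure γ) :=
  (hφ.aestronglyMeasurable measurableSet_ball).mono_ac (withDensity_absolutelyContinuous _ _)

/-! ### Comparison with the extremal distribution -/

/-- The distribution function of `T (1 - |z|²)^α` for the hyperbolic measure, that is, of the
weighted modulus of a constant function, which is extremal. -/
noncomputable def extremalLevelMeasure (T α t : ℝ) : ℝ := max 0 ((T / t) ^ (1 / α) - 1)

section ExtremalLevelMeasure

variable {T α κ t : ℝ}

lemma rpow_mul_extremalLevelMeasure (hT : 0 ≤ T) (hα : 0 < α) (ht : 0 < t) :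
    t ^ (κ - 1) * extremalLevelMeasure T α t
      = (Ioc 0 T).indicator (fun t => T ^ (1 / α) * t ^ (κ - 1 - 1 / α) - t ^ (κ - 1)) t := by
  unfold extremalLevelMeasure
  by_cases htT : t ≤ T
  · have h1 : 1 ≤ (T / t) ^ (1 / α) := Real.one_le_rpow ((one_le_div ht).2 htT) (by positivity)
    rw [indicator_of_mem (mem_Ioc.2 ⟨ht, htT⟩), max_eq_right (sub_nonneg.2 h1),
      Real.div_rpow hT ht.le, Real.rpow_sub ht (κ - 1)]
    ring
  · have h1 : (T / t) ^ (1 / α) ≤ 1 :=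
      Real.rpow_le_one (by positivity) ((div_le_one ht).2 (not_le.1 htT).le) (by positivity)
    rw [indicator_of_notMem fun h => htT h.2, max_eq_left (sub_nonpos.2 h1), mul_zero]

lemma intervalIntegrable_rpow_sub_inv (hα : 0 < α) (hακ : 1 < α * κ) :
    IntervalIntegrable (fun t : ℝ => T ^ (1 / α) * t ^ (κ - 1 - 1 / α)) volume 0 T := by
  have : 1 / α < κ := by rwa [div_lt_iff₀ hα, mul_comm]
  exact (intervalIntegral.intervalIntegrable_rpow' (by linarith)).const_mul _

lemma integrableOn_rpow_mul_extremalLevelMeasure (hT : 0 ≤ T) (hα : 0 < α) (hκ : 0 < κ)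
    (hακ : 1 < α * κ) :
    IntegrableOn (fun t => t ^ (κ - 1) * extremalLevelMeasure T α t) (Ioi 0) := by
  refine (integrableOn_congr_fun (fun t (ht : 0 < t) => rpow_mul_extremalLevelMeasure hT hα ht)
    measurableSet_Ioi).2 (IntegrableOn.integrable_indicator ?_ measurableSet_Ioc).integrableOn
  exact (intervalIntegrable_iff_integrableOn_Ioc_of_le hT).1
    ((intervalIntegrable_rpow_sub_inv hα hακ).sub
      (intervalIntegral.intervalIntegrable_rpow' (by linarith)))

lemma integral_rpow_mul_extremalLevelMeasure (hT : 0 < T) (hα : 0 < α) (hκ : 0 < κ)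
    (hακ : 1 < α * κ) :
    ∫ t in Ioi 0, t ^ (κ - 1) * extremalLevelMeasure T α t = T ^ κ / (κ * (α * κ - 1)) := by
  have hinv : 0 < κ - 1 / α := by rwa [sub_pos, div_lt_iff₀ hα, mul_comm]
  rw [setIntegral_congr_fun measurableSet_Ioi
    fun t ht => rpow_mul_extremalLevelMeasure hT.le hα ht, setIntegral_indicator measurableSet_Ioc,
    inter_eq_right.2 fun x hx => hx.1, ← intervalIntegral.integral_of_le hT.le,
    intervalIntegral.integral_sub (intervalIntegrable_rpow_sub_inv hα hακ)
      (intervalIntegral.intervalIntegrable_rpow' (by linarith)),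
    intervalIntegral.integral_const_mul, integral_rpow (Or.inl (by linarith)),
    integral_rpow (Or.inl (by linarith)), show κ - 1 - 1 / α + 1 = κ - 1 / α by ring,
    sub_add_cancel, Real.zero_rpow hinv.ne', Real.zero_rpow hκ.ne', sub_zero, sub_zero,
    mul_div_assoc', ← Real.rpow_add hT, add_sub_cancel,
    show κ - 1 / α = (α * κ - 1) / α by field_simp]
  have : 0 < α * κ - 1 := sub_pos.2 hακ
  field_simp
  ring

lemma extremalLevelMeasure_le_iff {m : ℝ} (hT : 0 ≤ T) (ht : 0 < t) (hm : 0 ≤ m) :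
    extremalLevelMeasure T α t ≤ m ↔ T ^ (1 / α) ≤ (1 + m) * t ^ (1 / α) := by
  rw [extremalLevelMeasure, max_le_iff, and_iff_right hm, Real.div_rpow hT ht.le,
    sub_le_iff_le_add', div_le_iff₀ (by positivity)]

-- The two distributions cross at most once, since `(1 + m t) t^(1/α)` is constant for the extremal
-- one as long as it is positive.
lemma exists_crossing_extremalLevelMeasure {m : ℝ → ℝ} {M : ℝ} (hT : 0 ≤ T) (hm : ∀ t, 0 ≤ m t)
    (hm_zero : ∀ t, M ≤ t → m t = 0)
    (hanti : ∀ s t, 0 < s → s ≤ t → 0 < m t →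
      (1 + m t) * t ^ (1 / α) ≤ (1 + m s) * s ^ (1 / α)) :
    ∃ t₀, 0 ≤ t₀ ∧ (∀ t ∈ Ioo 0 t₀, extremalLevelMeasure T α t ≤ m t) ∧
      ∀ t, t₀ < t → m t ≤ extremalLevelMeasure T α t := by
  set S : Set ℝ := {t | 0 < t ∧ 0 < m t ∧ extremalLevelMeasure T α t ≤ m t}
  have hS : BddAbove S := ⟨M, fun t ht => not_lt.1 fun hMt => ht.2.1.ne' (hm_zero t hMt.le)⟩
  have hS0 : 0 ≤ sSup S := Real.sSup_nonneg fun t ht => ht.1.le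
  refine ⟨sSup S, hS0, fun t ⟨ht, htS⟩ => ?_, fun t ht => ?_⟩
  · have hne : S.Nonempty := nonempty_iff_ne_empty.2 fun h => by
      rw [h, Real.sSup_empty] at htS
      exact ht.not_gt htS
    obtain ⟨s, ⟨hs, hms, hle⟩, hts⟩ := exists_lt_of_lt_csSup hne htS
    exact (extremalLevelMeasure_le_iff hT ht (hm t)).2
      (((extremalLevelMeasure_le_iff hT hs (hm s)).1 hle).trans (hanti t s ht hts.le hms))
  · rcases (hm t).eq_or_lt with h0 | hpos
    · exact h0 ▸ le_max_left _ _
    · exact not_lt.1 fun hlt =>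
        ht.not_ge (le_csSup hS ⟨hS0.trans_lt ht, hpos, hlt.le⟩)

end ExtremalLevelMeasure

lemma integral_rpow_mul_le_of_single_crossing {m m₀ : ℝ → ℝ} {s t₀ : ℝ} (hs : 0 ≤ s)
    (ht₀ : 0 ≤ t₀) (hlt : ∀ t ∈ Ioo 0 t₀, m₀ t ≤ m t) (hgt : ∀ t, t₀ < t → m t ≤ m₀ t)
    (hm : IntegrableOn m (Ioi 0)) (hm₀ : IntegrableOn m₀ (Ioi 0))
    (hsm : IntegrableOn (fun t => t ^ s * m t) (Ioi 0))
    (hsm₀ : IntegrableOn (fun t => t ^ s * m₀ t) (Ioi 0))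
    (heq : ∫ t in Ioi 0, m t = ∫ t in Ioi 0, m₀ t) :
    ∫ t in Ioi 0, t ^ s * m t ≤ ∫ t in Ioi 0, t ^ s * m₀ t := by
  have hnonneg : 0 ≤ ∫ t in Ioi 0, (t ^ s - t₀ ^ s) * (m₀ t - m t) := by
    refine setIntegral_nonneg measurableSet_Ioi fun t (ht : 0 < t) => ?_
    rcases lt_trichotomy t t₀ with h | h | h
    · exact mul_nonneg_of_nonpos_of_nonpos (sub_nonpos.2 (Real.rpow_le_rpow ht.le h.le hs))
        (sub_nonpos.2 (hlt t ⟨ht, h⟩))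
    · simp [h]
    · exact mul_nonneg (sub_nonneg.2 (Real.rpow_le_rpow ht₀ h.le hs)) (sub_nonneg.2 (hgt t h))
  have hexpand : ∫ t in Ioi 0, (t ^ s - t₀ ^ s) * (m₀ t - m t)
      = ∫ t in Ioi 0, ((t ^ s * m₀ t - t ^ s * m t) - t₀ ^ s * (m₀ t - m t)) :=
    integral_congr_ae (.of_forall fun t => by ring)
  have hsub : IntegrableOn (fun t => m₀ t - m t) (Ioi 0) := hm₀.sub hm
  have hsub_s : IntegrableOn (fun t => t ^ s * m₀ t - t ^ s * m t) (Ioi 0) := hsm₀.sub hsm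
  rw [hexpand, integral_sub hsub_s (hsub.const_mul _), integral_sub hsm₀ hsm,
    integral_const_mul, integral_sub hm₀ hm, heq, sub_self, mul_zero, sub_zero] at hnonneg
  exact sub_nonneg.1 hnonneg

lemma integrableOn_rpow_mul_of_eq_zero {m : ℝ → ℝ} {s M : ℝ} (hs : 0 ≤ s)
    (hm : IntegrableOn m (Ioi 0)) (hm_zero : ∀ t, M ≤ t → m t = 0) :
    IntegrableOn (fun t => t ^ s * m t) (Ioi 0) := by
  refine Integrable.mono' (g := fun t => M ^ s * ‖m t‖) (hm.norm.const_mul _)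
    ((by fun_prop : Measurable fun t : ℝ => t ^ s).aestronglyMeasurable.mul hm.1) ?_
  filter_upwards [ae_restrict_mem measurableSet_Ioi] with t (ht : 0 < t)
  rw [norm_mul, Real.norm_of_nonneg (by positivity)]
  rcases le_total M t with h | h
  · simp [hm_zero t h]
  · gcongr

lemma mul_integral_rpow_mul_le_of_antitone {m : ℝ → ℝ} {T α κ M : ℝ} (hT : 0 < T) (hα : 1 < α)
    (hκ : 1 ≤ κ) (hm : ∀ t, 0 ≤ m t) (hm_zero : ∀ t, M ≤ t → m t = 0)
    (hanti : ∀ s t, 0 < s → s ≤ t → 0 < m t →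
      (1 + m t) * t ^ (1 / α) ≤ (1 + m s) * s ^ (1 / α))
    (hint : IntegrableOn m (Ioi 0)) (hmass : ∫ t in Ioi 0, m t = T / (α - 1)) :
    κ * ∫ t in Ioi 0, t ^ (κ - 1) * m t ≤ T ^ κ / (α * κ - 1) := by
  have hα0 : 0 < α := one_pos.trans hα
  have hκ0 : 0 < κ := one_pos.trans_le hκ
  have hακ : 1 < α * κ := hα.trans_le (le_mul_of_one_le_right hα0.le hκ)
  have hint₀ := integrableOn_rpow_mul_extremalLevelMeasure hT.le hα0 one_pos (by simpa)
  have hmass₀ := integral_rpow_mul_extremalLevelMeasure hT hα0 one_pos (by simpa)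
  simp only [sub_self, Real.rpow_zero, one_mul, Real.rpow_one, mul_one] at hint₀ hmass₀
  obtain ⟨t₀, ht₀, hlt, hgt⟩ := exists_crossing_extremalLevelMeasure hT.le hm hm_zero hanti
  calc κ * ∫ t in Ioi 0, t ^ (κ - 1) * m t
      ≤ κ * ∫ t in Ioi 0, t ^ (κ - 1) * extremalLevelMeasure T α t := by
        refine mul_le_mul_of_nonneg_left ?_ hκ0.le
        exact integral_rpow_mul_le_of_single_crossing (sub_nonneg.2 hκ) ht₀ hlt hgt hint hint₀
          (integrableOn_rpow_mul_of_eq_zero (sub_nonneg.2 hκ) hint hm_zero)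
          (integrableOn_rpow_mul_extremalLevelMeasure hT.le hα0 hκ0 hακ) (hmass.trans hmass₀.symm)
    _ = T ^ κ / (α * κ - 1) := by
        have : 0 < α * κ - 1 := sub_pos.2 hακ
        rw [integral_rpow_mul_extremalLevelMeasure hT hα0 hκ0 hακ]
        field_simp

/-! ### The Bergman space embedding up to the boundary -/

lemma lintegral_norm_rpow_bergmanMeasure (F : ℂ → ℂ) (p : ℝ) {α : ℝ} (hα : 1 ≤ α) :
    ∫⁻ z, ENNReal.ofReal (‖F z‖ ^ p) ∂bergmanMeasure α
      = ENNReal.ofReal (α - 1) *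
        ∫⁻ z, ENNReal.ofReal (weightedModulus F p α z) ∂hyperbolicMeasure := by
  rw [lintegral_bergmanMeasure, hyperbolicMeasure,
    lintegral_withDensity_eq_lintegral_mul_non_measurable _ measurable_hyperbolicDensity (by simp),
    ← lintegral_const_mul' _ _ ENNReal.ofReal_ne_top]
  refine setLIntegral_congr_fun measurableSet_ball fun z hz => ?_
  have hz1 := one_sub_norm_sq_pos hz
  have hα1 : 0 ≤ α - 1 := sub_nonneg.2 hα
  simp only [Pi.mul_apply]
  rw [← ENNReal.ofReal_mul (by positivity), ← ENNReal.ofReal_mul (by positivity),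
    ← ENNReal.ofReal_mul hα1, weightedModulus_of_mem_ball hz,
    show α - 2 = α - (2 : ℕ) by norm_num, Real.rpow_sub_natCast hz1.ne']
  congr 1
  field_simp

section Embedding

variable {F : ℂ → ℂ} {p α κ : ℝ}

lemma weightedModulus_rpow (F : ℂ → ℂ) (p α κ : ℝ) (z : ℂ) :
    weightedModulus F p α z ^ κ = weightedModulus F (p * κ) (α * κ) z := by
  unfold weightedModulus
  rw [Real.mul_rpow (by positivity) (by positivity), ← Real.rpow_mul (by positivity),
    ← Real.rpow_mul (by positivity)]

lemma integrable_weightedModulus (hF : DiffContOnCl ℂ F (ball 0 1)) (hp : 0 < p) (hα : 1 < α) :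
    Integrable (weightedModulus F p α) hyperbolicMeasure := by
  have hα0 : 0 < α := one_pos.trans hα
  obtain ⟨C, hC, hle⟩ := exists_weightedModulus_le hF hp hα0
  refine ⟨(continuous_weightedModulus hF hp hα0).aestronglyMeasurable, ?_⟩
  rw [hasFiniteIntegral_iff_ofReal (.of_forall weightedModulus_nonneg)]
  have hone : ∫⁻ z, ENNReal.ofReal (weightedModulus (fun _ => 1) 0 α z) ∂hyperbolicMeasure < ⊤ := by
    have := isProbabilityMeasure_bergmanMeasure hα
    have hmass := lintegral_norm_rpow_bergmanMeasure (fun _ => 1) 0 hα.le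
    simp only [Real.rpow_zero, ENNReal.ofReal_one, lintegral_const, measure_univ, mul_one] at hmass
    refine lt_top_iff_ne_top.2 fun htop => ?_
    rw [htop, ENNReal.mul_top (by simpa using hα)] at hmass
    exact ENNReal.one_ne_top hmass
  calc ∫⁻ z, ENNReal.ofReal (weightedModulus F p α z) ∂hyperbolicMeasure
      ≤ ∫⁻ z, ENNReal.ofReal C * ENNReal.ofReal (weightedModulus (fun _ => 1) 0 α z)
          ∂hyperbolicMeasure := by
        gcongr with z
        rw [← ENNReal.ofReal_mul hC.le]
        exact ENNReal.ofReal_le_ofReal (by simpa [weightedModulus] using hle z)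
    _ < ⊤ := by
        rw [lintegral_const_mul' _ _ ENNReal.ofReal_ne_top]
        exact ENNReal.mul_lt_top ENNReal.ofReal_lt_top hone

lemma lintegral_weightedModulus_rpow (hF : DiffContOnCl ℂ F (ball 0 1)) (hp : 0 < p) (hα : 0 < α)
    (hκ : 0 < κ) :
    ∫⁻ z, ENNReal.ofReal (weightedModulus F p α z ^ κ) ∂hyperbolicMeasure
      = ENNReal.ofReal κ * ∫⁻ t in Ioi 0, ENNReal.ofReal (t ^ (κ - 1) * levelMeasure F p α t) := by
  rw [lintegral_rpow_eq_lintegral_meas_lt_mul _ (.of_forall weightedModulus_nonneg)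
    (continuous_weightedModulus hF hp hα).aemeasurable hκ]
  congr 1
  refine setLIntegral_congr_fun measurableSet_Ioi fun t (ht : 0 < t) => ?_
  rw [ENNReal.ofReal_mul (by positivity), mul_comm, levelMeasure,
    ofReal_measureReal (hyperbolicMeasure_levelSet_lt_top hF hp hα ht).ne]

lemma integrableOn_levelMeasure (hF : DiffContOnCl ℂ F (ball 0 1)) (hp : 0 < p) (hα : 1 < α) :
    IntegrableOn (levelMeasure F p α) (Ioi 0) := by
  have hα0 : 0 < α := one_pos.trans hα
  have hanti : AntitoneOn (levelMeasure F p α) (Ioi 0) := fun s hs t _ hst =>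
    levelMeasure_anti hF hp hα0 hs hst
  refine ⟨(aemeasurable_restrict_of_antitoneOn measurableSet_Ioi hanti).aestronglyMeasurable, ?_⟩
  rw [hasFiniteIntegral_iff_ofReal (.of_forall fun t => levelMeasure_nonneg)]
  have hlayer := lintegral_weightedModulus_rpow hF hp hα0 one_pos
  simp only [Real.rpow_one, ENNReal.ofReal_one, sub_self, Real.rpow_zero, one_mul] at hlayer
  rw [← hlayer]
  exact (hasFiniteIntegral_iff_ofReal (.of_forall weightedModulus_nonneg)).1
    (integrable_weightedModulus hF hp hα).2

lemma mul_lintegral_weightedModulus_rpow_le (hF : DiffContOnCl ℂ F (ball 0 1)) (hp : 0 < p)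
    (hα : 1 < α) (hκ : 1 ≤ κ) :
    ENNReal.ofReal (α * κ - 1) *
        ∫⁻ z, ENNReal.ofReal (weightedModulus F p α z ^ κ) ∂hyperbolicMeasure
      ≤ ENNReal.ofReal (((α - 1) * ∫ z, weightedModulus F p α z ∂hyperbolicMeasure) ^ κ) := by
  have hα0 : 0 < α := one_pos.trans hα
  have hκ0 : 0 < κ := one_pos.trans_le hκ
  have hακ : 0 < α * κ - 1 := by nlinarith
  have hv := integrable_weightedModulus hF hp hα
  have hv0 : 0 ≤ᵐ[hyperbolicMeasure] weightedModulus F p α := .of_forall weightedModulus_nonneg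
  rcases (integral_nonneg_of_ae hv0).eq_or_lt with hzero | hpos
  · have hae := (integral_eq_zero_iff_of_nonneg_ae hv0 hv).1 hzero.symm
    rw [lintegral_congr_ae (g := fun _ => 0) (hae.mono fun z hz => by
      simp [hz, Real.zero_rpow hκ0.ne'])]
    simp
  obtain ⟨C, hC, hle⟩ := exists_weightedModulus_le hF hp hα0
  have hbound : ∀ z, weightedModulus F p α z ≤ C := fun z => (hle z).trans
    (mul_le_of_le_one_right hC.le (Real.rpow_le_one (le_max_left _ _)
      (max_le zero_le_one (by linarith [sq_nonneg ‖z‖])) hα0.le))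
  have hlevel_zero : ∀ t, C ≤ t → levelMeasure F p α t = 0 := fun t ht => by
    have : {z | t < weightedModulus F p α z} = ∅ :=
      eq_empty_of_forall_notMem fun z hz => hz.not_ge ((hbound z).trans ht)
    simp [levelMeasure, this]
  have hint := integrableOn_levelMeasure hF hp hα
  have hcomp := mul_integral_rpow_mul_le_of_antitone (mul_pos (sub_pos.2 hα) hpos) hα hκ
    (fun t => levelMeasure_nonneg) hlevel_zero
    (fun s t hs hst ht => one_add_levelMeasure_mul_rpow_le hF hp hα0 hs hst ht) hint
    (by rw [mul_div_cancel_left₀ _ (sub_pos.2 hα).ne', hv.integral_eq_integral_meas_lt hv0]; rfl)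
  rw [lintegral_weightedModulus_rpow hF hp hα0 hκ0, ← ofReal_integral_eq_lintegral_ofReal
    (integrableOn_rpow_mul_of_eq_zero (sub_nonneg.2 hκ) hint hlevel_zero),
    ← ENNReal.ofReal_mul hκ0.le, ← ENNReal.ofReal_mul hακ.le]
  · exact ENNReal.ofReal_le_ofReal ((le_div_iff₀' hακ).1 hcomp)
  · filter_upwards [ae_restrict_mem measurableSet_Ioi] with t (ht : 0 < t)
    exact mul_nonneg (by positivity) levelMeasure_nonneg

lemma lintegral_norm_rpow_le_of_diffContOnCl (hF : DiffContOnCl ℂ F (ball 0 1)) (hp : 0 < p)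
    (hα : 1 < α) (hκ : 1 ≤ κ) :
    ∫⁻ z, ENNReal.ofReal (‖F z‖ ^ (p * κ)) ∂bergmanMeasure (α * κ)
      ≤ (∫⁻ z, ENNReal.ofReal (‖F z‖ ^ p) ∂bergmanMeasure α) ^ κ := by
  have hα1 : 0 ≤ α - 1 := (sub_pos.2 hα).le
  have hv0 : 0 ≤ ∫ z, weightedModulus F p α z ∂hyperbolicMeasure :=
    integral_nonneg weightedModulus_nonneg
  have hmain := mul_lintegral_weightedModulus_rpow_le hF hp hα hκ
  simp only [weightedModulus_rpow] at hmain
  rw [lintegral_norm_rpow_bergmanMeasure _ _ (by nlinarith),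
    lintegral_norm_rpow_bergmanMeasure _ _ hα.le]
  refine hmain.trans_eq ?_
  rw [← ENNReal.ofReal_rpow_of_nonneg (by positivity) (by linarith), ENNReal.ofReal_mul hα1,
    ofReal_integral_eq_lintegral_ofReal (integrable_weightedModulus hF hp hα)
      (.of_forall weightedModulus_nonneg)]

end Embedding

/-! ### Circle means of functions with the sub-mean value property -/

/-- The sub-mean value property of subharmonic functions on `U`, for all closed disks in `U`. -/
def SubMeanOn (u : ℂ → ℝ) (U : Set ℂ) : Prop :=
  ∀ c R, 0 < R → closedBall c R ⊆ U → u c ≤ Real.circleAverage u c R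

section SubMean

variable {c : ℂ} {R : ℝ}

lemma log_norm_le_circleAverage {g : ℂ → ℂ} (hg : AnalyticOnNhd ℂ g (closedBall c R))
    (hR : 0 < R) (hgc : g c ≠ 0) :
    Real.log ‖g c‖ ≤ Real.circleAverage (fun z => Real.log ‖g z‖) c R := by
  rw [← abs_of_pos hR] at hg
  rw [hg.circleAverage_log_norm hR.ne' hgc]
  refine le_add_of_nonneg_left (finsum_nonneg fun w => ?_)
  by_cases hw : w ∈ closedBall c |R|
  · refine mul_nonneg (mod_cast MeromorphicOn.AnalyticOnNhd.divisor_nonneg hg w) ?_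
    rcases eq_or_ne w c with rfl | hwc
    · simp
    · refine Real.log_nonneg ?_
      rw [← div_eq_mul_inv, one_le_div (norm_pos_iff.2 (sub_ne_zero.2 hwc.symm))]
      simpa [dist_eq_norm', abs_of_pos hR] using hw
  · simp [Function.locallyFinsuppWithin.apply_eq_zero_of_notMem _ hw]

-- Jensen's inequality for `exp`, by averaging the tangent line at `a`.
lemma exp_le_circleAverage {ℓ u : ℂ → ℝ} {a : ℝ} (hℓ : CircleIntegrable ℓ c R)
    (hu : CircleIntegrable u c R)
    (heq : u =ᶠ[codiscreteWithin (sphere c |R|)] fun z => Real.exp (ℓ z)) (hR : R ≠ 0)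
    (ha : a ≤ Real.circleAverage ℓ c R) :
    Real.exp a ≤ Real.circleAverage u c R := by
  have htangent : ∀ z, Real.exp a * (1 - a) + Real.exp a * ℓ z ≤ Real.exp (ℓ z) := fun z =>
    calc Real.exp a * (1 - a) + Real.exp a * ℓ z = Real.exp a * (ℓ z - a + 1) := by ring
      _ ≤ Real.exp a * Real.exp (ℓ z - a) := by gcongr; exact Real.add_one_le_exp _
      _ = Real.exp (ℓ z) := by rw [← Real.exp_add, add_sub_cancel]
  have hconst : CircleIntegrable (fun _ => Real.exp a * (1 - a)) c R := circleIntegrable_const _ _ _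
  have hlin : CircleIntegrable (fun z => Real.exp a * ℓ z) c R := hℓ.const_smul
  calc Real.exp a ≤ Real.exp a * (1 - a) + Real.exp a * Real.circleAverage ℓ c R := by
        nlinarith [Real.exp_pos a]
    _ = Real.circleAverage (fun z => Real.exp a * (1 - a) + Real.exp a * ℓ z) c R := by
        rw [Real.circleAverage_fun_add hconst hlin, Real.circleAverage_const]
        simp only [← smul_eq_mul, Real.circleAverage_fun_smul]
    _ ≤ Real.circleAverage (fun z => Real.exp (ℓ z)) c R :=
        Real.circleAverage_mono (hconst.add hlin) (hu.congr_codiscreteWithin heq)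
          fun z _ => htangent z
    _ = Real.circleAverage u c R := (Real.circleAverage_congr_codiscreteWithin heq hR).symm

lemma norm_rpow_mul_norm_rpow_le_circleAverage {G H : ℂ → ℂ} {s t : ℝ}
    (hG : AnalyticOnNhd ℂ G (closedBall c R)) (hH : AnalyticOnNhd ℂ H (closedBall c R))
    (hs : 0 ≤ s) (ht : 0 ≤ t) (hR : 0 < R) (hGc : G c ≠ 0) (hHc : H c ≠ 0) :
    ‖G c‖ ^ s * ‖H c‖ ^ t ≤ Real.circleAverage (fun z => ‖G z‖ ^ s * ‖H z‖ ^ t) c R := by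
  set ℓ : ℂ → ℝ := fun z => s * Real.log ‖G z‖ + t * Real.log ‖H z‖
  have hℓ_exp : ∀ z, G z ≠ 0 → H z ≠ 0 → ‖G z‖ ^ s * ‖H z‖ ^ t = Real.exp (ℓ z) :=
    fun z hGz hHz => by
      simp only [ℓ, Real.exp_add, Real.rpow_def_of_pos (norm_pos_iff.2 hGz),
        Real.rpow_def_of_pos (norm_pos_iff.2 hHz), mul_comm]
  have hsphere : sphere c |R| ⊆ closedBall c R := by
    rw [abs_of_pos hR]
    exact sphere_subset_closedBall
  have hlogG : CircleIntegrable (fun z => s * Real.log ‖G z‖) c R :=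
    (hG.mono hsphere).meromorphicOn.circleIntegrable_log_norm.const_smul
  have hlogH : CircleIntegrable (fun z => t * Real.log ‖H z‖) c R :=
    (hH.mono hsphere).meromorphicOn.circleIntegrable_log_norm.const_smul
  rw [hℓ_exp c hGc hHc]
  refine exp_le_circleAverage (hlogG.add hlogH) ?_ ?_ hR.ne' ?_
  · refine ContinuousOn.circleIntegrable' (ContinuousOn.mono ?_ hsphere)
    exact (hG.continuousOn.norm.rpow_const fun _ _ => Or.inr hs).mul
      (hH.continuousOn.norm.rpow_const fun _ _ => Or.inr ht)
  · have hzeros := (hG.mul hH).preimage_zero_mem_codiscreteWithin (mul_ne_zero hGc hHc)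
      (mem_closedBall_self hR.le)
      ((convex_closedBall c R).isConnected ⟨c, mem_closedBall_self hR.le⟩)
    filter_upwards [codiscreteWithin_mono hsphere hzeros] with z hz
    exact hℓ_exp z (left_ne_zero_of_mul hz) (right_ne_zero_of_mul hz)
  · rw [Real.circleAverage_add hlogG hlogH]
    simp only [← smul_eq_mul, Real.circleAverage_fun_smul]
    simp only [ℓ, smul_eq_mul]
    gcongr
    · exact log_norm_le_circleAverage hG hR hGc
    · exact log_norm_le_circleAverage hH hR hHc

lemma subMeanOn_norm_rpow_mul_norm_rpow {G H : ℂ → ℂ} {s t : ℝ} {U : Set ℂ}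
    (hG : AnalyticOnNhd ℂ G U) (hH : AnalyticOnNhd ℂ H U) (hs : 0 ≤ s) (ht : 0 ≤ t) :
    SubMeanOn (fun z => ‖G z‖ ^ s * ‖H z‖ ^ t) U := by
  intro c R hR hU
  have hreplace : ∀ {g : ℂ → ℂ} {a : ℝ}, AnalyticOnNhd ℂ g U → (g c = 0 → a = 0) →
      ∃ g' : ℂ → ℂ, AnalyticOnNhd ℂ g' U ∧ g' c ≠ 0 ∧ ∀ z, ‖g' z‖ ^ a = ‖g z‖ ^ a := by
    intro g a hg ha
    by_cases hgc : g c = 0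
    · exact ⟨fun _ => 1, analyticOnNhd_const, one_ne_zero, by simp [ha hgc]⟩
    · exact ⟨g, hg, hgc, fun _ => rfl⟩
  by_cases hzero : (G c = 0 → s = 0) ∧ (H c = 0 → t = 0)
  · obtain ⟨G', hG', hG'c, hGG'⟩ := hreplace hG hzero.1
    obtain ⟨H', hH', hH'c, hHH'⟩ := hreplace hH hzero.2
    simp only [← hGG', ← hHH']
    exact norm_rpow_mul_norm_rpow_le_circleAverage (hG'.mono hU) (hH'.mono hU) hs ht hR hG'c hH'c
  · refine le_trans (le_of_eq ?_)
      (Real.circleAverage_nonneg_of_nonneg fun z _ => by positivity)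
    rw [not_and_or, Classical.not_imp, Classical.not_imp] at hzero
    rcases hzero with ⟨h, h'⟩ | ⟨h, h'⟩ <;> simp [h, Real.zero_rpow h']

end SubMean

section Rotation

variable {u : ℂ → ℝ} {c : ℂ} {R : ℝ}

lemma circleAverage_mul_left {ζ : ℂ} (hζ : ‖ζ‖ = 1) :
    Real.circleAverage (fun w => u (ζ * w)) c R = Real.circleAverage u (ζ * c) R := by
  obtain ⟨η, rfl⟩ := Complex.norm_eq_one_iff ζ |>.1 hζ
  rw [Real.circleAverage_eq_integral_add (c := Complex.exp (η * I) * c) η]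
  simp only [Real.circleAverage, circleMap, Complex.ofReal_add, add_mul, Complex.exp_add]
  congr! 4 with θ
  ring

lemma circleAverage_norm_eq (z : ℂ) :
    Real.circleAverage u 0 ‖z‖ = Real.circleAverage (fun ζ => u (ζ * z)) 0 1 := by
  obtain ⟨η, hη⟩ : ∃ η : ℝ, z = ‖z‖ * Complex.exp (η * I) :=
    ⟨z.arg, (Complex.norm_mul_exp_arg_mul_I z).symm⟩
  rw [Real.circleAverage_eq_integral_add (f := u) η]
  simp only [Real.circleAverage, circleMap, Complex.ofReal_add, add_mul, Complex.exp_add]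
  congr! 4 with θ
  conv_rhs => rw [hη]
  push_cast
  ring

lemma continuous_uncurry_circleMap {k : ℂ → ℂ → ℝ} {b : ℂ} {r : ℝ}
    (hk : ContinuousOn (Function.uncurry k) (sphere b |r| ×ˢ sphere c |R|)) :
    Continuous (Function.uncurry fun θ η => k (circleMap b r θ) (circleMap c R η)) :=
  hk.comp_continuous (f := fun x : ℝ × ℝ => (circleMap b r x.1, circleMap c R x.2))
    (by fun_prop) fun x => ⟨circleMap_mem_sphere' b r x.1, circleMap_mem_sphere' c R x.2⟩

lemma circleIntegrable_circleAverage {k : ℂ → ℂ → ℝ} {b : ℂ} {r : ℝ}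
    (hk : ContinuousOn (Function.uncurry k) (sphere b |r| ×ˢ sphere c |R|)) :
    CircleIntegrable (fun z => Real.circleAverage (k z) c R) b r :=
  (intervalIntegral.continuous_parametric_intervalIntegral_of_continuous'
    (continuous_uncurry_circleMap hk) 0 (2 * π)).const_smul (2 * π)⁻¹ |>.intervalIntegrable _ _

lemma circleAverage_comm {k : ℂ → ℂ → ℝ} {b : ℂ} {r : ℝ}
    (hk : ContinuousOn (Function.uncurry k) (sphere b |r| ×ˢ sphere c |R|)) :
    Real.circleAverage (fun z => Real.circleAverage (k z) c R) b r =
      Real.circleAverage (fun w => Real.circleAverage (fun z => k z w) b r) c R := by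
  simp only [Real.circleAverage, smul_eq_mul, intervalIntegral.integral_const_mul]
  rw [intervalIntegral_intervalIntegral_swap]
  exact ((continuous_uncurry_circleMap hk).continuousOn.integrableOn_compact
    (isCompact_uIcc.prod isCompact_uIcc)).mono_set (prod_mono uIoc_subset_uIcc uIoc_subset_uIcc)

end Rotation

section RadialMean

variable {u : ℂ → ℝ} {ρ : ℝ}

lemma continuousOn_circleAverage_norm (hu : ContinuousOn u (ball 0 ρ)) :
    ContinuousOn (fun z : ℂ => Real.circleAverage u 0 ‖z‖) (ball 0 ρ) := by
  have hradius : ContinuousOn (Real.circleAverage u 0) (Ico 0 ρ) :=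
    Real.ContinuousOn.circleAverage (hu.mono fun z hz => by simpa using hz.2) fun r hr => hr.1
  exact hradius.comp continuous_norm.continuousOn fun z hz =>
    ⟨norm_nonneg z, mem_ball_zero_iff.1 hz⟩

-- The radial mean is an average of the functions `z ↦ u (ζ * z)` over unimodular `ζ`.
lemma SubMeanOn.circleAverage_norm (hsub : SubMeanOn u (ball 0 ρ))
    (hu : ContinuousOn u (ball 0 ρ)) :
    SubMeanOn (fun z => Real.circleAverage u 0 ‖z‖) (ball 0 ρ) := by
  intro c R hR hball
  have hrot : ∀ ζ ∈ sphere (0 : ℂ) |1|, ∀ w ∈ closedBall c R, ζ * w ∈ ball (0 : ℂ) ρ := by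
    intro ζ hζ w hw
    have hw' := hball hw
    rw [mem_ball_zero_iff] at hw' ⊢
    rwa [norm_mul, show ‖ζ‖ = 1 by simpa using hζ, one_mul]
  have hsphere : sphere c |R| ⊆ closedBall c R := by
    rw [abs_of_pos hR]
    exact sphere_subset_closedBall
  have hcont : ContinuousOn (Function.uncurry fun ζ w => u (ζ * w))
      (sphere (0 : ℂ) |1| ×ˢ sphere c |R|) :=
    hu.comp (by fun_prop) fun x hx => hrot _ hx.1 _ (hsphere hx.2)
  simp only [circleAverage_norm_eq]
  rw [← circleAverage_comm hcont]
  refine Real.circleAverage_mono (ContinuousOn.circleIntegrable' ?_)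
    (circleIntegrable_circleAverage hcont) fun ζ hζ => ?_
  · exact hu.comp (by fun_prop) fun ζ hζ => hrot ζ hζ c (mem_closedBall_self hR.le)
  · have hζ1 : ‖ζ‖ = 1 := by simpa using hζ
    rw [circleAverage_mul_left hζ1]
    refine hsub _ R hR fun v hv => ?_
    have hζ0 : ζ ≠ 0 := norm_ne_zero_iff.1 (hζ1.symm ▸ one_ne_zero)
    rw [← mul_div_cancel₀ v hζ0]
    refine hrot ζ hζ _ ?_
    rwa [mem_closedBall, dist_eq_norm, div_sub' hζ0, norm_div, hζ1, div_one, ← dist_eq_norm]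

lemma eq_of_forall_le_of_le_circleAverage {c : ℂ} {R a : ℝ} (hu : ContinuousOn u (sphere c |R|))
    (hle : ∀ z ∈ sphere c |R|, u z ≤ a) (ha : a ≤ Real.circleAverage u c R) {z : ℂ}
    (hz : z ∈ sphere c |R|) : u z = a := by
  refine (hle z hz).antisymm (not_lt.1 fun hlt => ha.not_gt ?_)
  obtain ⟨θ, hθ, rfl⟩ : z ∈ circleMap c R '' Ioc 0 (2 * π) := by rwa [image_circleMap_Ioc]
  calc Real.circleAverage u c R < Real.circleAverage (fun _ => a) c R :=
        (mul_lt_mul_iff_right₀ (by positivity)).2 <|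
          intervalIntegral.integral_lt_integral_of_continuousOn_of_le_of_exists_lt
            Real.two_pi_pos
            (hu.comp (continuous_circleMap c R).continuousOn fun t _ => circleMap_mem_sphere' c R t)
            continuousOn_const (fun t _ => hle _ (circleMap_mem_sphere' c R t))
            ⟨θ, Ioc_subset_Icc_self hθ, hlt⟩
    _ = a := Real.circleAverage_const a c R

-- A circle around an interior maximum that is tangent to the boundary carries the maximum there.
lemma SubMeanOn.exists_norm_eq_forall_le {r : ℝ} (hsub : SubMeanOn u (ball 0 ρ))
    (hu : ContinuousOn u (ball 0 ρ)) (hr : 0 ≤ r) (hrρ : r < ρ) :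
    ∃ w : ℂ, ‖w‖ = r ∧ ∀ z ∈ closedBall 0 r, u z ≤ u w := by
  have hclosed : closedBall (0 : ℂ) r ⊆ ball 0 ρ := closedBall_subset_ball hrρ
  obtain ⟨z₀, hz₀, hmax⟩ := (isCompact_closedBall (0 : ℂ) r).exists_isMaxOn
    ⟨0, mem_closedBall_self hr⟩ (hu.mono hclosed)
  rcases (mem_closedBall_zero_iff.1 hz₀).eq_or_lt with heq | hlt
  · exact ⟨z₀, heq, fun z hz => hmax hz⟩
  have hδ : 0 < r - ‖z₀‖ := sub_pos.2 hlt
  have hdisk : closedBall z₀ (r - ‖z₀‖) ⊆ closedBall 0 r :=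
    closedBall_subset_closedBall' (by rw [dist_zero_right, sub_add_cancel])
  have hsphere : sphere z₀ |r - ‖z₀‖| ⊆ closedBall 0 r := by
    rw [abs_of_pos hδ]
    exact sphere_subset_closedBall.trans hdisk
  have htangent : circleMap z₀ (r - ‖z₀‖) z₀.arg = circleMap 0 r z₀.arg := by
    simp only [circleMap, Complex.ofReal_sub]
    linear_combination -Complex.norm_mul_exp_arg_mul_I z₀
  refine ⟨circleMap z₀ (r - ‖z₀‖) z₀.arg, by simp [htangent, abs_of_nonneg hr], fun z hz => ?_⟩
  rw [eq_of_forall_le_of_le_circleAverage (hu.mono (hsphere.trans hclosed))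
    (fun z hz => hmax (hsphere hz)) (hsub z₀ _ hδ (hdisk.trans hclosed))
    (circleMap_mem_sphere' _ _ _)]
  exact hmax hz

lemma SubMeanOn.monotoneOn_circleAverage (hsub : SubMeanOn u (ball 0 ρ))
    (hu : ContinuousOn u (ball 0 ρ)) : MonotoneOn (Real.circleAverage u 0) (Ico 0 ρ) := by
  intro r hr t ht hrt
  obtain ⟨w, hw, hmax⟩ := (hsub.circleAverage_norm hu).exists_norm_eq_forall_le
    (continuousOn_circleAverage_norm hu) ht.1 ht.2
  have hr' : (r : ℂ) ∈ closedBall (0 : ℂ) t := by simpa [abs_of_nonneg hr.1] using hrt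
  simpa [hw, abs_of_nonneg hr.1] using hmax r hr'

end RadialMean

section Dilation

variable {f : ℂ → ℂ} {p α ρ : ℝ}

lemma ofReal_mul_mem_ball (hρ : 0 ≤ ρ) (hρ1 : ρ ≤ 1) {z : ℂ} (hz : z ∈ ball (0 : ℂ) 1) :
    (ρ : ℂ) * z ∈ ball (0 : ℂ) 1 := by
  rw [mem_ball_zero_iff] at hz ⊢
  rw [norm_mul, Complex.norm_of_nonneg hρ]
  exact (mul_le_of_le_one_left (norm_nonneg z) hρ1).trans_lt hz

lemma continuousOn_norm_rpow (hf : ContinuousOn f (ball 0 1)) (hp : 0 ≤ p) :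
    ContinuousOn (fun z => ‖f z‖ ^ p) (ball 0 1) :=
  hf.norm.rpow_const fun _ _ => Or.inr hp

lemma monotoneOn_circleAverage_norm_rpow (hf : DifferentiableOn ℂ f (ball 0 1)) (hp : 0 ≤ p) :
    MonotoneOn (Real.circleAverage (fun z => ‖f z‖ ^ p) 0) (Ico 0 1) := by
  refine SubMeanOn.monotoneOn_circleAverage ?_ (continuousOn_norm_rpow hf.continuousOn hp)
  simpa using subMeanOn_norm_rpow_mul_norm_rpow (H := fun _ => 1) (t := 0)
    (hf.analyticOnNhd isOpen_ball) analyticOnNhd_const hp le_rfl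

lemma lintegral_bergmanMeasure_dilation {φ : ℂ → ℝ} (hφ : ContinuousOn φ (ball 0 1))
    (h0 : ∀ z, 0 ≤ φ z) (hα : 1 < α) (hρ : 0 ≤ ρ) (hρ1 : ρ ≤ 1) :
    ∫⁻ z, ENNReal.ofReal (φ (ρ * z)) ∂bergmanMeasure α =
      ∫⁻ t in Ioo (0 : ℝ) 1,
        ENNReal.ofReal (Real.circleAverage φ 0 (ρ * √(1 - t ^ (α - 1)⁻¹))) := by
  rw [lintegral_bergmanMeasure_eq_lintegral_circleAverage (φ := fun z => φ (ρ * z))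
    (hφ.comp (by fun_prop) fun z hz => ofReal_mul_mem_ball hρ hρ1 hz) (fun z => h0 _) hα]
  simp [Real.circleAverage, circleMap, mul_assoc]

lemma lintegral_dilation_norm_rpow_le (hf : DifferentiableOn ℂ f (ball 0 1)) (hp : 0 ≤ p)
    (hα : 1 < α) (hρ : 0 ≤ ρ) (hρ1 : ρ ≤ 1) :
    ∫⁻ z, ENNReal.ofReal (‖f (ρ * z)‖ ^ p) ∂bergmanMeasure α ≤
      ∫⁻ z, ENNReal.ofReal (‖f z‖ ^ p) ∂bergmanMeasure α := by
  have hcont := continuousOn_norm_rpow hf.continuousOn hp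
  rw [lintegral_bergmanMeasure_eq_lintegral_circleAverage hcont (fun z => by positivity) hα,
    lintegral_bergmanMeasure_dilation hcont (fun z => by positivity) hα hρ hρ1]
  refine setLIntegral_mono' measurableSet_Ioo fun t ht => ENNReal.ofReal_le_ofReal ?_
  have hr := sqrt_mem_Ioo (one_sub_mem_Ioo (rpow_mem_Ioo (inv_pos.2 (sub_pos.2 hα)) ht))
  have hle := mul_le_of_le_one_left hr.1.le hρ1
  exact monotoneOn_circleAverage_norm_rpow hf hp
    ⟨mul_nonneg hρ hr.1.le, hle.trans_lt hr.2⟩ ⟨hr.1.le, hr.2⟩ hle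

lemma lintegral_norm_rpow_le_of_forall_dilation (hf : DifferentiableOn ℂ f (ball 0 1))
    (hp : 0 ≤ p) {C : ENNReal}
    (hC : ∀ ρ ∈ Ioo (0 : ℝ) 1, ∫⁻ z, ENNReal.ofReal (‖f (ρ * z)‖ ^ p) ∂bergmanMeasure α ≤ C) :
    ∫⁻ z, ENNReal.ofReal (‖f z‖ ^ p) ∂bergmanMeasure α ≤ C := by
  obtain ⟨ρ, -, hρ, hρ_lim⟩ := exists_seq_strictMono_tendsto' (zero_lt_one (α := ℝ))
  have hpointwise : ∀ z ∈ ball (0 : ℂ) 1,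
      Tendsto (fun n => ENNReal.ofReal (‖f (ρ n * z)‖ ^ p)) atTop
        (𝓝 (ENNReal.ofReal (‖f z‖ ^ p))) := by
    intro z hz
    have hdil : Tendsto (fun n => (ρ n : ℂ) * z) atTop (𝓝 z) := by
      simpa using ((Complex.continuous_ofReal.tendsto 1).comp hρ_lim).mul_const z
    have hfz := hf.continuousOn.continuousAt (isOpen_ball.mem_nhds hz)
    exact ENNReal.tendsto_ofReal ((hfz.tendsto.comp hdil).norm.rpow_const (Or.inr hp))
  calc ∫⁻ z, ENNReal.ofReal (‖f z‖ ^ p) ∂bergmanMeasure α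
      = ∫⁻ z, liminf (fun n => ENNReal.ofReal (‖f (ρ n * z)‖ ^ p)) atTop ∂bergmanMeasure α :=
        lintegral_congr_ae <| (ae_bergmanMeasure_mem_ball α).mono fun z hz =>
          (hpointwise z hz).liminf_eq.symm
    _ ≤ liminf (fun n => ∫⁻ z, ENNReal.ofReal (‖f (ρ n * z)‖ ^ p) ∂bergmanMeasure α) atTop :=
        lintegral_liminf_le' fun n => (aestronglyMeasurable_bergmanMeasure
          ((continuousOn_norm_rpow hf.continuousOn hp).comp (by fun_prop) fun z hz =>
            ofReal_mul_mem_ball (hρ n).1.le (hρ n).2.le hz) α).aemeasurable.ennreal_ofReal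
    _ ≤ C := liminf_le_of_le (by isBoundedDefault) fun b hb =>
        let ⟨n, hn⟩ := hb.exists
        hn.trans (hC _ (hρ n))

theorem lintegral_norm_rpow_mul_le {κ : ℝ} (hf : DifferentiableOn ℂ f (ball 0 1)) (hp : 0 < p)
    (hα : 1 < α) (hκ : 1 ≤ κ) :
    ∫⁻ z, ENNReal.ofReal (‖f z‖ ^ (p * κ)) ∂bergmanMeasure (α * κ) ≤
      (∫⁻ z, ENNReal.ofReal (‖f z‖ ^ p) ∂bergmanMeasure α) ^ κ := by
  have hκ0 : 0 ≤ κ := zero_le_one.trans hκ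
  refine lintegral_norm_rpow_le_of_forall_dilation hf (mul_nonneg hp.le hκ0) fun ρ hρ => ?_
  have hclosure : DiffContOnCl ℂ (fun z => f (ρ * z)) (ball 0 1) := by
    refine DifferentiableOn.diffContOnCl (hf.comp (by fun_prop) fun z hz => ?_)
    rw [closure_ball _ one_ne_zero, mem_closedBall_zero_iff] at hz
    rw [mem_ball_zero_iff, norm_mul, Complex.norm_of_nonneg hρ.1.le]
    exact (mul_le_of_le_one_right hρ.1.le hz).trans_lt hρ.2
  exact (lintegral_norm_rpow_le_of_diffContOnCl hclosure hp hα hκ).trans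
    (ENNReal.rpow_le_rpow (lintegral_dilation_norm_rpow_le hf hp.le hα hρ.1.le hρ.2.le) hκ0)

end Dilation

/-! ### Convexity of circle means in the squared radius -/

section CircleDerivative

variable {u a b : ℂ → ℂ} {r s : ℝ}

lemma HasWirtingerDerivAt.comp_curve {γ : ℝ → ℂ} {a' b' v : ℂ} {t : ℝ}
    (hu : HasWirtingerDerivAt u a' b' (γ t)) (hγ : HasDerivAt γ v t) :
    HasDerivAt (fun t => u (γ t)) (a' * v + b' * conj v) t := by
  simpa [Function.comp_def] using HasFDerivAt.comp_hasDerivAt t hu hγ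

lemma hasDerivAt_circleMap_radius (r θ : ℝ) :
    HasDerivAt (fun r => circleMap 0 r θ) (circleMap 0 1 θ) r := by
  simpa [circleMap] using
    (Complex.ofRealCLM.hasDerivAt (x := r)).mul_const (Complex.exp (θ * I))

lemma circleAverage_mul_eq_circleAverage_conj_mul
    (hu : ∀ z ∈ ball 0 1, HasWirtingerDerivAt u (a z) (b z) z)
    (ha : ContinuousOn a (ball 0 1)) (hb : ContinuousOn b (ball 0 1)) (hr : r ∈ Ico (0 : ℝ) 1) :
    Real.circleAverage (fun z => z * a z) 0 r = Real.circleAverage (fun z => conj z * b z) 0 r := by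
  have hza : CircleIntegrable (fun z => z * a z) 0 r :=
    circleIntegrable_of_continuousOn_ball (continuousOn_id.mul ha) hr
  have hzb : CircleIntegrable (fun z => conj z * b z) 0 r :=
    circleIntegrable_of_continuousOn_ball (Complex.continuous_conj.continuousOn.mul hb) hr
  have hangular : ∀ θ, HasDerivAt (fun θ => u (circleMap 0 r θ))
      (I * (circleMap 0 r θ * a (circleMap 0 r θ) -
        conj (circleMap 0 r θ) * b (circleMap 0 r θ))) θ := by
    intro θ
    convert (hu _ (circleMap_zero_mem_ball hr.1 hr.2 θ)).comp_curve (hasDerivAt_circleMap 0 r θ)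
      using 1
    simp only [map_mul, Complex.conj_I]
    ring
  have hloop := intervalIntegral.integral_eq_sub_of_hasDerivAt (a := 0) (b := 2 * π)
    (fun θ _ => hangular θ) ((hza.sub hzb).const_mul I)
  rw [show u (circleMap 0 r (2 * π)) = u (circleMap 0 r 0) by simp [circleMap], sub_self,
    intervalIntegral.integral_const_mul, mul_eq_zero_iff_left Complex.I_ne_zero,
    intervalIntegral.integral_sub hza hzb, sub_eq_zero] at hloop
  simp only [Real.circleAverage, hloop]

lemma hasDerivAt_circleAverage
    (hu : ∀ z ∈ ball 0 1, HasWirtingerDerivAt u (a z) (b z) z)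
    (ha : ContinuousOn a (ball 0 1)) (hb : ContinuousOn b (ball 0 1)) (hr : r ∈ Ioo (0 : ℝ) 1) :
    HasDerivAt (Real.circleAverage u 0)
      (Real.circleAverage (fun z => r⁻¹ • (z * a z + conj z * b z)) 0 r) r := by
  obtain ⟨R, hrR, hR1⟩ := exists_between hr.2
  have hclosed : closedBall (0 : ℂ) R ⊆ ball 0 1 := closedBall_subset_ball hR1
  obtain ⟨A, hA⟩ := (isCompact_closedBall (0 : ℂ) R).exists_bound_of_continuousOn (ha.mono hclosed)
  obtain ⟨B, hB⟩ := (isCompact_closedBall (0 : ℂ) R).exists_bound_of_continuousOn (hb.mono hclosed)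
  have hu_cont : ContinuousOn u (ball 0 1) := fun z hz =>
    (hu z hz).differentiableAt.continuousAt.continuousWithinAt
  have hcircle : ∀ {g : ℂ → ℂ}, ContinuousOn g (ball 0 1) → ∀ t ∈ Ioo 0 R,
      Continuous fun θ => g (circleMap 0 t θ) := fun hg t ht =>
    hg.comp_continuous (continuous_circleMap 0 t) (circleMap_zero_mem_ball ht.1.le (ht.2.trans hR1))
  have hmem : ∀ t ∈ Ioo 0 R, ∀ θ, circleMap 0 t θ ∈ closedBall (0 : ℂ) R := fun t ht θ =>
    ball_subset_closedBall (circleMap_zero_mem_ball ht.1.le ht.2 θ)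
  have hnhds : Ioo 0 R ∈ 𝓝 r := Ioo_mem_nhds hr.1 hrR
  have hderiv := intervalIntegral.hasDerivAt_integral_of_dominated_loc_of_deriv_le (μ := volume)
    (a := 0) (b := 2 * π) (F := fun t θ => u (circleMap 0 t θ))
    (F' := fun t θ => a (circleMap 0 t θ) * circleMap 0 1 θ +
      b (circleMap 0 t θ) * conj (circleMap 0 1 θ))
    (bound := fun _ => A + B) hnhds
    (eventually_of_mem hnhds fun t ht => (hcircle hu_cont t ht).aestronglyMeasurable)
    ((hcircle hu_cont r ⟨hr.1, hrR⟩).intervalIntegrable _ _)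
    (Continuous.aestronglyMeasurable <| ((hcircle ha r ⟨hr.1, hrR⟩).mul (by fun_prop)).add
      ((hcircle hb r ⟨hr.1, hrR⟩).mul (by fun_prop)))
    (Eventually.of_forall fun θ _ t ht => (norm_add_le _ _).trans <| by
      simpa using add_le_add (hA _ (hmem t ht θ)) (hB _ (hmem t ht θ)))
    intervalIntegrable_const
    (Eventually.of_forall fun θ _ t ht =>
      (hu _ (hclosed (hmem t ht θ))).comp_curve (γ := fun t => circleMap 0 t θ)
        (hasDerivAt_circleMap_radius t θ))
  refine (hderiv.2.const_smul (2 * π)⁻¹).congr_deriv ?_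
  simp only [Real.circleAverage]
  congr! 3 with θ
  have hr0 : (r : ℂ) ≠ 0 := mod_cast hr.1.ne'
  simp only [circleMap, zero_add, Complex.ofReal_one, one_mul, map_mul, Complex.conj_ofReal,
    smul_add, Complex.real_smul, Complex.ofReal_inv]
  field_simp

lemma hasDerivAt_circleAverage_sqrt
    (hu : ∀ z ∈ ball 0 1, HasWirtingerDerivAt u (a z) (b z) z)
    (ha : ContinuousOn a (ball 0 1)) (hb : ContinuousOn b (ball 0 1)) (hs : s ∈ Ioo (0 : ℝ) 1) :
    HasDerivAt (fun s => Real.circleAverage u 0 √s)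
      (s⁻¹ • Real.circleAverage (fun z => conj z * b z) 0 √s) s := by
  have hr := sqrt_mem_Ioo hs
  have hza : CircleIntegrable (fun z => z * a z) 0 √s :=
    circleIntegrable_of_continuousOn_ball (continuousOn_id.mul ha) (Ioo_subset_Ico_self hr)
  have hzb : CircleIntegrable (fun z => conj z * b z) 0 √s :=
    circleIntegrable_of_continuousOn_ball (Complex.continuous_conj.continuousOn.mul hb)
      (Ioo_subset_Ico_self hr)
  refine ((hasDerivAt_circleAverage hu ha hb hr).scomp s
    (Real.hasDerivAt_sqrt hs.1.ne')).congr_deriv ?_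
  rw [Real.circleAverage_fun_smul, Real.circleAverage_fun_add hza hzb,
    circleAverage_mul_eq_circleAverage_conj_mul hu ha hb (Ioo_subset_Ico_self hr), ← two_smul ℝ,
    smul_smul, smul_smul]
  congr 1
  have hsqrt := hr.1.ne'
  nth_rw 3 [← Real.sq_sqrt hs.1.le]
  field_simp

end CircleDerivative

section NormPower

variable {σ : ℝ}

lemma hasWirtingerDerivAt_rpow_mul_conj_zero (hσ : 0 ≤ σ) :
    HasWirtingerDerivAt (fun ζ => (((‖ζ‖ ^ 2) ^ σ : ℝ) : ℂ) * conj ζ) 0 ((0 : ℝ) ^ σ : ℝ) 0 := by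
  have hcont : Continuous fun ζ : ℂ => (((‖ζ‖ ^ 2) ^ σ : ℝ) : ℂ) :=
    Complex.continuous_ofReal.comp ((by fun_prop : Continuous fun ζ : ℂ => ‖ζ‖ ^ 2).rpow_const
      fun _ => Or.inr hσ)
  have hsmall : (fun ζ : ℂ => (((‖ζ‖ ^ 2) ^ σ : ℝ) : ℂ) - ((0 : ℝ) ^ σ : ℝ)) =o[𝓝 0]
      fun _ => (1 : ℂ) := by
    rw [Asymptotics.isLittleO_one_iff]
    exact (hcont.sub continuous_const).tendsto' 0 0 (by simp)
  have hconj : (fun ζ : ℂ => conj ζ) =O[𝓝 0] fun ζ => ζ :=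
    Asymptotics.isBigO_of_le _ fun ζ => by simp
  refine HasFDerivAt.of_isLittleO ?_
  simpa [sub_mul] using hsmall.mul_isBigO hconj

lemma hasWirtingerDerivAt_rpow_mul_conj (hσ : 0 ≤ σ) (ζ : ℂ) :
    HasWirtingerDerivAt (fun ζ => (((‖ζ‖ ^ 2) ^ σ : ℝ) : ℂ) * conj ζ)
      ((σ * (‖ζ‖ ^ 2) ^ (σ - 1) : ℝ) * conj ζ ^ 2) ((σ + 1) * ((‖ζ‖ ^ 2) ^ σ : ℝ)) ζ := by
  rcases eq_or_ne ζ 0 with rfl | hζ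
  · refine (hasWirtingerDerivAt_rpow_mul_conj_zero hσ).congr_deriv (by simp) ?_
    rcases hσ.eq_or_lt with rfl | hσ
    · simp
    · simp [Real.zero_rpow hσ.ne']
  have hpos : 0 < ‖ζ‖ ^ 2 := by positivity
  have hnorm := hasWirtingerDerivAt_norm_sq (differentiableAt_id (𝕜 := ℂ) (x := ζ))
  have hpow := hnorm.ofReal_comp (Real.hasDerivAt_rpow_const (p := σ) (Or.inl hpos.ne'))
  have hconj := (hasWirtingerDerivAt_of_hasDerivAt (hasDerivAt_id ζ)).conj_comp
  refine (hpow.mul hconj).congr_deriv (by simp; ring) ?_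
  have hsplit : ((‖ζ‖ ^ 2) ^ σ : ℝ) = (‖ζ‖ ^ 2) ^ (σ - 1) * ‖ζ‖ ^ 2 := by
    rw [← Real.rpow_add_one hpos.ne', sub_add_cancel]
  have hmul : ζ * conj ζ = ((‖ζ‖ ^ 2 : ℝ) : ℂ) := by rw [Complex.mul_conj']; norm_cast
  simp only [deriv_id, id_eq, map_one, mul_one]
  rw [hsplit]
  push_cast [← hmul]
  ring

lemma continuous_rpow_mul_conj_sq (hσ : 0 ≤ σ) :
    Continuous fun ζ : ℂ => ((σ * (‖ζ‖ ^ 2) ^ (σ - 1) : ℝ) : ℂ) * conj ζ ^ 2 := by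
  rcases hσ.eq_or_lt with rfl | hσ
  · simpa using continuous_const
  refine continuous_iff_continuousAt.2 fun ζ => ?_
  rcases eq_or_ne ζ 0 with rfl | hζ
  · have hbound : Continuous fun ζ : ℂ => σ * (‖ζ‖ ^ 2) ^ σ :=
      continuous_const.mul ((by fun_prop : Continuous fun ζ : ℂ => ‖ζ‖ ^ 2).rpow_const
        fun _ => Or.inr hσ.le)
    rw [ContinuousAt, map_zero, zero_pow two_ne_zero, mul_zero]
    refine squeeze_zero_norm' (a := fun ζ => σ * (‖ζ‖ ^ 2) ^ σ) (.of_forall fun ζ => ?_)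
      (hbound.tendsto' 0 0 (by simp [Real.zero_rpow hσ.ne']))
    rcases eq_or_ne ζ 0 with rfl | hζ
    · simp [Real.zero_rpow hσ.ne']
    have hpos : 0 < ‖ζ‖ ^ 2 := by positivity
    rw [norm_mul, norm_pow, RCLike.norm_conj, Complex.norm_real,
      Real.norm_of_nonneg (by positivity), mul_assoc, ← Real.rpow_add_one hpos.ne', sub_add_cancel]
  · have hpos : ‖ζ‖ ^ 2 ≠ 0 := by positivity
    have hrpow : ContinuousAt (fun ζ : ℂ => (‖ζ‖ ^ 2) ^ (σ - 1)) ζ :=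
      (by fun_prop : ContinuousAt (fun ζ : ℂ => ‖ζ‖ ^ 2) ζ).rpow_const (Or.inl hpos)
    exact (Complex.continuous_ofReal.continuousAt.comp (continuousAt_const.mul hrpow)).mul
      (by fun_prop)

end NormPower

section CircleConvexity

variable {F G : ℂ → ℂ} {σ s : ℝ} {z : ℂ}

lemma hasWirtingerDerivAt_norm_sq_rpow (hF : DifferentiableAt ℂ F z) (hσ : 0 ≤ σ) :
    HasWirtingerDerivAt (fun z => (((‖F z‖ ^ 2) ^ (σ + 1) : ℝ) : ℂ))
      ((σ + 1) * (deriv F z * (((‖F z‖ ^ 2) ^ σ : ℝ) * conj (F z))))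
      ((σ + 1) * (conj (deriv F z) * (((‖F z‖ ^ 2) ^ σ : ℝ) * F z))) z := by
  have hpow := (hasWirtingerDerivAt_norm_sq hF).ofReal_comp
    (Real.hasDerivAt_rpow_const (p := σ + 1) (Or.inr (by linarith)))
  rw [add_sub_cancel_right] at hpow
  exact hpow.congr_deriv (by push_cast; ring) (by push_cast; ring)

lemma hasWirtingerDerivAt_mul_rpow_mul_conj (hG : DifferentiableAt ℂ G z)
    (hF : DifferentiableAt ℂ F z) (hσ : 0 ≤ σ) :
    HasWirtingerDerivAt (fun z => G z * (((‖F z‖ ^ 2) ^ σ : ℝ) * conj (F z)))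
      (deriv G z * (((‖F z‖ ^ 2) ^ σ : ℝ) * conj (F z)) +
        G z * ((σ * (‖F z‖ ^ 2) ^ (σ - 1) : ℝ) * conj (F z) ^ 2 * deriv F z))
      (G z * ((σ + 1) * ((‖F z‖ ^ 2) ^ σ : ℝ) * conj (deriv F z))) z :=
  ((hasWirtingerDerivAt_of_hasDerivAt hG.hasDerivAt).mul
    ((hasWirtingerDerivAt_rpow_mul_conj hσ (F z)).comp_hasDerivAt_inner hF.hasDerivAt)).congr_deriv
    rfl (by ring)

lemma hasDerivAt_circleAverage_sqrt_re {u a b : ℂ → ℂ}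
    (hu : ∀ z ∈ ball 0 1, HasWirtingerDerivAt u (a z) (b z) z)
    (ha : ContinuousOn a (ball 0 1)) (hb : ContinuousOn b (ball 0 1)) (hs : s ∈ Ioo (0 : ℝ) 1) :
    HasDerivAt (fun s => Real.circleAverage (fun z => (u z).re) 0 √s)
      (s⁻¹ * Real.circleAverage (fun z => (conj z * b z).re) 0 √s) s := by
  have hre {g : ℂ → ℂ} (hg : ContinuousOn g (ball 0 1)) {t : ℝ} (ht : t ∈ Ioo (0 : ℝ) 1) :
      Real.circleAverage (fun z => (g z).re) 0 √t = (Real.circleAverage g 0 √t).re :=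
    Complex.reCLM.circleAverage_comp_comm
      (circleIntegrable_of_continuousOn_ball hg (Ioo_subset_Ico_self (sqrt_mem_Ioo ht)))
  have hu_cont : ContinuousOn u (ball 0 1) := fun z hz =>
    (hu z hz).differentiableAt.continuousAt.continuousWithinAt
  refine ((Complex.reCLM.hasFDerivAt.comp_hasDerivAt s
    (hasDerivAt_circleAverage_sqrt hu ha hb hs)).congr_of_eventuallyEq ?_).congr_deriv ?_
  · filter_upwards [Ioo_mem_nhds hs.1 hs.2] with t ht using hre hu_cont ht
  · rw [hre (g := fun z => conj z * b z) (Complex.continuous_conj.continuousOn.mul hb) hs]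
    simp

/-- The derivative `s ∂ₛ` of the mean of `|F| ^ (2σ + 2)` over the circle `|z|² = s`, that is, the
mean of `z ∂(|F| ^ (2σ + 2))`. -/
noncomputable def circleFlux (F : ℂ → ℂ) (σ s : ℝ) : ℝ :=
  Real.circleAverage
    (fun z => (σ + 1) * (z * deriv F z * (((‖F z‖ ^ 2) ^ σ : ℝ) * conj (F z))).re) 0 √s

lemma continuousOn_ofReal_norm_sq_rpow (hF : ContinuousOn F (ball 0 1)) (hσ : 0 ≤ σ) :
    ContinuousOn (fun z => (((‖F z‖ ^ 2) ^ σ : ℝ) : ℂ)) (ball 0 1) :=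
  Complex.continuous_ofReal.comp_continuousOn ((hF.norm.pow 2).rpow_const fun _ _ => Or.inr hσ)

lemma hasDerivAt_circleAverage_norm_sq_rpow (hF : DifferentiableOn ℂ F (ball 0 1)) (hσ : 0 ≤ σ)
    (hs : s ∈ Ioo (0 : ℝ) 1) :
    HasDerivAt (fun s => Real.circleAverage (fun z => (‖F z‖ ^ 2) ^ (σ + 1)) 0 √s)
      (s⁻¹ * circleFlux F σ s) s := by
  have hF' : ContinuousOn (deriv F) (ball 0 1) := (hF.deriv isOpen_ball).continuousOn
  have hpow := continuousOn_ofReal_norm_sq_rpow hF.continuousOn hσ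
  have hconj {g : ℂ → ℂ} (hg : ContinuousOn g (ball 0 1)) :
      ContinuousOn (fun z => conj (g z)) (ball 0 1) :=
    Complex.continuous_conj.comp_continuousOn hg
  refine (hasDerivAt_circleAverage_sqrt_re (fun z hz =>
    hasWirtingerDerivAt_norm_sq_rpow (hF.differentiableAt (isOpen_ball.mem_nhds hz)) hσ)
    (continuousOn_const.mul (hF'.mul (hpow.mul (hconj hF.continuousOn))))
    (continuousOn_const.mul ((hconj hF').mul (hpow.mul hF.continuousOn))) hs).congr_deriv ?_
  congr 2 with z
  rw [← Complex.conj_re, ← Complex.re_ofReal_mul]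
  congr 1
  simp only [map_mul, map_add, map_one, Complex.conj_conj, Complex.conj_ofReal, Complex.ofReal_add,
    Complex.ofReal_one]
  ring

lemma re_conj_mul_mul_mul_conj (z A : ℂ) (σ T : ℝ) :
    (conj z * ((σ + 1) * (z * A) * ((σ + 1) * T * conj A))).re =
      ‖z‖ ^ 2 * ((σ + 1) ^ 2 * (T * ‖A‖ ^ 2)) := by
  have hz := Complex.mul_conj' z
  have hA := Complex.mul_conj' A
  rw [← Complex.ofReal_re (‖z‖ ^ 2 * _)]
  congr 1
  push_cast
  linear_combination (σ + 1 : ℂ) ^ 2 * T * (A * conj A * hz + ‖z‖ ^ 2 * hA)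

lemma hasDerivAt_circleFlux (hF : DifferentiableOn ℂ F (ball 0 1)) (hσ : 0 ≤ σ)
    (hs : s ∈ Ioo (0 : ℝ) 1) :
    HasDerivAt (circleFlux F σ)
      ((σ + 1) ^ 2 * Real.circleAverage (fun z => ‖F z‖ ^ (2 * σ) * ‖deriv F z‖ ^ (2 : ℝ)) 0 √s)
      s := by
  have hF' : DifferentiableOn ℂ (deriv F) (ball 0 1) := hF.deriv isOpen_ball
  have hG : DifferentiableOn ℂ (fun z => (σ + 1) * (z * deriv F z)) (ball 0 1) :=
    (differentiableOn_id.mul hF').const_mul _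
  have hpow := continuousOn_ofReal_norm_sq_rpow hF.continuousOn hσ
  have hconj {g : ℂ → ℂ} (hg : ContinuousOn g (ball 0 1)) :
      ContinuousOn (fun z => conj (g z)) (ball 0 1) :=
    Complex.continuous_conj.comp_continuousOn hg
  have hderiv := hasDerivAt_circleAverage_sqrt_re (fun z hz =>
    hasWirtingerDerivAt_mul_rpow_mul_conj (hG.differentiableAt (isOpen_ball.mem_nhds hz))
      (hF.differentiableAt (isOpen_ball.mem_nhds hz)) hσ)
    (((hG.deriv isOpen_ball).continuousOn.mul (hpow.mul (hconj hF.continuousOn))).add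
      (hG.continuousOn.mul (((continuous_rpow_mul_conj_sq hσ).comp_continuousOn
        hF.continuousOn).mul hF'.continuousOn)))
    (hG.continuousOn.mul ((continuousOn_const.mul hpow).mul (hconj hF'.continuousOn))) hs
  refine (hderiv.congr_of_eventuallyEq ?_).congr_deriv ?_
  · refine .of_forall fun t => ?_
    simp only [circleFlux, ← Complex.re_ofReal_mul]
    congr! 3
    push_cast
    ring
  · rw [← smul_eq_mul (a := s⁻¹), ← smul_eq_mul (a := (σ + 1) ^ 2),
      ← Real.circleAverage_fun_smul, ← Real.circleAverage_fun_smul]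
    refine Real.circleAverage_congr_sphere fun z hz => ?_
    have hz : ‖z‖ ^ 2 = s := by
      rw [mem_sphere_zero_iff_norm.1 hz, sq_abs, Real.sq_sqrt hs.1.le]
    simp only [smul_eq_mul, ← hz]
    rw [re_conj_mul_mul_mul_conj, Real.rpow_two, Real.rpow_mul (norm_nonneg _), Real.rpow_two,
      inv_mul_cancel_left₀ (hz ▸ hs.1.ne')]

end CircleConvexity

section RadialConvexity

variable {F : ℂ → ℂ} {σ q : ℝ}

lemma convexOn_Ico_of_hasDerivAt {f f' : ℝ → ℝ} {a b : ℝ} (hf : ContinuousOn f (Ico a b))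
    (hf' : ∀ s ∈ Ioo a b, HasDerivAt f (f' s) s) (hmono : MonotoneOn f' (Ioo a b)) :
    ConvexOn ℝ (Ico a b) f := by
  refine MonotoneOn.convexOn_of_deriv (convex_Ico a b) hf ?_ ?_ <;> rw [interior_Ico]
  · exact fun s hs => (hf' s hs).differentiableAt.differentiableWithinAt
  · exact hmono.congr fun s hs => (hf' s hs).deriv.symm

lemma continuousOn_circleAverage_sqrt {u : ℂ → ℝ} (hu : ContinuousOn u (ball 0 1)) :
    ContinuousOn (fun s => Real.circleAverage u 0 √s) (Ico 0 1) := by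
  have hmean : ContinuousOn (Real.circleAverage u 0) (Ico 0 1) :=
    Real.ContinuousOn.circleAverage (hu.mono fun z hz => by simpa using hz.2) fun r hr => hr.1
  exact hmean.comp Real.continuous_sqrt.continuousOn fun s hs => sqrt_mem_Ico hs

lemma monotoneOn_circleAverage_norm_rpow_mul_norm_deriv_sq
    (hF : DifferentiableOn ℂ F (ball 0 1)) (hσ : 0 ≤ σ) :
    MonotoneOn (Real.circleAverage (fun z => ‖F z‖ ^ (2 * σ) * ‖deriv F z‖ ^ (2 : ℝ)) 0)
      (Ico 0 1) := by
  have hF' : DifferentiableOn ℂ (deriv F) (ball 0 1) := hF.deriv isOpen_ball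
  exact (subMeanOn_norm_rpow_mul_norm_rpow (hF.analyticOnNhd isOpen_ball)
    (hF'.analyticOnNhd isOpen_ball) (by positivity) zero_le_two).monotoneOn_circleAverage
    ((continuousOn_norm_rpow hF.continuousOn (by positivity)).mul
      (continuousOn_norm_rpow hF'.continuousOn zero_le_two))

lemma convexOn_circleFlux (hF : DifferentiableOn ℂ F (ball 0 1)) (hσ : 0 ≤ σ) :
    ConvexOn ℝ (Ico 0 1) (circleFlux F σ) := by
  have hF' : ContinuousOn (deriv F) (ball 0 1) := (hF.deriv isOpen_ball).continuousOn
  refine convexOn_Ico_of_hasDerivAt (continuousOn_circleAverage_sqrt ?_)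
    (fun s hs => hasDerivAt_circleFlux hF hσ hs) fun s hs t ht hst => ?_
  · exact continuousOn_const.mul (Complex.continuous_re.comp_continuousOn
      ((continuousOn_id.mul hF').mul ((continuousOn_ofReal_norm_sq_rpow hF.continuousOn hσ).mul
        (Complex.continuous_conj.comp_continuousOn hF.continuousOn))))
  · gcongr
    exact monotoneOn_circleAverage_norm_rpow_mul_norm_deriv_sq hF hσ
      (Ioo_subset_Ico_self (sqrt_mem_Ioo hs)) (Ioo_subset_Ico_self (sqrt_mem_Ioo ht))
      (Real.sqrt_le_sqrt hst)

lemma monotoneOn_circleFlux_div (hF : DifferentiableOn ℂ F (ball 0 1)) (hσ : 0 ≤ σ) :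
    MonotoneOn (fun s => s⁻¹ * circleFlux F σ s) (Ioo 0 1) := by
  have hzero : circleFlux F σ 0 = 0 := by simp [circleFlux]
  intro s hs t ht hst
  have hsecant := (convexOn_circleFlux hF hσ).secant_mono (a := 0) (by simp)
    (Ioo_subset_Ico_self hs) (Ioo_subset_Ico_self ht) hs.1.ne' ht.1.ne' hst
  simpa [hzero, div_eq_inv_mul] using hsecant

lemma convexOn_circleAverage_norm_rpow_sqrt (hF : DifferentiableOn ℂ F (ball 0 1)) (hq : 2 ≤ q) :
    ConvexOn ℝ (Ico 0 1) fun s => Real.circleAverage (fun z => ‖F z‖ ^ q) 0 √s := by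
  have hσ : 0 ≤ q / 2 - 1 := by linarith
  have hnorm : (fun z => ‖F z‖ ^ q) = fun z => (‖F z‖ ^ 2) ^ (q / 2 - 1 + 1) := by
    ext z
    rw [← Real.rpow_natCast_mul (norm_nonneg _)]
    congr 1
    push_cast
    ring
  refine convexOn_Ico_of_hasDerivAt (continuousOn_circleAverage_sqrt
    (continuousOn_norm_rpow hF.continuousOn (by linarith))) ?_ (monotoneOn_circleFlux_div hF hσ)
  rw [hnorm]
  exact fun s hs => hasDerivAt_circleAverage_norm_sq_rpow hF hσ hs

end RadialConvexity

/-! ### Comparison of weighted means by a single crossing -/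

section SingleCrossing

lemma exists_sign_change_of_convexOn {g : ℝ → ℝ} (hg : ConvexOn ℝ (Icc 0 1) g)
    (hcont : ContinuousOn g (Icc 0 1)) (h0 : 0 < g 0) (h1 : g 1 = 0) :
    ∃ c ∈ Ioc (0 : ℝ) 1, ∀ v ∈ Ioo 0 1, (v ≤ c → 0 ≤ g v) ∧ (c ≤ v → g v ≤ 0) := by
  by_cases! hnonneg : ∀ v ∈ Ioo 0 1, 0 ≤ g v
  · exact ⟨1, by simp, fun v hv => ⟨fun _ => hnonneg v hv, fun h => absurd hv.2 h.not_gt⟩⟩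
  obtain ⟨w, hw, hgw⟩ := hnonneg
  obtain ⟨c, hc, hgc⟩ := intermediate_value_Icc' hw.1.le
    (hcont.mono (Icc_subset_Icc_right hw.2.le)) ⟨hgw.le, h0.le⟩
  have hc1 : c < 1 := hc.2.trans_lt hw.2
  have hc0 : 0 < c := hc.1.lt_of_ne fun h => h0.ne' (h ▸ hgc)
  have hone : (1 : ℝ) ∈ Icc (0 : ℝ) 1 := by simp
  refine ⟨c, ⟨hc0, hc1.le⟩, fun v hv => ⟨fun hvc => ?_, fun hcv => ?_⟩⟩
  · by_contra! hgv
    have hvc : v < c := hvc.lt_of_ne fun h => hgv.ne (h ▸ hgc)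
    have hseg : c ∈ openSegment ℝ v 1 := by
      rw [openSegment_eq_Ioo hv.2]
      exact ⟨hvc, hc1⟩
    have := hg.lt_right_of_left_lt (Ioo_subset_Icc_self hv) hone hseg (hgv.trans_eq hgc.symm)
    exact this.ne (hgc.trans h1.symm)
  · simpa [hgc, h1] using hg.le_max_of_mem_Icc ⟨hc0.le, hc1.le⟩ hone ⟨hcv, hv.2.le⟩

lemma exists_crossing_one_sub_rpow {c κ : ℝ} (hc : 1 ≤ c) (hκ : 1 < κ) :
    ∃ v₀ ∈ Ioc (0 : ℝ) 1, ∀ v ∈ Ioo (0 : ℝ) 1,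
      (v ≤ v₀ → (1 - v ^ c) / κ ≤ 1 - v) ∧ (v₀ ≤ v → 1 - v ≤ (1 - v ^ c) / κ) := by
  have hκ0 : 0 < κ := one_pos.trans hκ
  have hconvex : ConvexOn ℝ (Icc 0 1) fun v : ℝ => v ^ c + ((κ - 1) + -κ * v) :=
    ((convexOn_rpow hc).subset Icc_subset_Ici_self (convex_Icc 0 1)).add
      ((convexOn_const _ (convex_Icc 0 1)).add
        ((LinearMap.mulLeft ℝ (-κ)).convexOn (convex_Icc 0 1)))
  have hcont : Continuous fun v : ℝ => v ^ c + ((κ - 1) + -κ * v) :=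
    (Real.continuous_rpow_const (by linarith)).add (by fun_prop)
  obtain ⟨v₀, hv₀, hsign⟩ := exists_sign_change_of_convexOn hconvex hcont.continuousOn
    (by simpa [Real.zero_rpow (by linarith : c ≠ 0)] using hκ)
    (by rw [Real.one_rpow]; ring)
  refine ⟨v₀, hv₀, fun v hv => ⟨fun h => ?_, fun h => ?_⟩⟩
  · rw [div_le_iff₀ hκ0]
    linarith [(hsign v hv).1 h]
  · rw [le_div_iff₀ hκ0]
    linarith [(hsign v hv).2 h]

lemma rightDeriv_mul_sub_le {m : ℝ → ℝ} {S : Set ℝ} {c x y : ℝ} (hm : ConvexOn ℝ S m)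
    (hc : c ∈ interior S) (hx : x ∈ interior S) (hy : y ∈ S)
    (h : c ≤ x ∧ x ≤ y ∨ y ≤ x ∧ x ≤ c) :
    derivWithin m (Ioi c) c * (y - x) ≤ m y - m x := by
  rcases eq_or_ne x y with rfl | hxy
  · simp
  rcases h with ⟨hcx, hxy'⟩ | ⟨hyx, hxc⟩
  · have hlt : x < y := hxy'.lt_of_ne hxy
    have hslope := (hm.monotoneOn_rightDeriv hc hx hcx).trans
      (hm.rightDeriv_le_slope_of_mem_interior hx hy hlt)
    rwa [slope_def_field, le_div_iff₀ (sub_pos.2 hlt)] at hslope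
  · have hlt : y < x := hyx.lt_of_ne hxy.symm
    have hslope := ((hm.slope_le_leftDeriv_of_mem_interior hy hx hlt).trans
      (hm.leftDeriv_le_rightDeriv_of_mem_interior hx)).trans (hm.monotoneOn_rightDeriv hx hc hxc)
    rw [slope_def_field, div_le_iff₀ (sub_pos.2 hlt)] at hslope
    linarith

lemma exists_mul_sub_le_of_convexOn_of_monotoneOn {m : ℝ → ℝ} {c : ℝ}
    (hm : ConvexOn ℝ (Ico 0 1) m) (hmono : MonotoneOn m (Ico 0 1)) (hc : c ∈ Ico (0 : ℝ) 1) :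
    ∃ K, ∀ x ∈ Ioo (0 : ℝ) 1, ∀ y ∈ Ioo (0 : ℝ) 1, (c ≤ x ∧ x ≤ y ∨ y ≤ x ∧ x ≤ c) →
      K * (y - x) ≤ m y - m x := by
  rcases hc.1.eq_or_lt with rfl | hc0
  · refine ⟨0, fun x hx y hy h => ?_⟩
    have hxy : x ≤ y := h.elim And.right fun h => absurd hx.1 h.2.not_gt
    simpa using hmono (Ioo_subset_Ico_self hx) (Ioo_subset_Ico_self hy) hxy
  · refine ⟨derivWithin m (Ioi c) c, fun x hx y hy h => rightDeriv_mul_sub_le hm ?_ ?_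
      (Ioo_subset_Ico_self hy) h⟩ <;> rw [interior_Ico]
    exacts [⟨hc0, hc.2⟩, hx]

lemma lintegral_ofReal_le_of_mul_sub_le {Ω : Type*} [MeasurableSpace Ω] {μ : Measure Ω}
    {f g x y : Ω → ℝ} {K : ℝ} (hf : AEStronglyMeasurable f μ) (hg : AEStronglyMeasurable g μ)
    (hf0 : 0 ≤ᵐ[μ] f) (hg0 : 0 ≤ᵐ[μ] g) (hx : Integrable x μ) (hy : Integrable y μ)
    (hxy : ∫ u, x u ∂μ = ∫ u, y u ∂μ) (hK : ∀ᵐ u ∂μ, K * (y u - x u) ≤ g u - f u) :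
    ∫⁻ u, ENNReal.ofReal (f u) ∂μ ≤ ∫⁻ u, ENNReal.ofReal (g u) ∂μ := by
  by_cases htop : ∫⁻ u, ENNReal.ofReal (g u) ∂μ = ⊤
  · exact htop ▸ le_top
  have hg_int : Integrable g μ :=
    ⟨hg, (hasFiniteIntegral_iff_ofReal hg0).2 (lt_top_iff_ne_top.2 htop)⟩
  have hlin : Integrable (fun u => K * (y u - x u)) μ := (hy.sub hx).const_mul K
  have hf_int : Integrable f μ := (hg_int.sub hlin).mono' hf <| by
    filter_upwards [hf0, hK] with u h0 hu
    rw [Real.norm_of_nonneg h0, Pi.sub_apply]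
    linarith
  have hmono : ∫ u, K * (y u - x u) ∂μ ≤ ∫ u, g u - f u ∂μ :=
    integral_mono_ae hlin (hg_int.sub hf_int) hK
  rw [integral_const_mul, integral_sub hy hx, hxy, sub_self, mul_zero,
    integral_sub hg_int hf_int, sub_nonneg] at hmono
  rw [← ofReal_integral_eq_lintegral_ofReal hf_int hf0,
    ← ofReal_integral_eq_lintegral_ofReal hg_int hg0]
  exact ENNReal.ofReal_le_ofReal hmono

end SingleCrossing

section WeightComparison

variable {α κ γ : ℝ}

lemma integrableOn_one_sub_rpow {c : ℝ} (hc : 0 < c) :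
    IntegrableOn (fun u : ℝ => 1 - u ^ c) (Ioo 0 1) :=
  ((continuous_const.sub (Real.continuous_rpow_const hc.le)).integrableOn_Icc
    (a := 0) (b := 1)).mono_set Ioo_subset_Icc_self

lemma setIntegral_one_sub_rpow_inv (hγ : 1 < γ) :
    ∫ u in Ioo (0 : ℝ) 1, (1 - u ^ (γ - 1)⁻¹) = γ⁻¹ := by
  have hc : 0 < (γ - 1)⁻¹ := inv_pos.2 (sub_pos.2 hγ)
  rw [← integral_Ioc_eq_integral_Ioo, ← intervalIntegral.integral_of_le zero_le_one,
    intervalIntegral.integral_sub intervalIntegrable_const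
      ((Real.continuous_rpow_const hc.le).intervalIntegrable 0 1),
    integral_rpow (Or.inl (by linarith)), Real.one_rpow, Real.zero_rpow (by linarith)]
  have hγ1 : γ - 1 ≠ 0 := (sub_pos.2 hγ).ne'
  have hγ0 : γ ≠ 0 := by linarith
  have hexp : (γ - 1)⁻¹ + 1 = γ / (γ - 1) := by
    field_simp
    ring
  simp only [intervalIntegral.integral_const, sub_zero, one_smul, hexp]
  field_simp
  ring

lemma exists_crossing_radial_weights (hα : 1 < α) (hκ : 1 < κ) :
    ∃ c ∈ Ico (0 : ℝ) 1, ∀ u ∈ Ioo (0 : ℝ) 1,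
      c ≤ (1 - u ^ (α - 1)⁻¹) / κ ∧ (1 - u ^ (α - 1)⁻¹) / κ ≤ 1 - u ^ (α * κ - 1)⁻¹ ∨
      1 - u ^ (α * κ - 1)⁻¹ ≤ (1 - u ^ (α - 1)⁻¹) / κ ∧ (1 - u ^ (α - 1)⁻¹) / κ ≤ c := by
  have hκ0 : 0 < κ := one_pos.trans hκ
  have hα1 : 0 < α - 1 := sub_pos.2 hα
  have hle : α - 1 ≤ α * κ - 1 := by nlinarith
  have hβ1 : 0 < α * κ - 1 := hα1.trans_le hle
  have hexp : 1 ≤ (α * κ - 1) / (α - 1) := (one_le_div hα1).2 hle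
  obtain ⟨v₀, hv₀, hcross⟩ := exists_crossing_one_sub_rpow hexp hκ
  have hv₀c : v₀ ^ ((α * κ - 1) / (α - 1)) ∈ Ioc (0 : ℝ) 1 :=
    ⟨Real.rpow_pos_of_pos hv₀.1 _, Real.rpow_le_one hv₀.1.le hv₀.2 (by positivity)⟩
  refine ⟨(1 - v₀ ^ ((α * κ - 1) / (α - 1))) / κ,
    ⟨div_nonneg (sub_nonneg.2 hv₀c.2) hκ0.le, ?_⟩, fun u hu => ?_⟩
  · rw [div_lt_one hκ0]
    linarith [hv₀c.1]
  have hv := rpow_mem_Ioo (inv_pos.2 hβ1) hu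
  have hpow : u ^ (α - 1)⁻¹ = (u ^ (α * κ - 1)⁻¹) ^ ((α * κ - 1) / (α - 1)) := by
    rw [← Real.rpow_mul hu.1.le]
    congr 1
    field_simp
  rw [hpow]
  refine (le_total (u ^ (α * κ - 1)⁻¹) v₀).imp (fun h => ⟨?_, (hcross _ hv).1 h⟩)
    fun h => ⟨(hcross _ hv).2 h, ?_⟩
  · have := hv.1.le
    gcongr
  · have := hv₀.1.le
    gcongr

-- Both weights have mean `1 / (α κ)` and cross once, at the level `c`, so a convex function has the
-- larger mean along the more spread out one: subtract its support line at `c`.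
lemma lintegral_comp_radial_weights_le {M : ℝ → ℝ} (hconvex : ConvexOn ℝ (Ico 0 1) M)
    (hmono : MonotoneOn M (Ico 0 1)) (hcont : ContinuousOn M (Ico 0 1)) (hM : ∀ s, 0 ≤ M s)
    (hα : 1 < α) (hκ : 1 < κ) :
    ∫⁻ u in Ioo (0 : ℝ) 1, ENNReal.ofReal (M ((1 - u ^ (α - 1)⁻¹) / κ)) ≤
      ∫⁻ u in Ioo (0 : ℝ) 1, ENNReal.ofReal (M (1 - u ^ (α * κ - 1)⁻¹)) := by
  have hκ0 : 0 < κ := one_pos.trans hκ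
  have hβ : 1 < α * κ := by nlinarith
  have ha : 0 < (α - 1)⁻¹ := inv_pos.2 (sub_pos.2 hα)
  have hb : 0 < (α * κ - 1)⁻¹ := inv_pos.2 (sub_pos.2 hβ)
  have hx_mem : ∀ u ∈ Ioo (0 : ℝ) 1, (1 - u ^ (α - 1)⁻¹) / κ ∈ Ioo (0 : ℝ) 1 := fun u hu =>
    have hmem := one_sub_mem_Ioo (rpow_mem_Ioo ha hu)
    ⟨div_pos hmem.1 hκ0, (div_lt_one hκ0).2 (hmem.2.trans hκ)⟩
  have hy_mem : ∀ u ∈ Ioo (0 : ℝ) 1, 1 - u ^ (α * κ - 1)⁻¹ ∈ Ioo (0 : ℝ) 1 := fun u hu =>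
    one_sub_mem_Ioo (rpow_mem_Ioo hb hu)
  have hmeas {x : ℝ → ℝ} (hx : Continuous x) (hx_mem : ∀ u ∈ Ioo (0 : ℝ) 1, x u ∈ Ioo (0 : ℝ) 1) :
      AEStronglyMeasurable (fun u => M (x u)) (volume.restrict (Ioo 0 1)) :=
    (hcont.comp hx.continuousOn fun u hu =>
      Ioo_subset_Ico_self (hx_mem u hu)).aestronglyMeasurable measurableSet_Ioo
  have hrpow {c : ℝ} (hc : 0 < c) : Continuous fun u : ℝ => 1 - u ^ c :=
    continuous_const.sub (Real.continuous_rpow_const hc.le)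
  obtain ⟨c, hc, hcross⟩ := exists_crossing_radial_weights hα hκ
  obtain ⟨K, hK⟩ := exists_mul_sub_le_of_convexOn_of_monotoneOn hconvex hmono hc
  refine lintegral_ofReal_le_of_mul_sub_le (K := K)
    (hmeas ((hrpow ha).div_const κ) hx_mem) (hmeas (hrpow hb) hy_mem)
    (.of_forall fun u => hM _) (.of_forall fun u => hM _)
    ((integrableOn_one_sub_rpow ha).div_const κ) (integrableOn_one_sub_rpow hb) ?_ ?_
  · rw [integral_div, setIntegral_one_sub_rpow_inv hα, setIntegral_one_sub_rpow_inv hβ, mul_inv,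
      div_eq_mul_inv]
  · filter_upwards [ae_restrict_mem measurableSet_Ioo] with u hu
    exact hK _ (hx_mem u hu) _ (hy_mem u hu) (hcross u hu)

theorem lintegral_dilation_norm_rpow_le_lintegral_mul {F : ℂ → ℂ} {q : ℝ}
    (hF : DifferentiableOn ℂ F (ball 0 1)) (hq : 2 ≤ q) (hα : 1 < α) (hκ : 1 < κ) :
    ∫⁻ z, ENNReal.ofReal (‖F (√κ⁻¹ * z)‖ ^ q) ∂bergmanMeasure α ≤
      ∫⁻ z, ENNReal.ofReal (‖F z‖ ^ q) ∂bergmanMeasure (α * κ) := by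
  have hq0 : 0 ≤ q := by linarith
  have hκ0 : 0 < κ := one_pos.trans hκ
  have hβ : 1 < α * κ := by nlinarith
  have hcont := continuousOn_norm_rpow hF.continuousOn hq0
  have hnonneg (z : ℂ) : 0 ≤ ‖F z‖ ^ q := by positivity
  rw [lintegral_bergmanMeasure_dilation hcont hnonneg hα (Real.sqrt_nonneg _)
      (Real.sqrt_le_one.2 (inv_le_one_of_one_le₀ hκ.le)),
    lintegral_bergmanMeasure_eq_lintegral_circleAverage hcont hnonneg hβ]
  simp only [← Real.sqrt_mul (inv_nonneg.2 hκ0.le), ← div_eq_inv_mul]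
  exact lintegral_comp_radial_weights_le (convexOn_circleAverage_norm_rpow_sqrt hF hq)
    (fun s hs t ht hst => monotoneOn_circleAverage_norm_rpow hF hq0 (sqrt_mem_Ico hs)
      (sqrt_mem_Ico ht) (Real.sqrt_le_sqrt hst))
    (continuousOn_circleAverage_sqrt hcont)
    (fun s => Real.circleAverage_nonneg_of_nonneg fun z _ => hnonneg z) hα hκ

end WeightComparison

section Hypercontractivity

lemma integral_le_of_lintegral_ofReal_le {X : Type*} [MeasurableSpace X] {μ : Measure X}
    {g : X → ℝ} {C : ℝ} (hg : ∀ x, 0 ≤ g x) (hC : 0 ≤ C)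
    (h : ∫⁻ x, ENNReal.ofReal (g x) ∂μ ≤ ENNReal.ofReal C) : ∫ x, g x ∂μ ≤ C := by
  have hnorm := norm_integral_le_lintegral_norm (μ := μ) g
  simp only [Real.norm_of_nonneg (hg _)] at hnorm
  exact (le_abs_self _).trans (hnorm.trans (ENNReal.toReal_le_of_le_ofReal hC h))

variable {f : ℂ → ℂ} {p q α : ℝ}

theorem lintegral_dilation_norm_rpow_le_rpow (hf : DifferentiableOn ℂ f (ball 0 1)) (hp : 0 < p)
    (hpq : p < q) (hq : 2 ≤ q) (hα : 1 < α) :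
    ∫⁻ z, ENNReal.ofReal (‖f (√(p / q) * z)‖ ^ q) ∂bergmanMeasure α ≤
      (∫⁻ z, ENNReal.ofReal (‖f z‖ ^ p) ∂bergmanMeasure α) ^ (q / p) := by
  have hκ : 1 < q / p := (one_lt_div hp).2 hpq
  have hdilation := lintegral_dilation_norm_rpow_le_lintegral_mul hf hq hα hκ
  have hembedding := lintegral_norm_rpow_mul_le hf hp hα hκ.le
  rw [inv_div] at hdilation
  rw [mul_div_cancel₀ q hp.ne'] at hembedding
  exact hdilation.trans hembedding

end Hypercontractivity

end

theorem hypercontractivity_q_ge_two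
    (p q α : ℝ) (hp : 0 < p) (hpq : p < q) (hq2 : 2 ≤ q) (hα : 1 < α)
    (f : ℂ → ℂ) (hf : DifferentiableOn ℂ f (ball (0 : ℂ) 1))
    (hfp : Integrable (fun z => ‖f z‖ ^ p) (bergmanMeasure α)) :
    (∫ z, ‖f ((Real.sqrt (p / q) : ℂ) * z)‖ ^ q ∂(bergmanMeasure α)) ^ (1 / q) ≤
      (∫ z, ‖f z‖ ^ p ∂(bergmanMeasure α)) ^ (1 / p) := by
  have hq : 0 < q := hp.trans hpq
  have hI : 0 ≤ ∫ z, ‖f z‖ ^ p ∂bergmanMeasure α := integral_nonneg fun z => by positivity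
  have hbound := lintegral_dilation_norm_rpow_le_rpow hf hp hpq hq2 hα
  rw [← ofReal_integral_eq_lintegral_ofReal hfp (.of_forall fun z => by positivity),
    ENNReal.ofReal_rpow_of_nonneg hI (div_pos hq hp).le] at hbound
  have hmain : ∫ z, ‖f (Real.sqrt (p / q) * z)‖ ^ q ∂bergmanMeasure α ≤
      (∫ z, ‖f z‖ ^ p ∂bergmanMeasure α) ^ (q / p) :=
    integral_le_of_lintegral_ofReal_le (fun z => by positivity) (by positivity) hbound
  calc _ ≤ ((∫ z, ‖f z‖ ^ p ∂bergmanMeasure α) ^ (q / p)) ^ (1 / q) :=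
        Real.rpow_le_rpow (integral_nonneg fun z => by positivity) hmain (one_div_pos.2 hq).le
    _ = _ := by
        rw [← Real.rpow_mul hI]
        congr 1
        field_simp
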